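/- There exist absolute constants ε > 0 and K ≥ 1 with εK ≤ 10^{−10} such that for every δ > 0 there is N ∈ ℕ with the following property. Let G be a finite abelian group (written additively) of order n ≥ N, let k be an integer with 3 ≤ k ≤ (log n)^{10}, let p be a real with n^{−ε} ≤ p ≤ 1, and let m be a positive multiple of k with m ≤ (p/(k·log n))^K · n. Let R₁, R₂ be independent p-random subsets of G. Then with probability at least 1 − δ the following holds: for every U ⊆ G with |U| ≤ n^{4/5}, there exist subsets V ⊆ R₁ ∖ U and C ⊆ R₂ ∖ U such that for all V' ⊆ G ∖ V and C' ⊆ G ∖ C with |V'| = |C'| = m, ∑_{c∈C'} c = 0 and 0 ∉ C', there exists a permutation σ of V ∪ V' all of whose cycles have length exactly k such that v ↦ v − σ(v) is a bijection from V ∪ V' onto C ∪ C'. -/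

import Mathlib

open scoped Classical

/-- The probability that a `p`-random subset of the finite type `G` (each element included
independently with probability `p`) equals the finset `A`. -/
noncomputable def setProb (G : Type) [Fintype G] [DecidableEq G] (p : ℝ) (A : Finset G) : ℝ :=
  p ^ A.card * (1 - p) ^ (Fintype.card G - A.card)

/-- A rainbow directed `C_k`-factor of `K_G` on vertex set `V` with colour set `C`:
a permutation `σ` of `V` all of whose cycles have length exactly `k` such that
`v ↦ v - σ v` is a bijection from `V` onto `C`. -/
def IsRainbowCycleFactor {G : Type} [AddCommGroup G] [Fintype G] [DecidableEq G]
    (k : ℕ) (V C : Finset G) : Prop :=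
  ∃ σ : Equiv.Perm G, σ.support = V ∧ (∀ c ∈ σ.cycleType, c = k) ∧
    Set.BijOn (fun v : G => v - σ v) ↑V ↑C

/-!
Put vertices and colours together in `G ⊕ G`. A multiset without repetitions which is a sum of
closed walks of length `k` is a rainbow `C_k`-factor, and sums of closed walks form a submonoid, so
factors can be assembled by adding gadgets.

A random set is *rich*: it contains an evaluation of every short list of affine expressions `s + x`,
`s - x`, even after the deletion of rather many elements. Indeed, there are linearly many pairwise
disjoint evaluations, and by an exponential moment bound and a union bound many of them survive.
Hence gadgets can be chosen greedily inside the random set. The expressions must rarely coincide: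
`s + x = t - x` has few solutions `x` unless `G` has few doubles and `t - s` is one of them.

The elementary gadgets contain, for any choice of one of two or three given objects, a sum of
closed walks using up the gadget and the chosen object. The objects are vertices or *bundles*
`{g, a - g}` of colours, for a fixed `a`. Arranged in logarithmically many levels, reading the
binary digits of the distances to be covered, they yield concentrators: given a set of objects and
a number `M`, a concentrator can be completed by what is left of the set when any `M` of its objects
have been removed.

Let `F` be a sparse random subset of the random set, used as a reserve. Given `V'` and `C'`, put
each `v ∈ V'` with a colour `t ∈ C'` on a cycle whose other vertices and bundles come from `F`;
of each bundle used, one colour `y` lies on the cycle and its partner `a - y` is left over. The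
colours of a cycle sum to zero, and so do those of `C'`, which determines the sum of the leftover
partners. A ladder of walks absorbs any partners with this sum, again at the expense of vertices
and bundles from `F`. Finally the concentrators absorb the remainder of `F`.
-/

namespace ZeroSumAbsorption

open scoped Finset

section Walks

variable {G : Type*} [AddCommGroup G]

/-- A group element as a vertex. Vertices and colours live in the disjoint union `G ⊕ G`. -/
abbrev vx : G → G ⊕ G := Sum.inl

/-- A group element as a colour. -/
abbrev cl : G → G ⊕ G := Sum.inr

/-- `IsWalk n a b W`: the vertices and colours along some walk with `n` edges from `a` to `b` form
the multiset `W`, where the final vertex `b` is left out of `W`. -/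
inductive IsWalk : ℕ → G → G → Multiset (G ⊕ G) → Prop
  | nil (a : G) : IsWalk 0 a a 0
  | cons {n : ℕ} {b c : G} {W : Multiset (G ⊕ G)} (a : G) :
      IsWalk n b c W → IsWalk (n + 1) a c (vx a ::ₘ cl (a - b) ::ₘ W)

theorem IsWalk.append {m n : ℕ} {a b c : G} {V W : Multiset (G ⊕ G)} (hV : IsWalk m a b V)
    (hW : IsWalk n b c W) : IsWalk (m + n) a c (V + W) := by
  induction hV with
  | nil a => simpa using hW
  | cons a _ ih => simpa [Nat.add_right_comm] using (ih hW).cons a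

theorem IsWalk.snoc {n : ℕ} {a b : G} {W : Multiset (G ⊕ G)} (hW : IsWalk n a b W) (c : G) :
    IsWalk (n + 1) a c (W + {vx b} + {cl (b - c)}) := by
  rw [add_assoc]
  exact hW.append ((IsWalk.nil c).cons b)

theorem IsWalk.exists_list {n : ℕ} {a b : G} {W : Multiset (G ⊕ G)} (hW : IsWalk n a b W) :
    ∃ L : List G, L.length = n ∧ (L ++ [b]).head? = some a ∧
      W = (L.map vx : Multiset (G ⊕ G)) +
        (L.zipWith (fun x y => cl (x - y)) (L ++ [b]).tail : List (G ⊕ G)) := by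
  induction hW with
  | nil a => exact ⟨[], by simp⟩
  | @cons n b c W a _ ih =>
    obtain ⟨L, rfl, hb, rfl⟩ := ih
    obtain ⟨t, ht⟩ := List.head?_eq_some_iff.1 hb
    refine ⟨a :: L, rfl, rfl, ?_⟩
    rw [List.cons_append, List.tail_cons, ht, List.zipWith_cons_cons, List.map_cons, List.tail_cons,
      ← Multiset.cons_coe, ← Multiset.cons_coe]
    rw [Multiset.cons_add, Multiset.add_cons, Multiset.cons_swap]

theorem IsWalk.exists_closed_list {n : ℕ} {a : G} {W : Multiset (G ⊕ G)} (hn : n ≠ 0)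
    (hW : IsWalk n a a W) :
    ∃ L : List G, L.length = n ∧ W = (L.map vx : Multiset (G ⊕ G)) +
      (L.zipWith (fun x y => cl (x - y)) (L.rotate 1) : List (G ⊕ G)) := by
  obtain ⟨L, hL, ha, rfl⟩ := hW.exists_list
  obtain ⟨x, t, rfl⟩ := List.exists_cons_of_ne_nil
    (List.ne_nil_of_length_pos (hL ▸ Nat.pos_of_ne_zero hn))
  obtain rfl : x = a := by simpa using ha
  exact ⟨_, hL, by simp⟩

theorem zipWith_rotate_eq_map_formPerm {α β : Type*} [DecidableEq α] {L : List α} (hL : L.Nodup)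
    (f : α → α → β) : L.zipWith f (L.rotate 1) = L.map fun x => f x (L.formPerm x) := by
  refine List.ext_getElem (by simp) fun i h₁ h₂ => ?_
  simp [List.formPerm_apply_getElem _ hL, List.getElem_rotate]

/-- Multisets of vertices and colours which decompose into closed walks of length `k`. -/
def closedWalks (G : Type*) [AddCommGroup G] (k : ℕ) : AddSubmonoid (Multiset (G ⊕ G)) :=
  AddSubmonoid.closure {W | ∃ a, IsWalk k a a W}

theorem IsWalk.mem_closedWalks {k : ℕ} {a : G} {W : Multiset (G ⊕ G)} (hW : IsWalk k a a W) :
    W ∈ closedWalks G k :=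
  AddSubmonoid.subset_closure ⟨a, hW⟩

theorem IsWalk.close {k : ℕ} (hk : 3 ≤ k) {p q : G} {W : Multiset (G ⊕ G)}
    (hW : IsWalk (k - 3) q p W) {y₁ y₂ c₁ c₂ c₃ : G} (h₁ : c₁ = p - y₁) (h₂ : c₂ = y₁ - y₂)
    (h₃ : c₃ = y₂ - q) :
    W + {vx p} + {vx y₁} + {vx y₂} + {cl c₁} + {cl c₂} + {cl c₃} ∈ closedWalks G k := by
  have h := ((hW.snoc y₁).snoc y₂).snoc q
  rw [← h₁, ← h₂, ← h₃, show k - 3 + 1 + 1 + 1 = k by lia] at h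
  convert h.mem_closedWalks using 1
  abel

/-- The sum of the colours in a multiset of vertices and colours. -/
def colSum : Multiset (G ⊕ G) →+ G :=
  Multiset.sumAddMonoidHom.comp (Multiset.mapAddMonoidHom (Sum.elim 0 id))

@[simp] theorem colSum_cons_vx (g : G) (W : Multiset (G ⊕ G)) :
    colSum (vx g ::ₘ W) = colSum W := by simp [colSum]

@[simp] theorem colSum_cons_cl (g : G) (W : Multiset (G ⊕ G)) :
    colSum (cl g ::ₘ W) = g + colSum W := by simp [colSum]

@[simp] theorem colSum_map_vx (s : Multiset G) : colSum (s.map vx) = 0 := by simp [colSum]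

@[simp] theorem colSum_map_cl (s : Multiset G) : colSum (s.map cl) = s.sum := by simp [colSum]

theorem IsWalk.colSum_eq {n : ℕ} {a b : G} {W : Multiset (G ⊕ G)} (hW : IsWalk n a b W) :
    colSum W = a - b := by
  induction hW with
  | nil a => simp
  | cons a _ ih => simp [ih]

theorem colSum_eq_zero {k : ℕ} {W : Multiset (G ⊕ G)} (hW : W ∈ closedWalks G k) :
    colSum W = 0 := by
  have h : closedWalks G k ≤ AddMonoidHom.mker colSum :=
    (AddSubmonoid.closure_le).2 fun W ⟨a, hW⟩ => by simp [hW.colSum_eq]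
  exact h hW

end Walks

section CycleFactors

variable {G : Type*} [AddCommGroup G] [Fintype G] [DecidableEq G]

/-- The permutation `σ` realises the multiset `W` as a rainbow cycle factor with vertices and
colours exactly those of `W`. -/
structure Realises (k : ℕ) (σ : Equiv.Perm G) (W : Multiset (G ⊕ G)) : Prop where
  mem_support : ∀ v, v ∈ σ.support ↔ vx v ∈ W
  cycleType : ∀ c ∈ σ.cycleType, c = k
  bijOn : Set.BijOn (fun v => v - σ v) {v | vx v ∈ W} {c | cl c ∈ W}

theorem IsWalk.exists_realises {k : ℕ} (hk : 2 ≤ k) {a : G} {W : Multiset (G ⊕ G)}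
    (hW : IsWalk k a a W) (hn : W.Nodup) : ∃ σ, Realises k σ W := by
  obtain ⟨L, rfl, rfl⟩ := hW.exists_closed_list (by lia)
  have hL : L.Nodup := (Multiset.coe_nodup.1 (Multiset.nodup_add.1 hn).1).of_map _
  have hL₁ : ∀ x, L ≠ [x] := fun x h => by simp [h] at hk
  rw [zipWith_rotate_eq_map_formPerm hL] at hn ⊢
  have hc := Multiset.coe_nodup.1 (Multiset.nodup_add.1 hn).2.1
  have hs := List.support_formPerm_of_nodup L hL hL₁
  refine ⟨L.formPerm, fun v => by simp [hs], fun c hc => ?_, fun v hv => ?_, ?_, fun c hc => ?_⟩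
  · simpa [(List.isCycle_formPerm hL hk).cycleType, hs, List.toFinset_card_of_nodup hL] using hc
  · have hvL : v ∈ L := by simpa using hv
    have h : cl (v - L.formPerm v) ∈ L.map fun x => cl (x - L.formPerm x) :=
      List.mem_map.2 ⟨v, hvL, rfl⟩
    simpa only [Set.mem_ofPred_eq, Multiset.mem_add, Multiset.mem_coe] using Or.inr h
  · exact fun v hv w hw h =>
      List.inj_on_of_nodup_map hc (by simpa using hv) (by simpa using hw) (congrArg cl h)
  · simpa using hc

theorem Realises.add {k : ℕ} {σ τ : Equiv.Perm G} {V W : Multiset (G ⊕ G)} (hσ : Realises k σ V)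
    (hτ : Realises k τ W) (hd : Disjoint V W) : Realises k (σ * τ) (V + W) := by
  rw [Multiset.disjoint_left] at hd
  have hστ : σ.Disjoint τ := Equiv.Perm.disjoint_iff_disjoint_support.2 <|
    Finset.disjoint_left.2 fun v hv hv' => hd ((hσ.mem_support v).1 hv) ((hτ.mem_support v).1 hv')
  have eqσ : ∀ v, vx v ∈ V → (σ * τ) v = σ v := fun v hv => by
    rw [Equiv.Perm.mul_apply, Equiv.Perm.notMem_support.1 (mt (hτ.mem_support v).1 (hd hv))]
  have eqτ : ∀ v, vx v ∈ W → (σ * τ) v = τ v := fun v hv => by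
    rw [hστ.commute.eq, Equiv.Perm.mul_apply,
      Equiv.Perm.notMem_support.1 (mt (hσ.mem_support v).1 fun h => hd h hv)]
  have bijσ : Set.BijOn (fun v => v - (σ * τ) v) {v | vx v ∈ V} {c | cl c ∈ V} :=
    hσ.bijOn.congr fun v hv => by simp only [eqσ v hv]
  have bijτ : Set.BijOn (fun v => v - (σ * τ) v) {v | vx v ∈ W} {c | cl c ∈ W} :=
    hτ.bijOn.congr fun v hv => by simp only [eqτ v hv]
  refine ⟨fun v => ?_, fun c hc => ?_, ?_⟩
  · rw [hστ.support_mul, Finset.mem_union, hσ.mem_support, hτ.mem_support, Multiset.mem_add]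
  · rw [hστ.cycleType_mul, Multiset.mem_add] at hc
    exact hc.elim (hσ.cycleType c) (hτ.cycleType c)
  · simp only [Multiset.mem_add, Set.ofPred_or]
    refine bijσ.union bijτ ((Set.injOn_union (Set.disjoint_left.2 fun v => hd)).2
      ⟨bijσ.injOn, bijτ.injOn, fun v hv w hw h => ?_⟩)
    exact hd (bijσ.mapsTo hv) (h ▸ bijτ.mapsTo hw :)

theorem exists_realises {k : ℕ} (hk : 2 ≤ k) {W : Multiset (G ⊕ G)} (hW : W ∈ closedWalks G k)
    (hn : W.Nodup) : ∃ σ, Realises k σ W := by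
  induction hW using AddSubmonoid.closure_induction with
  | mem W hW => exact hW.elim fun a ha => ha.exists_realises hk hn
  | zero => exact ⟨1, by simp, by simp, by simp⟩
  | add V W _ _ hV hW =>
    obtain ⟨hV', hW', hd⟩ := Multiset.nodup_add.1 hn
    obtain ⟨σ, hσ⟩ := hV hV'
    obtain ⟨τ, hτ⟩ := hW hW'
    exact ⟨σ * τ, hσ.add hτ hd⟩

end CycleFactors

section Doubles

variable {G : Type*} [AddCommGroup G]

/-- The finite group `G` has at most `400` doubles `y + y`. -/
def FewDoubles (G : Type*) [AddCommGroup G] : Prop :=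
  (Set.range fun y : G => y + y).ncard ≤ 400

/-- `g` is one of few doubles. If `t - s` is not, then `s + x = t - x` for only few `x`. -/
def Dbl (g : G) : Prop := FewDoubles G ∧ ∃ y, g = y + y

/-- `g` is nonzero and not one of few doubles. -/
def Good (g : G) : Prop := g ≠ 0 ∧ ¬ Dbl g

theorem Dbl.shift {g h : G} (hg : Dbl g) (y : G) (e : h = g + (y + y)) : Dbl h := by
  obtain ⟨hs, z, rfl⟩ := hg
  exact ⟨hs, z + y, by rw [e]; abel⟩

theorem Dbl.neg_shift {g h : G} (hg : Dbl g) (y : G) (e : h = -g + (y + y)) : Dbl h := by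
  obtain ⟨hs, z, rfl⟩ := hg
  exact ⟨hs, -z + y, by rw [e]; abel⟩

theorem Good.neg {g : G} (hg : Good g) : Good (-g) :=
  ⟨neg_ne_zero.2 hg.1, fun h => hg.2 (h.neg_shift 0 (by simp))⟩

/-- `x` differs from all elements of `E`, and does not differ by one of few doubles from any
element of `D`. -/
def Avoid (E D : List G) (x : G) : Prop := (∀ z ∈ E, x ≠ z) ∧ ∀ z ∈ D, ¬ Dbl (x - z)

@[simp] theorem avoid_nil (x : G) : Avoid [] [] x := ⟨by simp, by simp⟩

@[simp] theorem avoid_cons_left {z x : G} {E D : List G} :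
    Avoid (z :: E) D x ↔ x ≠ z ∧ Avoid E D x := by
  simp [Avoid, and_assoc]

@[simp] theorem avoid_nil_cons {z x : G} {D : List G} :
    Avoid [] (z :: D) x ↔ ¬ Dbl (x - z) ∧ Avoid [] D x := by
  simp [Avoid]

theorem Avoid.good {E : List G} {x : G} (h : Avoid E E x) : ∀ z ∈ E, Good (x - z) :=
  fun z hz => ⟨sub_ne_zero.2 (h.1 z hz), h.2 z hz⟩

variable [Fintype G]

theorem card_filter_dbl_sub_le (z : G) : #{x : G | Dbl (x - z)} ≤ 400 := by
  by_cases hs : FewDoubles G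
  · rw [← Set.ncard_coe_finset]
    refine (Set.ncard_le_ncard_of_injOn (· - z) ?_ (sub_left_injective.injOn)).trans hs
    intro x hx
    obtain ⟨-, y, hy⟩ := (Finset.mem_filter.1 hx).2
    exact ⟨y, hy.symm⟩
  · simp [Dbl, hs]

theorem card_filter_not_avoid_le (E D : List G) :
    #{x : G | ¬ Avoid E D x} ≤ 400 * (E.length + D.length) := by
  have hsub : Finset.univ.filter (fun x : G => ¬ Avoid E D x) ⊆
      E.toFinset ∪ D.toFinset.biUnion fun z => {x | Dbl (x - z)} := by
    intro x hx
    have hx : ¬ Avoid E D x := (Finset.mem_filter.1 hx).2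
    by_contra h
    simp only [Finset.mem_union, List.mem_toFinset, Finset.mem_biUnion, Finset.mem_filter_univ,
      not_or, not_exists, not_and] at h
    exact hx ⟨fun z hz hxz => h.1 (hxz ▸ hz), h.2⟩
  have hD := Finset.card_biUnion_le_card_mul D.toFinset (fun z => {x : G | Dbl (x - z)}) 400
    fun z _ => card_filter_dbl_sub_le z
  have hE := E.toFinset_card_le
  have hD' := D.toFinset_card_le
  linarith [Finset.card_le_card hsub, Finset.card_union_le E.toFinset
    (D.toFinset.biUnion fun z => {x : G | Dbl (x - z)})]

variable [DecidableEq G]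

theorem card_filter_add_self_eq_mul_le (z : G) :
    #{x : G | x + x = z + z} * (Set.range fun y : G => y + y).ncard ≤ Fintype.card G := by
  have hn : ∀ b ∈ Finset.univ.image fun y : G => y + y,
      #{x : G | x + x = z + z} ≤ #{x : G | x + x = b} := by
    intro b hb
    obtain ⟨y, -, rfl⟩ := Finset.mem_image.1 hb
    refine Finset.card_le_card_of_injOn (· - z + y) (fun x hx => ?_)
      ((add_left_injective y).comp (sub_left_injective)).injOn
    have hx : x + x = z + z := by simpa using hx
    have h : x - z + y + (x - z + y) = x + x - (z + z) + (y + y) := by abel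
    simp [h, hx]
  rw [← Set.image_univ, ← Finset.coe_univ, ← Finset.coe_image, Set.ncard_coe_finset]
  exact Finset.mul_card_image_le_card _ _ hn

theorem card_filter_add_self_eq_le {d : G} (hd : ¬ Dbl d) :
    #{x : G | x + x = d} ≤ Fintype.card G / 400 := by
  by_cases h : ∃ z, d = z + z
  · obtain ⟨z, rfl⟩ := h
    have hs : 400 ≤ (Set.range fun y : G => y + y).ncard := by
      by_contra hs
      exact hd ⟨(not_le.1 hs).le, z, rfl⟩
    rw [Nat.le_div_iff_mul_le (by norm_num)]
    exact (Nat.mul_le_mul_left _ hs).trans (card_filter_add_self_eq_mul_le z)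
  · simp [Finset.filter_false_of_mem fun x _ (hx : x + x = d) => h ⟨x, hx.symm⟩]

theorem card_filter_add_self_eq_le_half {d y : G} (h : d ≠ 0 ∨ y + y ≠ 0) :
    #{x : G | x + x = d} ≤ Fintype.card G / 2 := by
  by_cases hd : ∃ z, d = z + z
  · obtain ⟨z, rfl⟩ := hd
    have hs : 2 ≤ (Set.range fun y : G => y + y).ncard := by
      rw [Nat.succ_le_iff, Set.one_lt_ncard_iff]
      exact h.elim (fun h => ⟨0, z + z, ⟨0, by simp⟩, ⟨z, rfl⟩, h.symm⟩)
        fun h => ⟨0, y + y, ⟨0, by simp⟩, ⟨y, rfl⟩, h.symm⟩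
    rw [Nat.le_div_iff_mul_le (by norm_num)]
    exact (Nat.mul_le_mul_left _ hs).trans (card_filter_add_self_eq_mul_le z)
  · simp [Finset.filter_false_of_mem fun x _ (hx : x + x = d) => hd ⟨x, hx.symm⟩]

end Doubles

section Forms

variable {G : Type*} [AddCommGroup G]

/-- Vertices `vx (s + x)`, `vx (s - x)` and colours `cl (s + x)`, `cl (s - x)` depending affinely on
a group element `x`. -/
inductive Form (G : Type*)
  | vp (s : G)
  | vm (s : G)
  | cp (s : G)
  | cm (s : G)

namespace Form

/-- The value of a form at `x`. -/
def eval (x : G) : Form G → G ⊕ G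
  | vp s => vx (s + x)
  | vm s => vx (s - x)
  | cp s => cl (s + x)
  | cm s => cl (s - x)

/-- A condition ensuring that two forms seldom agree. -/
def Compat : Form G → Form G → Prop
  | vp s, vp t | vm s, vm t | cp s, cp t | cm s, cm t => s ≠ t
  | vp s, vm t | vm s, vp t | cp s, cm t | cm s, cp t => ¬ Dbl (s - t)
  | _, _ => True

/-- The multiset of values at `x` of a list of forms. -/
def evals (l : List (Form G)) (x : G) : Multiset (G ⊕ G) := (l.map (eval x) : List (G ⊕ G))

@[simp] theorem evals_nil (x : G) : evals [] x = 0 := rfl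

@[simp] theorem evals_cons (f : Form G) (l : List (Form G)) (x : G) :
    evals (f :: l) x = {f.eval x} + evals l x := rfl

@[simp] theorem card_evals (l : List (Form G)) (x : G) : (evals l x).card = l.length := by
  simp [evals]

theorem eval_injective (f : Form G) : Function.Injective fun x => f.eval x := by
  intro x y h
  cases f <;> simpa [eval] using h

theorem card_filter_not_nodup_evals_le [DecidableEq G] {l : List (Form G)} {s : Finset G} {b : ℕ}
    (h : l.Pairwise fun f g => #{x ∈ s | f.eval x = g.eval x} ≤ b) :
    #{x ∈ s | ¬ (evals l x).Nodup} ≤ l.length ^ 2 * b := by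
  induction l with
  | nil => simp
  | cons f l ih =>
    obtain ⟨hf, hl⟩ := List.pairwise_cons.1 h
    have hsub : {x ∈ s | ¬ (evals (f :: l) x).Nodup} ⊆
        (Finset.univ.biUnion fun i : Fin l.length => {x ∈ s | f.eval x = l[i].eval x}) ∪
          {x ∈ s | ¬ (evals l x).Nodup} := by
      intro x hx
      simp only [Finset.mem_filter, evals_cons, Multiset.singleton_add, Multiset.nodup_cons,
        not_and_or, not_not] at hx
      refine Finset.mem_union.2 (hx.2.imp (fun hfx => ?_) fun hlx => by simp [hx.1, hlx])
      obtain ⟨g, hg, hgx⟩ := List.mem_map.1 hfx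
      obtain ⟨i, hi, rfl⟩ := List.getElem_of_mem hg
      exact Finset.mem_biUnion.2 ⟨⟨i, hi⟩, Finset.mem_univ _, by simpa [hx.1] using hgx.symm⟩
    have hU := Finset.card_biUnion_le_card_mul (Finset.univ : Finset (Fin l.length))
      (fun i => {x ∈ s | f.eval x = l[i].eval x}) b fun i _ => hf _ (List.getElem_mem i.2)
    rw [Finset.card_univ, Fintype.card_fin] at hU
    calc _ ≤ _ := Finset.card_le_card hsub
      _ ≤ l.length * b + l.length ^ 2 * b :=
        (Finset.card_union_le _ _).trans (add_le_add hU (ih hl))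
      _ ≤ _ := by rw [← add_mul, List.length_cons]; gcongr; nlinarith

variable [Fintype G] [DecidableEq G]

theorem Compat.card_eval_eq_le {f g : Form G} (h : f.Compat g) :
    #{x : G | f.eval x = g.eval x} ≤ Fintype.card G / 400 := by
  have cross : ∀ {s t : G}, ¬ Dbl (s - t) → #{x : G | s - x = t + x} ≤ Fintype.card G / 400 := by
    intro s t h
    have e (x : G) : s - x = t + x ↔ x + x = s - t := by grind
    simpa only [e] using card_filter_add_self_eq_le h
  have cross' : ∀ {s t : G}, ¬ Dbl (s - t) → #{x : G | s + x = t - x} ≤ Fintype.card G / 400 := by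
    intro s t h
    simpa only [eq_comm] using cross (s := t) (t := s) fun h' => h (h'.neg_shift 0 (by simp))
  cases f <;> cases g <;> simp only [Compat, ne_eq] at h <;>
    simp only [eval, Sum.inl.injEq, Sum.inr.injEq, reduceCtorEq, add_left_inj, sub_left_inj,
      Finset.filter_false, h, Finset.card_empty, zero_le, cross, cross', not_false_eq_true]

theorem card_not_nodup_evals_le {l : List (Form G)} (h : l.Pairwise Compat) :
    #{x : G | ¬ (evals l x).Nodup} ≤ l.length ^ 2 * (Fintype.card G / 400) :=
  card_filter_not_nodup_evals_le (h.imp fun h => h.card_eval_eq_le)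

end Form

variable [Fintype G] [DecidableEq G]

/-- Lists of at most `14` forms which are often nondegenerate have a nondegenerate evaluation inside
`R`, even if fewer than `c` elements of `R` are forbidden; moreover all colours in `R` are good. -/
structure Rich (R : Multiset (G ⊕ G)) (c : ℕ) : Prop where
  nodup : R.Nodup
  good : ∀ g, cl g ∈ R → Good g
  exists_evals_le_sub : ∀ l : List (Form G), l.length ≤ 14 →
    Fintype.card G ≤ 4 * #{x : G | (Form.evals l x).Nodup} →
    ∀ X : Multiset (G ⊕ G), X.card < c → ∃ x, Form.evals l x ≤ R - X

variable {R S : Multiset (G ⊕ G)} {c : ℕ}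

theorem Rich.exists_add_evals_le_of_card (hR : Rich R c) (hS : S ≤ R) {P : G → Prop} (f : Form G)
    (l : List (Form G)) (hl : l.length ≤ 13) (hP : S.card + #{x | ¬ P x} < c)
    (hn : Fintype.card G ≤ 4 * #{x : G | (Form.evals (f :: l) x).Nodup}) :
    ∃ x, S + Form.evals (f :: l) x ≤ R ∧ P x := by
  obtain ⟨x, hx⟩ := hR.exists_evals_le_sub (f :: l) (by rw [List.length_cons]; lia) hn
    (S + (Finset.univ.filter fun x => ¬ P x).val.map fun x => f.eval x)
    (by rwa [Multiset.card_add, Multiset.card_map])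
  rw [← tsub_tsub] at hx
  refine ⟨x, add_le_of_le_tsub_left_of_le hS (hx.trans tsub_le_self), ?_⟩
  by_contra hPx
  have hf : f.eval x ∈ R - S - _ := Multiset.mem_of_le hx (by simp)
  rw [Multiset.mem_sub_of_nodup (Multiset.nodup_of_le tsub_le_self hR.nodup)] at hf
  exact hf.2 (Multiset.mem_map_of_mem _ (by simpa using hPx))

theorem Rich.exists_add_evals_le (hR : Rich R c) (hS : S ≤ R) (f : Form G) (l : List (Form G))
    (hl : l.length ≤ 13) (hn : (f :: l).Pairwise Form.Compat) (E D : List G)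
    (hc : S.card + 400 * (E.length + D.length) < c) :
    ∃ x, S + Form.evals (f :: l) x ≤ R ∧ Avoid E D x := by
  refine hR.exists_add_evals_le_of_card hS f l hl
    ((Nat.add_le_add_left (card_filter_not_avoid_le E D) _).trans_lt hc) ?_
  have hbad := Form.card_not_nodup_evals_le hn
  have hsum := Finset.card_filter_add_card_filter_not (s := (Finset.univ : Finset G))
    fun x => (Form.evals (f :: l) x).Nodup
  have hlen : (f :: l).length ^ 2 * (Fintype.card G / 400) ≤ 14 ^ 2 * (Fintype.card G / 400) := by
    gcongr
    rw [List.length_cons]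
    lia
  rw [Finset.card_univ] at hsum
  lia

theorem Rich.exists_add_vx_le (hR : Rich R c) (hS : S ≤ R) (E D : List G)
    (hc : S.card + 400 * (E.length + D.length) < c) : ∃ x, S + {vx x} ≤ R ∧ Avoid E D x := by
  simpa [Form.eval] using hR.exists_add_evals_le hS (.vp 0) [] (by simp) (by simp) E D hc

theorem Rich.exists_add_cl_le (hR : Rich R c) (hS : S ≤ R) (E D : List G)
    (hc : S.card + 400 * (E.length + D.length) < c) : ∃ x, S + {cl x} ≤ R ∧ Avoid E D x := by
  simpa [Form.eval] using hR.exists_add_evals_le hS (.cp 0) [] (by simp) (by simp) E D hc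

theorem Rich.exists_not_dbl (hR : Rich R c) (hc : 0 < c) : ∃ a : G, ¬ Dbl a := by
  obtain ⟨x, hx, -⟩ := hR.exists_add_cl_le (Multiset.zero_le R) [] [] (by simpa using hc)
  exact ⟨x, (hR.good x (Multiset.mem_of_le hx (by simp))).2⟩

end Forms

section Greedy

theorem exists_add_sum_le {ι β : Type*} {R X : Multiset β} {b N : ℕ} {s : Finset ι}
    {P : ι → Multiset β → Prop} (hX : X ≤ R) (hN : X.card + #s * b ≤ N)
    (h : ∀ i ∈ s, ∀ Y ≤ R, Y.card ≤ N → ∃ S, Y + S ≤ R ∧ S.card ≤ b ∧ P i S) :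
    ∃ S : ι → Multiset β, X + ∑ i ∈ s, S i ≤ R ∧ (∑ i ∈ s, S i).card ≤ #s * b ∧
      ∀ i ∈ s, P i (S i) := by
  classical
  induction s using Finset.cons_induction with
  | empty => exact ⟨fun _ => 0, by simpa using hX⟩
  | cons i s hi ih =>
    rw [Finset.card_cons, add_mul, one_mul] at hN
    obtain ⟨S, hS, hcard, hP⟩ := ih (by lia) fun j hj => h j (Finset.mem_cons_of_mem hj)
    obtain ⟨T, hT, hTb, hPT⟩ := h i (Finset.mem_cons_self i s) _ hS
      (by rw [Multiset.card_add]; lia)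
    have hsum : ∑ j ∈ s, Function.update S i T j = ∑ j ∈ s, S j :=
      Finset.sum_congr rfl fun j hj => Function.update_of_ne (ne_of_mem_of_not_mem hj hi) _ _
    refine ⟨Function.update S i T, ?_, ?_, fun j hj => ?_⟩
    · rwa [Finset.sum_cons, hsum, Function.update_self, add_comm T, ← add_assoc]
    · rw [Finset.sum_cons, hsum, Function.update_self, Multiset.card_add, Finset.card_cons]
      lia
    · by_cases hji : j = i
      · rw [hji, Function.update_self]
        exact hPT
      · rw [Function.update_of_ne hji]
        exact hP j ((Finset.mem_cons.1 hj).resolve_left hji)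

end Greedy

section Gadgets

theorem ne_of_nodup_add {α β : Type*} {f : α → β} {X Y : Multiset β} (h : (X + Y).Nodup) {x y : α}
    (hx : f x ∈ X) (hy : f y ∈ Y) : x ≠ y := by
  rintro rfl
  exact Multiset.disjoint_left.1 (Multiset.nodup_add.1 h).2.2 hx hy

theorem chain_mem {A : Type*} [AddCommMonoid A] {C : AddSubmonoid A}
    {s t₁ t₂ t₃ u₁ u₂ u₃ v₁ v₂ : A} (h₁ : s + t₁ + u₁ ∈ C) (h₂ : s + t₂ + u₂ ∈ C)
    (h₃ : s + t₃ + u₃ ∈ C) (h₁₁ : v₁ + u₁ ∈ C) (h₁₂ : v₁ + u₂ ∈ C) (h₂₂ : v₂ + u₂ ∈ C)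
    (h₂₃ : v₂ + u₃ ∈ C) :
    s + (u₁ + u₂ + u₃) + v₁ + v₂ + t₁ ∈ C ∧ s + (u₁ + u₂ + u₃) + v₁ + v₂ + t₂ ∈ C ∧
      s + (u₁ + u₂ + u₃) + v₁ + v₂ + t₃ ∈ C := by
  refine ⟨?_, ?_, ?_⟩
  · convert add_mem h₁ (add_mem h₁₂ h₂₃) using 1
    abel
  · convert add_mem h₂ (add_mem h₁₁ h₂₃) using 1
    abel
  · convert add_mem h₃ (add_mem h₁₁ h₂₂) using 1
    abel

variable {G : Type*} [AddCommGroup G] [Fintype G] [DecidableEq G] {R S : Multiset (G ⊕ G)} {c k : ℕ}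

theorem Rich.exists_walk_mates (hR : Rich R c) (hS : S ≤ R) {a : G} (ha : ¬ Dbl a) {p : G}
    {P : G → Prop} (hp : P p) (n : ℕ) (hc : S.card + 3 * n + #{x | ¬ P x} < c) :
    ∃ (q : G) (V C : Multiset G), V.card = n ∧ C.card = n ∧
      S + (V.map vx + C.map cl + C.map fun y => cl (a - y)) ≤ R ∧
      IsWalk n q p (V.map vx + C.map cl) ∧ P q := by
  induction n with
  | zero => exact ⟨p, 0, 0, rfl, rfl, by simpa using hS, by simpa using IsWalk.nil p, hp⟩
  | succ n ih =>
    obtain ⟨q, V, C, hV, hC, hle, hW, -⟩ := ih (by lia)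
    have hn : [Form.vp 0, .cp (-q), .cm (a + q)].Pairwise Form.Compat := by
      simpa [Form.Compat] using fun h => ha (h.neg_shift (-q) (by abel))
    have hbad := Form.card_not_nodup_evals_le hn
    have hsum := Finset.card_filter_add_card_filter_not (s := (Finset.univ : Finset G))
      fun x => (Form.evals [Form.vp 0, .cp (-q), .cm (a + q)] x).Nodup
    rw [Finset.card_univ] at hsum
    obtain ⟨x, hx, hPx⟩ := hR.exists_add_evals_le_of_card hle (P := P) (.vp 0)
      [.cp (-q), .cm (a + q)] (by simp)
      (by simp only [Multiset.card_add, Multiset.card_map, hV, hC]; lia)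
      (by simp only [List.length_cons, List.length_nil] at hbad; lia)
    refine ⟨x, x ::ₘ V, (x - q) ::ₘ C, by simp [hV], by simp [hC], ?_, ?_, hPx⟩
    · convert hx using 1
      rw [Multiset.map_cons, Multiset.map_cons, Multiset.map_cons,
        show a - (x - q) = a + q - x by abel, sub_eq_neg_add x q]
      simp only [Form.evals_cons, Form.evals_nil, Form.eval, ← Multiset.singleton_add, zero_add]
      abel
    · convert hW.cons x using 1
      simp [Multiset.cons_swap]

theorem Rich.exists_walk (hR : Rich R c) (hS : S ≤ R) (hk : 3 ≤ k) {p : G} {E D : List G}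
    (hp : Avoid E D p) (hc : S.card + 3 * k + 400 * (E.length + D.length) < c) :
    ∃ (q : G) (W : Multiset (G ⊕ G)), W.card ≤ 2 * k ∧ S + W ≤ R ∧ IsWalk (k - 3) q p W ∧
      Avoid E D q := by
  obtain ⟨a, ha⟩ := hR.exists_not_dbl (by lia)
  have hcard := card_filter_not_avoid_le E D
  obtain ⟨q, V, C, hV, hC, hle, hW, hq⟩ := hR.exists_walk_mates hS ha hp (k - 3) (by lia)
  refine ⟨q, _, ?_, (add_le_add_right (Multiset.le_add_right _ _) _).trans hle, hW, hq⟩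
  rw [Multiset.card_add, Multiset.card_map, Multiset.card_map]
  lia

theorem Rich.exists_vertex_edge_walks (hR : Rich R c) (hS : S ≤ R) (hk : 3 ≤ k) {w₁ w₂ : G}
    (hw : ¬ Dbl (w₁ - w₂)) (hc : S.card + 4500 * k ≤ c) :
    ∃ (p₁ q₁ p₂ q₂ : G) (W₁ W₂ : Multiset (G ⊕ G)), IsWalk (k - 3) q₁ p₁ W₁ ∧
      IsWalk (k - 3) q₂ p₂ W₂ ∧ W₁.card + W₂.card ≤ 4 * k ∧
      S + (Form.evals [.vp 0, .cp (-w₁)] p₁ + W₁ + (Form.evals [.vp 0, .cp (-w₂)] p₂ + W₂)) ≤ R ∧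
      [Form.vp 0, .vp (w₁ - p₁), .vp (w₂ - p₂), .cm p₁, .cm p₂, .cp (w₁ - p₁ - q₁),
        .cp (w₂ - p₂ - q₂)].Pairwise Form.Compat := by
  obtain ⟨p₁, h₁, hp₁⟩ := hR.exists_add_evals_le hS (.vp 0) [.cp (-w₁)] (by simp)
    (by simp [Form.Compat]) [w₁] [w₁, w₂] (by simp; lia)
  simp only [avoid_cons_left, avoid_nil_cons, avoid_nil, and_true] at hp₁
  obtain ⟨q₁, W₁, hW₁, h₂, walk₁, hq₁⟩ := hR.exists_walk h₁ hk (p := p₁) (E := [])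
    (D := [w₁, w₁ - w₂ - p₁])
    (by simpa using ⟨hp₁.2.1, fun h => hw (h.neg_shift p₁ (by abel))⟩) (by simp; lia)
  simp only [avoid_nil_cons, avoid_nil, and_true] at hq₁
  -- The vertex `w₂ - w₁ + p₁ + q₁ - p₂` is not used: it only has to differ from `p₂`.
  obtain ⟨p₂, h₃, hp₂⟩ := hR.exists_add_evals_le h₂ (.vm (w₂ - w₁ + p₁ + q₁))
    [.vp 0, .cp (-w₂)] (by simp)
    (by simpa [Form.Compat] using fun h => hq₁.2 (h.shift 0 (by abel)))
    [w₂, p₁, w₂ - w₁ + p₁] [w₂, w₁ - p₁ - q₁] (by simp; lia)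
  simp only [avoid_cons_left, avoid_nil_cons, avoid_nil, and_true] at hp₂
  rw [Form.evals_cons (.vm _), add_left_comm] at h₃
  have hne : w₂ - w₁ + p₁ + q₁ - p₂ ≠ p₂ := by
    have h := Multiset.nodup_of_le h₃ hR.nodup
    rintro e
    simp [Form.eval, e] at h
  replace h₃ := (Multiset.le_add_left _ _).trans h₃
  obtain ⟨q₂, W₂, hW₂, h₄, walk₂, hq₂⟩ := hR.exists_walk h₃ hk (p := p₂)
    (E := [w₂ - p₂ - w₁ + p₁ + q₁]) (D := [w₂, w₂ - p₁ - p₂])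
    (by simpa using ⟨by grind, hp₂.2.2.2.1, fun h => hp₁.2.2 (h.shift (-p₂) (by abel))⟩)
    (by simp; lia)
  simp only [avoid_cons_left, avoid_nil_cons, avoid_nil, and_true] at hq₂
  refine ⟨p₁, q₁, p₂, q₂, W₁, W₂, walk₁, walk₂, by lia, by simpa only [add_assoc] using h₄, ?_⟩
  simpa [Form.Compat] using ⟨⟨by grind, by grind⟩, by grind,
    ⟨by grind, fun h => hq₁.1 (h.shift (-p₁) (by abel)), fun h => hq₂.2.2 (h.shift 0 (by abel))⟩,
    ⟨fun h => hp₂.2.2.2.2 (h.shift 0 (by abel)), fun h => hq₂.2.1 (h.shift (-p₂) (by abel))⟩,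
    by grind⟩

theorem Rich.exists_vertex_edge_of_not_dbl (hR : Rich R c) (hS : S ≤ R) (hk : 3 ≤ k) {w₁ w₂ : G}
    (hw : ¬ Dbl (w₁ - w₂)) (hc : S.card + 4500 * k ≤ c) :
    ∃ T, S + T ≤ R ∧ T.card ≤ 8 * k ∧ T + {vx w₁} ∈ closedWalks G k ∧
      T + {vx w₂} ∈ closedWalks G k := by
  obtain ⟨p₁, q₁, p₂, q₂, W₁, W₂, walk₁, walk₂, hcard, hle, hn⟩ :=
    hR.exists_vertex_edge_walks hS hk hw hc
  obtain ⟨u, hu, -⟩ := hR.exists_add_evals_le hle _ _ (by simp) hn [] [] (by simp; lia)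
  refine ⟨_, by rwa [add_assoc] at hu, by simp; lia, ?_, ?_⟩
  · convert add_mem (walk₁.close hk (y₁ := w₁) (y₂ := w₁ - p₁ + u) (c₁ := -w₁ + p₁)
      (c₂ := p₁ - u) (c₃ := w₁ - p₁ - q₁ + u) (by abel) (by abel) (by abel))
      (walk₂.close hk (y₁ := u) (y₂ := w₂ - p₂ + u) (c₁ := p₂ - u) (c₂ := -w₂ + p₂)
        (c₃ := w₂ - p₂ - q₂ + u) (by abel) (by abel) (by abel)) using 1
    simp only [Form.evals_cons, Form.evals_nil, Form.eval, zero_add]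
    abel
  · convert add_mem (walk₁.close hk (y₁ := u) (y₂ := w₁ - p₁ + u) (c₁ := p₁ - u)
      (c₂ := -w₁ + p₁) (c₃ := w₁ - p₁ - q₁ + u) (by abel) (by abel) (by abel))
      (walk₂.close hk (y₁ := w₂) (y₂ := w₂ - p₂ + u) (c₁ := -w₂ + p₂) (c₂ := p₂ - u)
        (c₃ := w₂ - p₂ - q₂ + u) (by abel) (by abel) (by abel)) using 1
    simp only [Form.evals_cons, Form.evals_nil, Form.eval, zero_add]
    abel

theorem Rich.exists_vertex_edge (hR : Rich R c) (hS : S ≤ R) (hk : 3 ≤ k) (w₁ w₂ : G)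
    (hc : S.card + 5000 * k ≤ c) :
    ∃ T, S + T ≤ R ∧ T.card ≤ 20 * k ∧ T + {vx w₁} ∈ closedWalks G k ∧
      T + {vx w₂} ∈ closedWalks G k := by
  obtain ⟨w, h₀, hw⟩ := hR.exists_add_vx_le hS [] [w₁, w₂] (by simp; lia)
  simp only [avoid_nil_cons, avoid_nil, and_true] at hw
  obtain ⟨T₁, h₁, hT₁, h₁w, h₁w₁⟩ := hR.exists_vertex_edge_of_not_dbl h₀ hk hw.1 (by simp; lia)
  obtain ⟨T₂, h₂, hT₂, h₂w, h₂w₂⟩ := hR.exists_vertex_edge_of_not_dbl h₁ hk hw.2 (by simp; lia)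
  refine ⟨{vx w} + T₁ + T₂, by simpa only [add_assoc] using h₂, by simp; lia, ?_, ?_⟩
  · convert add_mem h₁w₁ h₂w using 1
    abel
  · convert add_mem h₁w h₂w₂ using 1
    abel

theorem Rich.exists_colour_edge_walks (hR : Rich R c) (hS : S ≤ R) (hk : 3 ≤ k) {s s' d d' : G}
    (hs : Good s) (hs' : Good s') (hd : Good d) (hd' : Good d') (h : s + s' = d + d') (hsd : s ≠ d)
    (hsd' : s ≠ d') (hc : S.card + 10000 * k ≤ c) :
    ∃ (p₁ q₁ p₂ q₂ : G) (W₁ W₂ : Multiset (G ⊕ G)), IsWalk (k - 3) q₁ p₁ W₁ ∧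
      IsWalk (k - 3) q₂ p₂ W₂ ∧ W₁.card + W₂.card ≤ 4 * k ∧
      S + ({vx p₁} + W₁ + ({vx p₂} + W₂)) ≤ R ∧
      [Form.vp (q₁ + s), .vp q₁, .vp (q₁ + s - d), .vp (q₂ + d'), .vp q₂, .vp (q₂ + s - d), .cp 0,
        .cp (s - d), .cm (p₁ - q₁ - s), .cm (p₂ - q₂ - d')].Pairwise Form.Compat := by
  obtain ⟨p₁, h₁, -⟩ := hR.exists_add_vx_le hS [] [] (by simp; lia)
  obtain ⟨q₁, W₁, hW₁, h₂, walk₁, hq₁⟩ := hR.exists_walk h₁ hk (p := p₁) (E := [p₁ + d' - s])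
    (D := [p₁ - s, p₁ + d])
    (by simpa [hs.2] using ⟨by grind, fun h => hd.2 (h.neg_shift 0 (by simp))⟩) (by simp; lia)
  simp only [avoid_cons_left, avoid_nil_cons, avoid_nil, and_true] at hq₁
  obtain ⟨p₂, h₃, hp₂⟩ := hR.exists_add_vx_le h₂ [q₁ + s - d', q₁ + s, q₁ + d, q₁ - d', q₁,
    q₁ + d - s, q₁ + s - d - d', q₁ + s - d] [] (by simp; lia)
  simp only [avoid_cons_left, avoid_nil, and_true] at hp₂
  obtain ⟨q₂, W₂, hW₂, h₄, walk₂, hq₂⟩ := hR.exists_walk h₃ hk (p := p₂)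
    (E := [q₁ + s - d', q₁ + s, q₁ + d, q₁ - d', q₁, q₁ + d - s, q₁ + s - d - d', q₁ + s - d,
      p₂ - p₁ + q₁ + s - d'])
    (D := [p₂ - d', p₂ - s']) (by simp [hp₂, hd'.2, hs'.2]; grind) (by simp; lia)
  simp only [avoid_cons_left, avoid_nil_cons, avoid_nil, and_true] at hq₂
  refine ⟨p₁, q₁, p₂, q₂, W₁, W₂, walk₁, walk₂, by lia, by simpa only [add_assoc] using h₄, ?_⟩
  have n₁ : ¬ Dbl (0 - (p₁ - q₁ - s)) := fun h => hq₁.2.1 (h.shift 0 (by abel))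
  have n₂ : ¬ Dbl (0 - (p₂ - q₂ - d')) := fun h => hq₂.2.2.2.2.2.2.2.2.2.1 (h.shift 0 (by abel))
  have n₃ : ¬ Dbl (s - d - (p₁ - q₁ - s)) := fun h => hq₁.2.2 (h.shift (-s) (by abel))
  have n₄ : ¬ Dbl (s - d - (p₂ - q₂ - d')) := fun h' => hq₂.2.2.2.2.2.2.2.2.2.2
    (h'.shift (d - s) (by rw [eq_sub_of_add_eq' h]; abel))
  simp only [List.pairwise_cons, List.forall_mem_cons, List.not_mem_nil, List.Pairwise.nil,
    Form.Compat, IsEmpty.forall_iff, implies_true, and_true]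
  and_intros <;> first | assumption | grind [Good]

theorem Rich.exists_colour_edge (hR : Rich R c) (hS : S ≤ R) (hk : 3 ≤ k) {s s' d d' : G}
    (hs : Good s) (hs' : Good s') (hd : Good d) (hd' : Good d') (h : s + s' = d + d') (hsd : s ≠ d)
    (hsd' : s ≠ d') (hc : S.card + 20000 * k ≤ c) :
    ∃ T, S + T ≤ R ∧ T.card ≤ 50 * k ∧ T + {cl s} + {cl s'} ∈ closedWalks G k ∧
      T + {cl d} + {cl d'} ∈ closedWalks G k := by
  obtain ⟨p₁, q₁, p₂, q₂, W₁, W₂, walk₁, walk₂, hcard, h₁, hn⟩ :=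
    hR.exists_colour_edge_walks hS hk hs hs' hd hd' h hsd hsd' (by lia)
  obtain ⟨x, h₂, -⟩ := hR.exists_add_evals_le h₁ _ _ (by simp) hn [] [] (by simp; lia)
  obtain ⟨T₁, h₃, hT₁, h₁q, h₁d⟩ := hR.exists_vertex_edge h₂ hk (q₁ + x) (q₁ + s - d + x)
    (by simp; lia)
  obtain ⟨T₂, h₄, hT₂, h₂q, h₂d⟩ := hR.exists_vertex_edge h₃ hk (q₂ + x) (q₂ + s - d + x)
    (by simp; lia)
  refine ⟨_, by rwa [add_assoc, add_assoc, add_assoc] at h₄, by simp; lia, ?_, ?_⟩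
  · convert add_mem (add_mem (walk₁.close hk (y₁ := q₁ + s + x) (y₂ := q₁ + x)
      (c₁ := p₁ - q₁ - s - x) (c₂ := s) (c₃ := x) (by abel) (by abel) (by abel))
      (walk₂.close hk (y₁ := q₂ + d' + x) (y₂ := q₂ + s - d + x) (c₁ := p₂ - q₂ - d' - x)
        (c₂ := s') (c₃ := s - d + x) (by abel) (by grind) (by abel))) (add_mem h₁d h₂q) using 1
    simp only [Form.evals_cons, Form.evals_nil, Form.eval, zero_add]
    abel
  · convert add_mem (add_mem (walk₁.close hk (y₁ := q₁ + s + x) (y₂ := q₁ + s - d + x)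
      (c₁ := p₁ - q₁ - s - x) (c₂ := d) (c₃ := s - d + x) (by abel) (by abel) (by abel))
      (walk₂.close hk (y₁ := q₂ + d' + x) (y₂ := q₂ + x) (c₁ := p₂ - q₂ - d' - x)
        (c₂ := d') (c₃ := x) (by abel) (by abel) (by abel))) (add_mem h₁q h₂d) using 1
    simp only [Form.evals_cons, Form.evals_nil, Form.eval, zero_add]
    abel

theorem Rich.exists_colour_half (hR : Rich R c) (hS : S ≤ R) (hk : 3 ≤ k) {c₁ c₂ c₃ : G}
    (hc₁ : Good c₁) (hc₂ : Good c₂) (hc₃ : Good c₃) (h₁₂ : c₁ ≠ c₂) (h₁₃ : c₁ ≠ c₃)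
    (h₂₃ : c₂ ≠ c₃) (hc : S.card + 10000 * k ≤ c) :
    ∃ T h, T.card ≤ 50 * k ∧ S + T + ({cl (h - c₁)} + {cl (h - c₂)} + {cl (h - c₃)}) ≤ R ∧
      T + ({cl c₁} + {cl (h - c₁)}) ∈ closedWalks G k ∧
      T + ({cl c₂} + {cl (h - c₂)}) ∈ closedWalks G k ∧
      T + ({cl c₃} + {cl (h - c₃)}) ∈ closedWalks G k := by
  obtain ⟨p, h₁, -⟩ := hR.exists_add_vx_le hS [] [] (by simp; lia)
  obtain ⟨q, W, hW, h₂, walk, hq⟩ := hR.exists_walk h₁ hk (p := p) (E := [])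
    (D := [p + c₁, p + c₂, p + c₃])
    (by simpa using ⟨hc₁.neg.2, hc₂.neg.2, hc₃.neg.2⟩) (by simp; lia)
  simp only [avoid_nil_cons, avoid_nil, and_true] at hq
  obtain ⟨h, h₃, -⟩ := hR.exists_add_evals_le h₂ (.vp q) [.vp (q - c₁), .vp (q - c₂),
    .vp (q - c₃), .cm (p - q), .cp (-c₁), .cp (-c₂), .cp (-c₃)] (by simp)
    (by
      simpa [Form.Compat, h₁₂, h₁₃, h₂₃] using ⟨⟨fun h => hc₁.1 (sub_eq_self.1 h.symm),
        fun h => hc₂.1 (sub_eq_self.1 h.symm), fun h => hc₃.1 (sub_eq_self.1 h.symm)⟩,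
        fun h => hq.1 (h.neg_shift 0 (by abel)), fun h => hq.2.1 (h.neg_shift 0 (by abel)),
        fun h => hq.2.2 (h.neg_shift 0 (by abel))⟩) [] [] (by simp; lia)
  obtain ⟨T₁, h₄, hT₁, h₁₁, h₁₂⟩ := hR.exists_vertex_edge h₃ hk (q + h - c₁) (q + h - c₂)
    (by simp; lia)
  obtain ⟨T₂, h₅, hT₂, h₂₂, h₂₃⟩ := hR.exists_vertex_edge h₄ hk (q + h - c₂) (q + h - c₃)
    (by simp; lia)
  have hclose (x : G) : {vx p} + W + {vx (q + h)} + {cl (p - q - h)} + ({cl x} + {cl (h - x)}) +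
      {vx (q + h - x)} ∈ closedWalks G k := by
    convert walk.close hk (y₁ := q + h) (y₂ := q + h - x) (c₁ := p - q - h) (c₂ := x)
      (c₃ := h - x) (by abel) (by abel) (by abel) using 1
    abel
  refine ⟨_, h, ?_, ?_, chain_mem (hclose c₁) (hclose c₂) (hclose c₃) h₁₁ h₁₂ h₂₂ h₂₃⟩
  · simp
    lia
  · convert h₅ using 1
    simp only [Form.evals_cons, Form.evals_nil, Form.eval, sub_add_eq_add_sub, neg_add_eq_sub]
    abel

theorem Rich.exists_colour_triangle (hR : Rich R c) (hS : S ≤ R) (hk : 3 ≤ k)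
    {c₁ c₂ c₃ d₁ d₂ d₃ : G} (hc₁ : Good c₁) (hc₂ : Good c₂) (hc₃ : Good c₃) (hd₁ : Good d₁)
    (hd₂ : Good d₂) (hd₃ : Good d₃) (e₁₂ : c₁ + d₁ = c₂ + d₂) (e₂₃ : c₂ + d₂ = c₃ + d₃)
    (h₁₂ : c₁ ≠ c₂) (h₁₃ : c₁ ≠ c₃) (h₂₃ : c₂ ≠ c₃) (hc : S.card + 30000 * k ≤ c) :
    ∃ T, S + T ≤ R ∧ T.card ≤ 300 * k ∧ T + ({cl c₁} + {cl d₁}) ∈ closedWalks G k ∧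
      T + ({cl c₂} + {cl d₂}) ∈ closedWalks G k ∧ T + ({cl c₃} + {cl d₃}) ∈ closedWalks G k := by
  obtain ⟨S₁, h, hS₁, h₁, hc₁', hc₂', hc₃'⟩ :=
    hR.exists_colour_half hS hk hc₁ hc₂ hc₃ h₁₂ h₁₃ h₂₃ (by lia)
  obtain ⟨S₂, h', hS₂, h₂, hd₁', hd₂', hd₃'⟩ :=
    hR.exists_colour_half h₁ hk hd₁ hd₂ hd₃ (by grind) (by grind) (by grind) (by simp; lia)
  have hgood := fun g hg => hR.good g (Multiset.mem_of_le h₂ hg)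
  have hn := Multiset.nodup_of_le h₂ hR.nodup
  rw [add_assoc (S + S₁ + _)] at hn
  obtain ⟨T₁, h₃, hT₁, h₁₁, h₁₂⟩ := hR.exists_colour_edge h₂ hk (s := h - c₁) (s' := h' - d₁)
    (d := h - c₂) (d' := h' - d₂) (hgood _ (by simp)) (hgood _ (by simp)) (hgood _ (by simp))
    (hgood _ (by simp)) (by grind) (by grind)
    (ne_of_nodup_add (f := cl) hn (by simp) (by simp)) (by simp; lia)
  obtain ⟨T₂, h₄, hT₂, h₂₂, h₂₃⟩ := hR.exists_colour_edge h₃ hk (s := h - c₂) (s' := h' - d₂)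
    (d := h - c₃) (d' := h' - d₃) (hgood _ (by simp)) (hgood _ (by simp)) (hgood _ (by simp))
    (hgood _ (by simp)) (by grind) (by grind)
    (ne_of_nodup_add (f := cl) hn (by simp) (by simp)) (by simp; lia)
  have hadd {x y : G} (hx : S₁ + ({cl x} + {cl (h - x)}) ∈ closedWalks G k)
      (hy : S₂ + ({cl y} + {cl (h' - y)}) ∈ closedWalks G k) :
      S₁ + S₂ + ({cl x} + {cl y}) + ({cl (h - x)} + {cl (h' - y)}) ∈ closedWalks G k := by
    convert add_mem hx hy using 1
    abel
  rw [add_assoc] at h₁₁ h₁₂ h₂₂ h₂₃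
  refine ⟨_, ?_, ?_, chain_mem (hadd hc₁' hd₁') (hadd hc₂' hd₂') (hadd hc₃' hd₃')
    h₁₁ h₁₂ h₂₂ h₂₃⟩
  · convert h₄ using 1
    abel
  · simp
    lia

theorem Rich.exists_vertex_triangle (hR : Rich R c) (hS : S ≤ R) (hk : 3 ≤ k) {w₁ w₂ w₃ : G}
    (h₁₂ : w₁ ≠ w₂) (h₁₃ : w₁ ≠ w₃) (h₂₃ : w₂ ≠ w₃) (hc : S.card + 30000 * k ≤ c) :
    ∃ T, S + T ≤ R ∧ T.card ≤ 300 * k ∧ T + {vx w₁} ∈ closedWalks G k ∧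
      T + {vx w₂} ∈ closedWalks G k ∧ T + {vx w₃} ∈ closedWalks G k := by
  obtain ⟨p, h₁, hp⟩ := hR.exists_add_evals_le hS (.vp 0) [.cp (-w₁), .cp (-w₂), .cp (-w₃)]
    (by simp) (by simp [Form.Compat, h₁₂, h₁₃, h₂₃]) [] [w₁, w₂, w₃] (by simp; lia)
  obtain ⟨q, W, hW, h₂, walk, hq⟩ := hR.exists_walk h₁ hk hp (by simp; lia)
  simp only [avoid_nil_cons, avoid_nil, and_true] at hq
  obtain ⟨y, h₃, -⟩ := hR.exists_add_evals_le h₂ (.vp 0) [.cm w₁, .cm w₂, .cm w₃, .cp (-q)]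
    (by simp) (by
      simpa [Form.Compat, h₁₂, h₁₃, h₂₃] using ⟨fun h => hq.1 (h.shift (-w₁) (by abel)),
        fun h => hq.2.1 (h.shift (-w₂) (by abel)), fun h => hq.2.2 (h.shift (-w₃) (by abel))⟩)
    [] [] (by simp; lia)
  simp only [Form.evals_cons, Form.evals_nil, Form.eval, neg_add_eq_sub, zero_add, add_zero] at h₃
  have hgood := fun g hg => hR.good g (Multiset.mem_of_le h₃ hg)
  have hn := Multiset.nodup_of_le h₃ hR.nodup
  obtain ⟨T₁, h₄, hT₁, h₁₁, h₁₂⟩ := hR.exists_colour_edge h₃ hk (s := p - w₁) (s' := w₁ - y)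
    (d := p - w₂) (d' := w₂ - y) (hgood _ (by simp)) (hgood _ (by simp)) (hgood _ (by simp))
    (hgood _ (by simp)) (by abel) (by grind)
    (ne_of_nodup_add (f := cl) hn (by simp) (by simp)) (by simp; lia)
  obtain ⟨T₂, h₅, hT₂, h₂₂, h₂₃⟩ := hR.exists_colour_edge h₄ hk (s := p - w₂) (s' := w₂ - y)
    (d := p - w₃) (d' := w₃ - y) (hgood _ (by simp)) (hgood _ (by simp)) (hgood _ (by simp))
    (hgood _ (by simp)) (by abel) (by grind)
    (ne_of_nodup_add (f := cl) hn (by simp) (by simp)) (by simp; lia)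
  have hclose (w : G) : {vx p} + W + {vx y} + {cl (y - q)} + {vx w} +
      ({cl (p - w)} + {cl (w - y)}) ∈ closedWalks G k := by
    convert walk.close hk (y₁ := w) (y₂ := y) rfl rfl rfl using 1
    abel
  rw [add_assoc] at h₁₁ h₁₂ h₂₂ h₂₃
  refine ⟨_, ?_, ?_, chain_mem (hclose w₁) (hclose w₂) (hclose w₃) h₁₁ h₁₂ h₂₂ h₂₃⟩
  · convert h₅ using 1
    abel
  · simp
    lia

theorem Rich.exists_closing_colour (hR : Rich R c) (hS : S ≤ R) (hk : 3 ≤ k) {a : G} (ha : Good a)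
    (hc : S.card + 2000 * k ≤ c) :
    ∃ T, S + T ≤ R ∧ T.card ≤ 4 * k ∧ T + {cl (-a)} ∈ closedWalks G k := by
  obtain ⟨p, h₁, -⟩ := hR.exists_add_vx_le hS [] [] (by simp; lia)
  obtain ⟨q, W, hW, h₂, walk, hq⟩ := hR.exists_walk h₁ hk (p := p) (E := []) (D := [a - p])
    (by simpa using fun h => ha.2 (h.neg_shift p (by abel))) (by simp; lia)
  simp only [avoid_nil_cons, avoid_nil, and_true] at hq
  obtain ⟨y, h₃, -⟩ := hR.exists_add_evals_le h₂ (.vp 0) [.vp a, .cm p, .cp (a - q)] (by simp)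
    (by simpa [Form.Compat, ha.1.symm] using fun h => hq (h.shift 0 (by abel))) [] []
    (by simp; lia)
  refine ⟨_, by rwa [add_assoc, add_assoc] at h₃, by simp; lia, ?_⟩
  convert walk.close hk (y₁ := y) (y₂ := a + y) (c₁ := p - y) (c₂ := -a) (c₃ := a - q + y)
    (by abel) (by abel) (by abel) using 1
  simp only [Form.evals_cons, Form.evals_nil, Form.eval, zero_add]
  abel

end Gadgets

section Slide

/-- The position of `i ∈ A` after `j` steps, when the elements of `A` are moved to the left, at
step `j` by `0` or `2 ^ j`, until they fill an initial segment: the distance `i - #(A ∩ [0, i))`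
to cover is read off in binary. -/
def slide (A : Finset ℕ) (j i : ℕ) : ℕ :=
  Nat.count (· ∈ A) i + 2 ^ j * ((i - Nat.count (· ∈ A) i) / 2 ^ j)

theorem slide_zero (A : Finset ℕ) (i : ℕ) : slide A 0 i = i := by
  have := Nat.count_le (p := (· ∈ A)) (n := i)
  simp only [slide, pow_zero, Nat.div_one, one_mul]
  lia

theorem slide_le (A : Finset ℕ) (j i : ℕ) : slide A j i ≤ i := by
  have := Nat.count_le (p := (· ∈ A)) (n := i)
  have := Nat.mul_div_le (i - Nat.count (· ∈ A) i) (2 ^ j)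
  rw [slide]
  lia

theorem slide_succ (A : Finset ℕ) (j i : ℕ) : slide A (j + 1) i = slide A j i ∨
    2 ^ j ≤ slide A j i ∧ slide A (j + 1) i = slide A j i - 2 ^ j := by
  rw [slide, slide, pow_succ, ← Nat.div_div_eq_div_mul, mul_assoc]
  obtain ⟨d, hd | hd⟩ := Nat.even_or_odd' ((i - Nat.count (· ∈ A) i) / 2 ^ j)
  · left
    rw [hd, Nat.mul_div_cancel_left d two_pos]
  · right
    rw [hd, show (2 * d + 1) / 2 = d by lia, mul_add, mul_one]
    lia

theorem slide_strictMonoOn (A : Finset ℕ) (j : ℕ) : StrictMonoOn (slide A j) A := by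
  intro i hi i' _ h
  have hlt := Nat.count_strict_mono (p := (· ∈ A)) hi h
  have hadd := Nat.count_add (· ∈ A) i (i' - i)
  rw [Nat.add_sub_cancel' h.le] at hadd
  have hle := Nat.count_le (p := fun x => i + x ∈ A) (n := i' - i)
  exact add_lt_add_of_lt_of_le hlt (Nat.mul_le_mul_left _ (Nat.div_le_div_right (by lia)))

theorem image_slide {A : Finset ℕ} {j : ℕ} (hA : A ⊆ Finset.range (2 ^ j)) :
    A.image (slide A j) = Finset.range #A := by
  refine Finset.eq_of_subset_of_card_le (Finset.image_subset_iff.2 fun i hi => ?_) ?_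
  · have hlt : i - Nat.count (· ∈ A) i < 2 ^ j :=
      (Nat.sub_le _ _).trans_lt (Finset.mem_range.1 (hA hi))
    rw [slide, Nat.div_eq_of_lt hlt, mul_zero, add_zero, Finset.mem_range]
    exact (Nat.count_lt_card A.finite_toSet hi).trans_eq (by simp)
  · rw [Finset.card_image_of_injOn (slide_strictMonoOn A j).injOn, Finset.card_range]

end Slide

section Concentrator

theorem sum_concentrate_mem {B : Type*} [AddCommMonoid B] {C : AddSubmonoid B} {r N : ℕ}
    {I Γ : ℕ → ℕ → B} (hN : N ≤ 2 ^ (r + 1))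
    (h₀ : ∀ j ≤ r, ∀ i < N, Γ j i + I j i ∈ C) (h₁ : ∀ j ≤ r, ∀ i < N, Γ j i + I (j + 1) i ∈ C)
    (h₂ : ∀ j ≤ r, ∀ i < N, 2 ^ j ≤ i → Γ j i + I (j + 1) (i - 2 ^ j) ∈ C)
    {A : Finset ℕ} (hA : A ⊆ Finset.range N) :
    ∑ j ∈ Finset.range (r + 1), ∑ i ∈ Finset.range N, Γ j i +
      (∑ j ∈ Finset.range r, ∑ i ∈ Finset.range N, I (j + 1) i +
        ∑ i ∈ Finset.range #A, I (r + 1) i) + ∑ i ∈ Finset.range N \ A, I 0 i ∈ C := by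
  have hinj (j) := (slide_strictMonoOn A j).injOn
  have hlt (j) {i} (hi : i ∈ A) : slide A j i < N :=
    (slide_le A j i).trans_lt (Finset.mem_range.1 (hA hi))
  have hsplit (f : ℕ → B) (j : ℕ) : ∑ i ∈ Finset.range N, f i =
      ∑ i ∈ Finset.range N \ A.image (slide A j), f i + ∑ i ∈ A, f (slide A j i) := by
    rw [← Finset.sum_sdiff (Finset.image_subset_iff.2 fun i hi => Finset.mem_range.2 (hlt j hi)),
      Finset.sum_image (hinj j)]
  have hlevel (j) (hj : j ≤ r) : ∑ i ∈ Finset.range N, Γ j i +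
      (∑ i ∈ Finset.range N \ A.image (slide A j), I j i +
        ∑ i ∈ A, I (j + 1) (slide A (j + 1) i)) ∈ C := by
    rw [hsplit (Γ j) j, add_add_add_comm, ← Finset.sum_add_distrib, ← Finset.sum_add_distrib]
    refine add_mem (sum_mem fun i hi => h₀ j hj i (Finset.mem_range.1 (Finset.mem_sdiff.1 hi).1))
      (sum_mem fun i hi => ?_)
    rcases slide_succ A j i with h | ⟨h, h'⟩
    · rw [h]
      exact h₁ j hj _ (hlt j hi)
    · rw [h']
      exact h₂ j hj _ (hlt j hi) h
  rw [← image_slide (hA.trans (Finset.range_subset_range.2 hN)), Finset.sum_image (hinj _)]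
  suffices ∀ s ≤ r, ∑ j ∈ Finset.range (s + 1), ∑ i ∈ Finset.range N, Γ j i +
      (∑ j ∈ Finset.range s, ∑ i ∈ Finset.range N, I (j + 1) i +
        ∑ i ∈ A, I (s + 1) (slide A (s + 1) i)) + ∑ i ∈ Finset.range N \ A, I 0 i ∈ C from
    this r le_rfl
  intro s hs
  induction s with
  | zero =>
    convert hlevel 0 hs using 1
    simp only [funext (slide_zero A), Finset.image_id', Finset.sum_range_succ,
      Finset.sum_range_zero]
    abel
  | succ s ih =>
    convert add_mem (ih (by lia)) (hlevel (s + 1) hs) using 1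
    rw [Finset.sum_range_succ _ (s + 1),
      Finset.sum_range_succ (fun j => ∑ i ∈ Finset.range N, I (j + 1) i) s,
      hsplit (I (s + 1)) (s + 1)]
    abel

variable {α β : Type*} {R X : Multiset α} {b : β → Multiset α} {e : β → α} {Q : β → Prop} {c t : ℕ}

theorem injOn_of_nodup_sum {ι : Type*} {s : Finset ι} {x : ι → β} (he : ∀ y, e y ∈ b y)
    (h : (∑ i ∈ s, b (x i)).Nodup) : Set.InjOn x s := by
  classical
  intro i hi j hj hij
  by_contra hne
  rw [← Finset.add_sum_erase s _ hi, ← Finset.add_sum_erase (s.erase i) _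
    (Finset.mem_erase.2 ⟨Ne.symm hne, hj⟩), ← add_assoc, hij] at h
  exact Multiset.disjoint_left.1 (Multiset.nodup_add.1 (Multiset.nodup_add.1 h).1).2.2
    (he (x j)) (he (x j))

theorem exists_injOn_add_sum_le {ι : Type*} {s : Finset ι} [Nonempty β] (hR : R.Nodup)
    (hX : X ≤ R) (he : ∀ y, e y ∈ b y) (hc : X.card + #s * t ≤ c)
    (hb : ∀ Y ≤ R, Y.card ≤ c → ∃ y, Y + b y ≤ R ∧ (b y).card ≤ t ∧ Q y) :
    ∃ x : ι → β, X + ∑ i ∈ s, b (x i) ≤ R ∧ (∑ i ∈ s, b (x i)).card ≤ #s * t ∧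
      (∀ i ∈ s, Q (x i)) ∧ Set.InjOn x s ∧ ∀ i ∈ s, e (x i) ∉ X := by
  obtain ⟨S, hS, hcard, h⟩ := exists_add_sum_le (s := s) (P := fun _ S => ∃ y, S = b y ∧ Q y)
    hX hc fun i _ Y hY hYc => by
      obtain ⟨y, hy, hyc, hQ⟩ := hb Y hY hYc
      exact ⟨_, hy, hyc, y, rfl, hQ⟩
  choose! x hx hQ using h
  rw [Finset.sum_congr rfl hx] at hS hcard
  have hn := Multiset.nodup_add.1 (Multiset.nodup_of_le hS hR)
  refine ⟨x, hS, hcard, hQ, injOn_of_nodup_sum he hn.2.1, fun i hi hiX => ?_⟩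
  exact Multiset.disjoint_left.1 hn.2.2 hiX (Multiset.mem_sum.2 ⟨i, hi, he _⟩)

theorem exists_grid_triangles {C : AddSubmonoid (Multiset α)} {r N : ℕ} {I : ℕ → ℕ → β}
    (hX : X ≤ R) (hc : X.card + (r + 1) * N * t ≤ c)
    (ht : ∀ y₁ y₂ y₃, Q y₁ → Q y₂ → Q y₃ → y₁ ≠ y₂ → y₁ ≠ y₃ → y₂ ≠ y₃ → ∀ Y ≤ R, Y.card ≤ c →
      ∃ S, Y + S ≤ R ∧ S.card ≤ t ∧ S + b y₁ ∈ C ∧ S + b y₂ ∈ C ∧ S + b y₃ ∈ C)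
    (hI₀ : ∀ i < N, Q (I 0 (i + 1))) (hI : ∀ j ≤ r, ∀ i ≤ N, Q (I (j + 1) i))
    (hne : ∀ j ≤ r, ∀ i < N, ∀ i' ≤ N, I j (i + 1) ≠ I (j + 1) i')
    (hinj : ∀ j ≤ r, ∀ i ≤ N, ∀ i' ≤ N, I (j + 1) i = I (j + 1) i' → i = i') :
    ∃ Γ : ℕ → ℕ → Multiset α,
      X + ∑ j ∈ Finset.range (r + 1), ∑ i ∈ Finset.range N, Γ j i ≤ R ∧
      (∑ j ∈ Finset.range (r + 1), ∑ i ∈ Finset.range N, Γ j i).card ≤ (r + 1) * N * t ∧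
      ∀ j ≤ r, ∀ i < N, Γ j i + b (I j (i + 1)) ∈ C ∧ Γ j i + b (I (j + 1) (i + 1)) ∈ C ∧
        Γ j i + b (I (j + 1) (i + 1 - 2 ^ j)) ∈ C := by
  have hcard : #(Finset.range (r + 1) ×ˢ Finset.range N) = (r + 1) * N := by simp
  obtain ⟨Γ, hle, hΓ, h⟩ := exists_add_sum_le (s := Finset.range (r + 1) ×ˢ Finset.range N) (b := t)
    (P := fun p S => S + b (I p.1 (p.2 + 1)) ∈ C ∧ S + b (I (p.1 + 1) (p.2 + 1)) ∈ C ∧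
      S + b (I (p.1 + 1) (p.2 + 1 - 2 ^ p.1)) ∈ C) hX (hcard ▸ hc) fun p hp Y hY hYc => by
    obtain ⟨j, i⟩ := p
    simp only [Finset.mem_product, Finset.mem_range] at hp
    have hpow := Nat.one_le_two_pow (n := j)
    have hQ : Q (I j (i + 1)) := by
      cases j with
      | zero => exact hI₀ i hp.2
      | succ j => exact hI j (by lia) _ hp.2
    exact ht _ _ _ hQ (hI j (by lia) _ (by lia)) (hI j (by lia) _ (by lia))
      (hne j (by lia) i hp.2 _ (by lia)) (hne j (by lia) i hp.2 _ (by lia))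
      (fun h => absurd (hinj j (by lia) _ (by lia) _ (by lia) h) (by lia)) Y hY hYc
  rw [Finset.sum_product] at hle hΓ
  exact ⟨fun j i => Γ (j, i), hle, hcard ▸ hΓ, fun j hj i hi => h (j, i) (by simp; lia)⟩

theorem sum_range_add_sum_range_le (f : ℕ → ℕ → Multiset α) (r : ℕ) {M N : ℕ} (hM : M ≤ N) :
    ∑ j ∈ Finset.range r, ∑ i ∈ Finset.range N, f j (i + 1) + ∑ i ∈ Finset.range M, f r (i + 1) ≤
      ∑ j ∈ Finset.range (r + 1), ∑ i ∈ Finset.range (N + 1), f j i := by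
  have hrow (j : ℕ) : ∑ i ∈ Finset.range N, f j (i + 1) ≤ ∑ i ∈ Finset.range (N + 1), f j i := by
    rw [Finset.sum_range_succ']
    exact Multiset.le_add_right _ _
  rw [Finset.sum_range_succ _ r]
  exact add_le_add (Finset.sum_le_sum fun j _ => hrow j)
    ((Finset.sum_le_sum_of_subset (Finset.range_subset_range.2 hM)).trans (hrow r))

-- In the grid the positions of level `0` carry the given family; position `0` of the other levels
-- is a dummy, the third vertex of the triangles whose element cannot move left by `2 ^ j`.
theorem exists_range_concentrator [Nonempty β] {C : AddSubmonoid (Multiset α)} {r N M : ℕ}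
    (hR : R.Nodup) (hX : X ≤ R) (he : ∀ y, e y ∈ b y)
    (hb : ∀ Y ≤ R, Y.card ≤ c → ∃ y, Y + b y ≤ R ∧ (b y).card ≤ 2 ∧ Q y)
    (ht : ∀ y₁ y₂ y₃, Q y₁ → Q y₂ → Q y₃ → y₁ ≠ y₂ → y₁ ≠ y₃ → y₂ ≠ y₃ → ∀ Y ≤ R, Y.card ≤ c →
      ∃ S, Y + S ≤ R ∧ S.card ≤ t ∧ S + b y₁ ∈ C ∧ S + b y₂ ∈ C ∧ S + b y₃ ∈ C)
    {u : ℕ → β} (hu : ∀ i < N, Q (u i)) (huX : ∀ i < N, e (u i) ∈ X) (hN : N ≤ 2 ^ (r + 1))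
    (hM : M ≤ N) (hc : X.card + (r + 1) * (N + 1) * (2 + t) ≤ c) :
    ∃ S, X + S ≤ R ∧ S.card ≤ (r + 1) * (N + 1) * (2 + t) ∧
      ∀ A ⊆ Finset.range N, #A = M → S + ∑ i ∈ Finset.range N \ A, b (u i) ∈ C := by
  have hcard : #(Finset.range (r + 1) ×ˢ Finset.range (N + 1)) = (r + 1) * (N + 1) := by simp
  rw [mul_add] at hc ⊢
  obtain ⟨x, hx, hxc, hQ, hinj, hxX⟩ := exists_injOn_add_sum_le (t := 2)
    (s := Finset.range (r + 1) ×ˢ Finset.range (N + 1)) hR hX he (by rw [hcard]; lia) hb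
  rw [Finset.sum_product] at hx hxc
  rw [hcard] at hxc
  have hmem {j i : ℕ} (hj : j ≤ r) (hi : i ≤ N) :
      (j, i) ∈ Finset.range (r + 1) ×ˢ Finset.range (N + 1) :=
    Finset.mk_mem_product (Finset.mem_range_succ_iff.2 hj) (Finset.mem_range_succ_iff.2 hi)
  have : (r + 1) * N * t ≤ (r + 1) * (N + 1) * t := by gcongr; lia
  let I : ℕ → ℕ → β
    | 0, i => u (i - 1)
    | j + 1, i => x (j, i)
  obtain ⟨Γ, hΓ, hΓc, hΓC⟩ := exists_grid_triangles (C := C) (r := r) (I := I) hx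
    (by rw [Multiset.card_add]; lia) ht hu (fun j hj i hi => hQ _ (hmem hj hi))
    (fun j hj i hi i' hi' h => by
      cases j with
      | zero => exact hxX _ (hmem hj hi') (congrArg e h ▸ huX i hi)
      | succ j =>
        exact absurd (Prod.ext_iff.1 (hinj (hmem (by lia) hi) (hmem hj hi') h)).1 (by lia))
    fun j hj i hi i' hi' h => (Prod.ext_iff.1 (hinj (hmem hj hi) (hmem hj hi') h)).2
  have hle := sum_range_add_sum_range_le (fun j i => b (x (j, i))) r hM
  refine ⟨∑ j ∈ Finset.range (r + 1), ∑ i ∈ Finset.range N, Γ j i +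
    (∑ j ∈ Finset.range r, ∑ i ∈ Finset.range N, b (I (j + 1) (i + 1)) +
      ∑ i ∈ Finset.range M, b (I (r + 1) (i + 1))), ?_, ?_, fun A hA hAM => ?_⟩
  · refine le_trans ?_ hΓ
    rw [add_comm (∑ j ∈ _, ∑ i ∈ _, Γ j i), ← add_assoc]
    exact add_le_add_left (add_le_add_right hle X) _
  · have := Multiset.card_le_card hle
    rw [Multiset.card_add]
    lia
  · rw [← hAM]
    exact sum_concentrate_mem (I := fun j i => b (I j (i + 1))) hN
      (fun j hj i hi => (hΓC j hj i hi).1) (fun j hj i hi => (hΓC j hj i hi).2.1)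
      (fun j hj i hi h => by
        rw [← Nat.sub_add_comm h]
        exact (hΓC j hj i hi).2.2) hA

theorem exists_map_range_eq {α : Type*} [Nonempty α] (s : Multiset α) :
    ∃ f : ℕ → α, (Multiset.range s.card).map f = s := by
  induction s using Quotient.inductionOn with
  | h l =>
    refine ⟨fun i => l.getD i (Classical.arbitrary α), congrArg Multiset.ofList (?_ : _ = l)⟩
    exact List.ext_getElem (by simp) fun i hi _ => by simp_all

theorem exists_add_of_map_eq_add {f : β → α} {s : Multiset β} {t u : Multiset α}
    (h : s.map f = t + u) : ∃ t' u', s = t' + u' ∧ t'.map f = t ∧ u'.map f = u := by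
  obtain ⟨t', u', ht, hu, hs⟩ :=
    Multiset.rel_add_right.1 (Multiset.rel_map_left.1 (Multiset.rel_eq.2 h))
  exact ⟨t', u', hs, Multiset.rel_eq.1 (Multiset.rel_map_left.2 ht),
    Multiset.rel_eq.1 (Multiset.rel_map_left.2 hu)⟩

theorem exists_concentrator [Nonempty β] {C : AddSubmonoid (Multiset α)} {r M : ℕ}
    (hR : R.Nodup) (hX : X ≤ R) (he : ∀ y, e y ∈ b y)
    (hb : ∀ Y ≤ R, Y.card ≤ c → ∃ y, Y + b y ≤ R ∧ (b y).card ≤ 2 ∧ Q y)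
    (ht : ∀ y₁ y₂ y₃, Q y₁ → Q y₂ → Q y₃ → y₁ ≠ y₂ → y₁ ≠ y₃ → y₂ ≠ y₃ → ∀ Y ≤ R, Y.card ≤ c →
      ∃ S, Y + S ≤ R ∧ S.card ≤ t ∧ S + b y₁ ∈ C ∧ S + b y₂ ∈ C ∧ S + b y₃ ∈ C)
    {D : Multiset β} (hD : ∀ y ∈ D, Q y) (hDX : D.bind b ≤ X) (hr : D.card ≤ 2 ^ (r + 1))
    (hc : X.card + (r + 1) * (D.card + 1) * (2 + t) ≤ c) :
    ∃ S, X + S ≤ R ∧ S.card ≤ (r + 1) * (D.card + 1) * (2 + t) ∧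
      ∀ A E, D = A + E → A.card = M → S + E.bind b ∈ C := by
  obtain ⟨u, hu⟩ := exists_map_range_eq D
  have huD : ∀ i < D.card, u i ∈ D := fun i hi =>
    hu ▸ Multiset.mem_map_of_mem u (Multiset.mem_range.2 hi)
  obtain hM | hM := le_or_gt M D.card
  · obtain ⟨S, hS, hSc, h⟩ := exists_range_concentrator hR hX he hb ht (fun i hi => hD _ (huD i hi))
      (fun i hi => Multiset.mem_of_le hDX (Multiset.mem_bind.2 ⟨_, huD i hi, he _⟩)) hr hM hc
    refine ⟨S, hS, hSc, fun A E hAE hA => ?_⟩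
    obtain ⟨A', E', hAE', rfl, rfl⟩ := exists_add_of_map_eq_add (hu.trans hAE)
    have hn : (A' + E').Nodup := hAE' ▸ Multiset.nodup_range _
    have hA' : (Finset.range D.card \ ⟨A', (Multiset.nodup_add.1 hn).1⟩).val = E' := by
      rw [Finset.sdiff_val, Finset.range_val, hAE', add_tsub_cancel_left]
    have hmem := h ⟨A', (Multiset.nodup_add.1 hn).1⟩ (Finset.val_le_iff.1 (by
      rw [Finset.range_val, hAE']
      exact Multiset.le_add_right _ _)) (by rwa [Multiset.card_map] at hA)
    rw [Finset.sum, hA'] at hmem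
    rwa [Multiset.bind_map]
  · refine ⟨0, by simpa using hX, by simp, fun A E hAE hA => ?_⟩
    rw [hAE, Multiset.card_add] at hM
    lia

end Concentrator

section RichConcentrators

variable {G : Type*} [AddCommGroup G] [Fintype G] [DecidableEq G]
  {R S : Multiset (G ⊕ G)} {c k r : ℕ}

theorem Rich.exists_vertex_concentrator (hR : Rich R c) (hS : S ≤ R) (hk : 3 ≤ k)
    {D : Multiset G} (hD : D.map vx ≤ S) (hr : D.card ≤ 2 ^ (r + 1)) (M : ℕ)
    (hc : S.card + (r + 1) * (D.card + 1) * (2 + 300 * k) + 30000 * k ≤ c) :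
    ∃ T, S + T ≤ R ∧ T.card ≤ (r + 1) * (D.card + 1) * (2 + 300 * k) ∧
      ∀ A E, D = A + E → A.card = M → T + E.map vx ∈ closedWalks G k := by
  simp only [← Multiset.bind_singleton] at hD ⊢
  refine exists_concentrator (c := c - 30000 * k) (b := fun x => {vx x}) (Q := fun _ => True)
    hR.nodup hS (fun x => Multiset.mem_singleton_self (vx x)) (fun Y hY hYc => ?_)
    (fun w₁ w₂ w₃ _ _ _ h₁₂ h₁₃ h₂₃ Y hY hYc =>
      hR.exists_vertex_triangle hY hk h₁₂ h₁₃ h₂₃ (by lia)) (fun _ _ => trivial) hD hr (by lia)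
  obtain ⟨x, hx, -⟩ := hR.exists_add_vx_le hY [] [] (by simp; lia)
  exact ⟨x, hx, by simp, trivial⟩

/-- The pair of colours `g` and `a - g`. -/
def bundle (a g : G) : Multiset (G ⊕ G) := {cl g} + {cl (a - g)}

theorem Rich.exists_bundle_concentrator (hR : Rich R c) (hS : S ≤ R) (hk : 3 ≤ k) {a : G}
    (ha : ¬ Dbl a) {D : Multiset G} (hD : D.bind (bundle a) ≤ S) (hr : D.card ≤ 2 ^ (r + 1)) (M : ℕ)
    (hc : S.card + (r + 1) * (D.card + 1) * (2 + 300 * k) + 30000 * k ≤ c) :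
    ∃ T, S + T ≤ R ∧ T.card ≤ (r + 1) * (D.card + 1) * (2 + 300 * k) ∧
      ∀ A E, D = A + E → A.card = M → T + E.bind (bundle a) ∈ closedWalks G k := by
  have hgood {x : G} (hx : bundle a x ≤ R) : Good x ∧ Good (a - x) :=
    ⟨hR.good _ (Multiset.mem_of_le hx (by simp [bundle])),
      hR.good _ (Multiset.mem_of_le hx (by simp [bundle]))⟩
  refine exists_concentrator (c := c - 30000 * k) (b := bundle a)
    (Q := fun x => Good x ∧ Good (a - x)) hR.nodup hS
    (fun x => Multiset.mem_add.2 (Or.inl (Multiset.mem_singleton_self (cl x))))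
    (fun Y hY hYc => ?_) (fun c₁ c₂ c₃ h₁ h₂ h₃ h₁₂ h₁₃ h₂₃ Y hY hYc =>
      hR.exists_colour_triangle hY hk h₁.1 h₂.1 h₃.1 h₁.2 h₂.2 h₃.2 (by abel) (by abel)
        h₁₂ h₁₃ h₂₃ (by lia))
    (fun x hx => hgood (((Multiset.le_bind D hx).trans hD).trans hS)) hD hr (by lia)
  obtain ⟨x, hx, -⟩ := hR.exists_add_evals_le hY (.cp 0) [.cm a] (by simp)
    (by simpa [Form.Compat] using fun h => ha (h.neg_shift 0 (by abel))) [] [] (by simp; lia)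
  simp only [Form.evals_cons, Form.evals_nil, Form.eval, zero_add, add_zero] at hx
  exact ⟨x, hx, by simp [bundle], hgood ((Multiset.le_add_left _ _).trans hx)⟩

end RichConcentrators

section Generic

variable {G : Type*} [AddCommGroup G]

/-- `P` holds for every `x` whose differences from some `n` fixed elements are good. -/
def Generic (n : ℕ) (P : G → Prop) : Prop :=
  ∃ E : List G, E.length ≤ n ∧ ∀ x, (∀ z ∈ E, Good (x - z)) → P x

theorem Generic.and {m n : ℕ} {P Q : G → Prop} (hP : Generic m P) (hQ : Generic n Q) :
    Generic (m + n) fun x => P x ∧ Q x := by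
  obtain ⟨E, hE, h⟩ := hP
  obtain ⟨E', hE', h'⟩ := hQ
  refine ⟨E ++ E', by rw [List.length_append]; lia, fun x hx => ?_⟩
  rw [List.forall_mem_append] at hx
  exact ⟨h x hx.1, h' x hx.2⟩

theorem Generic.mono {n : ℕ} {P Q : G → Prop} (hP : Generic n P) (h : ∀ x, P x → Q x) :
    Generic n Q :=
  hP.imp fun _ hE => ⟨hE.1, fun x hx => h x (hE.2 x hx)⟩

theorem Generic.add_left {n : ℕ} {P : G → Prop} (hP : Generic n P) (c : G) :
    Generic n fun x => P (c + x) := by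
  obtain ⟨E, hE, h⟩ := hP
  refine ⟨E.map (· - c), by simpa using hE, fun x hx => h _ fun z hz => ?_⟩
  convert hx (z - c) (List.mem_map_of_mem hz) using 1
  abel

theorem Generic.sub_left {n : ℕ} {P : G → Prop} (hP : Generic n P) (c : G) :
    Generic n fun x => P (c - x) := by
  obtain ⟨E, hE, h⟩ := hP
  refine ⟨E.map (c - ·), by simpa using hE, fun x hx => h _ fun z hz => ?_⟩
  convert (hx (c - z) (List.mem_map_of_mem hz)).neg using 1
  abel

theorem Generic.ball {ι : Type*} {n : ℕ} {P : ι → G → Prop} {s : Finset ι}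
    (h : ∀ i ∈ s, Generic n (P i)) : Generic (#s * n) fun x => ∀ i ∈ s, P i x := by
  classical
  choose! E hE hP using h
  refine ⟨s.toList.flatMap E, ?_, fun x hx i hi => hP i hi x fun z hz =>
    hx z (List.mem_flatMap.2 ⟨i, Finset.mem_toList.2 hi, hz⟩)⟩
  rw [List.length_flatMap]
  refine (List.sum_le_card_nsmul _ n fun y hy => ?_).trans (by simp)
  obtain ⟨i, hi, rfl⟩ := List.mem_map.1 hy
  exact hE i (Finset.mem_toList.1 hi)

theorem generic_good_sub (E : List G) : Generic E.length fun x => ∀ z ∈ E, Good (x - z) :=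
  ⟨E, le_rfl, fun _ h => h⟩

variable [Fintype G] [DecidableEq G] {R S : Multiset (G ⊕ G)} {c n : ℕ} {P : G → Prop}

theorem Rich.exists_generic_evals (hR : Rich R c) (hS : S ≤ R) (f : Form G) (l : List (Form G))
    (hl : l.length ≤ 13) (hn : (f :: l).Pairwise Form.Compat) (hP : Generic n P)
    (hc : S.card + 800 * n < c) : ∃ x, S + Form.evals (f :: l) x ≤ R ∧ P x := by
  obtain ⟨E, hE, hP⟩ := hP
  obtain ⟨x, hx, hav⟩ := hR.exists_add_evals_le hS f l hl hn E E (by lia)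
  exact ⟨x, hx, hP x hav.good⟩

theorem Rich.exists_generic_colour (hR : Rich R c) (hS : S ≤ R) (hP : Generic n P)
    (hc : S.card + 800 * n < c) : ∃ x, S + {cl x} ≤ R ∧ P x := by
  simpa [Form.eval] using hR.exists_generic_evals hS (.cp 0) [] (by simp) (by simp) hP hc

end Generic

section GeneralPosition

variable {G : Type*} [AddCommGroup G]

/-- Vertices with good differences, and shifts of bundles of colours that seldom meet. -/
structure GeneralPosition (a : G) (V B : List G) : Prop where
  vertices : V.Pairwise fun v w => Good (v - w)
  bundles : B.Pairwise fun s r => Good (s - r) ∧ Good (s - (a - r))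

theorem generic_bundles (a : G) (B : List G) :
    Generic (2 * B.length) fun s => ∀ r ∈ B, Good (s - r) ∧ Good (s - (a - r)) := by
  have h := (generic_good_sub B).and (generic_good_sub (B.map (a - ·)))
  rw [List.length_map, ← two_mul] at h
  exact h.mono fun s hs r hr => ⟨hs.1 r hr, hs.2 _ (List.mem_map_of_mem hr)⟩

theorem GeneralPosition.generic_cons_sub {a : G} {V B : List G} (h : GeneralPosition a V B)
    (v : G) :
    Generic (V.length + 2 * B.length) fun x => GeneralPosition a ((v - x) :: V) (x :: B) :=
  (((generic_good_sub V).sub_left v).and (generic_bundles a B)).mono fun _ hx =>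
    ⟨h.vertices.cons hx.1, h.bundles.cons hx.2⟩

theorem GeneralPosition.generic_cons_add {a : G} {V B : List G} (h : GeneralPosition a V B)
    (v : G) :
    Generic (V.length + 2 * B.length) fun x => GeneralPosition a ((v + x) :: V) (x :: B) :=
  (((generic_good_sub V).add_left v).and (generic_bundles a B)).mono fun _ hx =>
    ⟨h.vertices.cons hx.1, h.bundles.cons hx.2⟩

namespace Form

/-- The shift of a form. -/
def centre : Form G → G
  | vp s | vm s | cp s | cm s => s

/-- The forms that are vertices. -/
def IsVertex : Form G → Prop
  | vp _ | vm _ => True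
  | cp _ | cm _ => False

theorem compat_of_good {f g : Form G} (h : Good (f.centre - g.centre)) : f.Compat g := by
  cases f <;> cases g <;>
    first
    | trivial
    | exact sub_ne_zero.1 h.1
    | exact h.2

theorem pairwise_compat {L : List (Form G)}
    (h : (L.map centre).Pairwise fun v w => Good (v - w)) : L.Pairwise Compat :=
  (List.pairwise_map.1 h).imp compat_of_good

/-- The colours of the bundles of `s + x`, for `s` in `B`. -/
def bundles (a : G) (B : List G) : List (Form G) := B.flatMap fun s => [.cp s, .cm (a - s)]

theorem pairwise_bundles {a : G} (ha : ¬ Dbl a) {B : List G}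
    (h : B.Pairwise fun s r => Good (s - r) ∧ Good (s - (a - r))) :
    (bundles a B).Pairwise Compat := by
  rw [bundles, List.pairwise_flatMap]
  refine ⟨fun s _ => ?_, h.imp fun {s r} hs => ?_⟩
  · simpa [Compat] using fun h => ha (h.neg_shift s (by abel))
  · simp only [List.mem_cons, List.not_mem_nil, or_false, forall_eq_or_imp, forall_eq, Compat]
    exact ⟨⟨sub_ne_zero.1 hs.1.1, hs.2.2⟩, fun h => hs.2.2 (h.neg_shift 0 (by abel)),
      fun h => hs.1.1 (sub_eq_zero.2 (sub_right_injective h))⟩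

theorem pairwise_append_bundles {a : G} (ha : ¬ Dbl a) {L : List (Form G)} {B : List G}
    (hL : L.Pairwise Compat) (hv : ∀ f ∈ L, f.IsVertex)
    (hB : B.Pairwise fun s r => Good (s - r) ∧ Good (s - (a - r))) :
    (L ++ bundles a B).Pairwise Compat := by
  refine List.pairwise_append.2 ⟨hL, pairwise_bundles ha hB, fun f hf g hg => ?_⟩
  obtain ⟨s, -, hg⟩ := List.mem_flatMap.1 hg
  rcases List.mem_pair.1 hg with rfl | rfl <;> have := hv f hf <;> cases f <;> trivial

theorem evals_append (l l' : List (Form G)) (x : G) :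
    evals (l ++ l') x = evals l x + evals l' x := by
  simp [evals]

theorem evals_bundles (a x : G) (B : List G) :
    evals (bundles a B) x = ((B.map (· + x) : List G) : Multiset G).bind (bundle a) := by
  induction B with
  | nil => rfl
  | cons s B ih =>
    rw [bundles, List.flatMap_cons, ← bundles, evals_append, ih, List.map_cons,
      ← Multiset.cons_coe, Multiset.cons_bind]
    simp only [evals_cons, evals_nil, eval, bundle, sub_sub, add_zero]

end Form

variable [Fintype G] [DecidableEq G] {R S : Multiset (G ⊕ G)} {c n : ℕ} {P : G → Prop}

theorem Rich.exists_generic_bundles (hR : Rich R c) (hS : S ≤ R) {a : G} (ha : ¬ Dbl a)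
    (f : Form G) {L : List (Form G)} {B : List G} (hl : L.length + 2 * B.length ≤ 13)
    (hL : (f :: L).Pairwise Form.Compat) (hv : ∀ g ∈ f :: L, g.IsVertex)
    (hB : B.Pairwise fun s r => Good (s - r) ∧ Good (s - (a - r))) (hP : Generic n P)
    (hc : S.card + 800 * n < c) :
    ∃ x, S + (Form.evals (f :: L) x + ((B.map (· + x) : List G) : Multiset G).bind (bundle a)) ≤
      R ∧ P x := by
  obtain ⟨x, hx, hPx⟩ := hR.exists_generic_evals hS f (L ++ Form.bundles a B)
    (by simpa [Form.bundles, mul_comm] using hl) (Form.pairwise_append_bundles ha hL hv hB) hP hc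
  refine ⟨x, ?_, hPx⟩
  rwa [← Form.evals_bundles, ← Form.evals_append]

end GeneralPosition

section Triples

variable {G : Type*} [AddCommGroup G]

/-- Three walks to be closed to cycles, the `i`-th one from `q i` to `p i`. -/
structure Triple (G : Type*) where
  p : Fin 3 → G
  q : Fin 3 → G
  W : Fin 3 → Multiset (G ⊕ G)

namespace Triple

variable (t : Triple G) (a : G)

/-- The vertices and colours of the three walks, including their first vertices. -/
def total : Multiset (G ⊕ G) := ∑ i, (t.W i + {vx (t.p i)})

/-- The total displacement of the three walks. -/
def diff : G := ∑ i, (t.p i - t.q i)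

/-- The shift of the second bundle, when `τ` is the given colour closing the first walk. -/
def shift₀ (τ : G) : G := a - (t.p 0 - t.q 0) + τ

/-- The shift of the bundle completed by the second walk, when `α` is the given colour closing
it. -/
def shift₁ (α : G) : G := t.p 1 - t.q 1 - a - α

/-- The shift of the bundle completed by the third walk, when `β` is the given colour closing
it and `s` is the shift of the second bundle. -/
def shift₂ (s β : G) : G := a - (t.p 2 - t.q 2) + s + β

/-- The centres of four of the vertices closing the walks. -/
def base (s : G) : List G := [t.p 2 - s, t.q 0 + a - s, t.p 1 - a, t.p 0]

/-- The walks have `k - 3` edges and end points in general position. -/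
structure Valid (k : ℕ) : Prop where
  isWalk : ∀ i, IsWalk (k - 3) (t.q i) (t.p i) (t.W i)
  good₁₀ : Good (t.p 1 - a - t.p 0)
  good₂₀ : Good (t.p 2 - (t.q 0 + a))
  not_dbl₂₁ : ¬ Dbl (t.q 2 + a - t.q 1)

/-- Closing the first walk with the colour `τ` leaves the triple in general position. -/
def Closable (τ : G) : Prop :=
  GeneralPosition a (t.base a (t.shift₀ a τ)) [t.shift₀ a τ, 0]

variable {t a}

theorem Valid.generic_closable {k : ℕ} (ht : t.Valid a k) : Generic 6 (t.Closable a) := by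
  have h₀ : GeneralPosition a [t.p 1 - a, t.p 0] [0] := ⟨by simpa using ht.good₁₀, by simp⟩
  refine Generic.add_left (P := fun s => GeneralPosition a (t.base a s) [s, 0])
    (((h₀.generic_cons_sub (t.q 0 + a)).and
      ((generic_good_sub [t.p 1 - a, t.p 0]).sub_left (t.p 2))).mono fun s hs => ?_)
      (a - (t.p 0 - t.q 0))
  refine ⟨hs.1.vertices.cons (List.forall_mem_cons.2 ⟨?_, hs.2⟩), hs.1.bundles⟩
  rw [sub_sub_sub_cancel_right]
  exact ht.good₂₀

variable (t) in
/-- The vertices closing the walks, if the bundles involved are the ones of `x`, `s + x`, `l + x`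
and `u + x`. -/
def closingVertices (a s l u x : G) : Multiset G :=
  {t.q 1 + l + x} + {t.q 2 + a - u - x} + {t.p 2 - s - x} + {t.q 0 + a - s - x} +
    {t.p 1 - a + x} + {t.p 0 - x}

variable (t) in
/-- The closing vertices as functions of `x`. -/
def closingForms (a s l u : G) : List (Form G) :=
  [.vp (t.q 1 + l), .vm (t.q 2 + a - u), .vm (t.p 2 - s), .vm (t.q 0 + a - s), .vp (t.p 1 - a),
    .vm (t.p 0)]

theorem evals_closingForms (t : Triple G) (a s l u x : G) :
    Form.evals (t.closingForms a s l u) x = (t.closingVertices a s l u x).map vx := by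
  simp only [closingForms, closingVertices, Form.evals_cons, Form.evals_nil, Form.eval,
    Multiset.map_add, Multiset.map_singleton]
  abel

theorem total_add_mem_closedWalks {k : ℕ} (hk : 3 ≤ k)
    (ht : ∀ i, IsWalk (k - 3) (t.q i) (t.p i) (t.W i)) (x : G) {s u l τ α β : G}
    (hs : s = t.shift₀ a τ) (hl : l = t.shift₁ a α) (hu : u = t.shift₂ a s β) :
    t.total + {cl τ} + {cl α} + {cl β} + (t.closingVertices a s l u x).map vx +
      ({cl x} + {cl (a - x)} + {cl (s + x)} + {cl (a - (s + x))} + {cl (l + x)} +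
        {cl (a - (u + x))}) ∈ closedWalks G k := by
  have h₀ := (ht 0).close hk (y₁ := t.p 0 - x) (y₂ := t.q 0 + a - s - x) (c₁ := x) (c₂ := τ)
    (c₃ := a - (s + x)) (by abel) (by rw [hs, shift₀]; abel) (by abel)
  have h₁ := (ht 1).close hk (y₁ := t.p 1 - a + x) (y₂ := t.q 1 + l + x) (c₁ := a - x) (c₂ := α)
    (c₃ := l + x) (by abel) (by rw [hl, shift₁]; abel) (by abel)
  have h₂ := (ht 2).close hk (y₁ := t.p 2 - s - x) (y₂ := t.q 2 + a - u - x) (c₁ := s + x)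
    (c₂ := β) (c₃ := a - (u + x)) (by abel) (by rw [hu, shift₂]; abel) (by abel)
  convert add_mem (add_mem h₀ h₁) h₂ using 1
  simp only [total, Fin.sum_univ_three, closingVertices, Multiset.map_add, Multiset.map_singleton]
  abel

end Triple

variable [Fintype G] [DecidableEq G] {R S : Multiset (G ⊕ G)} {c k : ℕ} {a : G}

open Triple in
theorem Rich.exists_ladder_step (hR : Rich R c) (hS : S ≤ R) (ha : ¬ Dbl a) (hk : 3 ≤ k)
    {t : Triple G} (ht : t.Valid a k) {τ α β s u l : G} (hs : s = t.shift₀ a τ)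
    (hl : l = t.shift₁ a α) (hu : u = t.shift₂ a s β)
    (hg : GeneralPosition a ((t.q 1 + l) :: (t.q 2 + a - u) :: t.base a s) [l, u, s, 0])
    {m n : ℕ} {P Q : G → Prop} (hP : Generic m P) (hQ : Generic n Q)
    (hc : S.card + 800 * (m + n) < c) :
    ∃ (A B : Multiset G) (α' γ' : G) (Y : Multiset (G ⊕ G)), A.card = 6 ∧ B.card = 4 ∧
      S + (A.map vx + B.bind (bundle a)) ≤ R ∧ B.bind (bundle a) = Y + {cl α'} + {cl γ'} ∧
      t.total + {cl τ} + {cl α} + {cl β} + A.map vx + Y ∈ closedWalks G k ∧ P α' ∧ Q γ' ∧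
      α' + γ' = α + β + τ + (4 • a - t.diff) := by
  obtain ⟨x, hx, hPx, hQx⟩ := hR.exists_generic_bundles hS ha _ (by simp)
    (Form.pairwise_compat (L := t.closingForms a s l u) hg.vertices)
    (by simp [Form.IsVertex]) hg.bundles ((hP.sub_left (a - l)).and (hQ.add_left u))
    hc
  refine ⟨t.closingVertices a s l u x, ([l, u, s, 0].map (· + x) : List G), a - l - x, u + x, _,
    rfl, rfl, ?_, ?_, total_add_mem_closedWalks hk ht.isWalk x hs hl hu, hPx, hQx, ?_⟩
  · rwa [← evals_closingForms]
  · simp only [List.map_cons, List.map_nil, ← Multiset.cons_coe, Multiset.cons_bind,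
      Multiset.coe_nil, Multiset.zero_bind, bundle, zero_add, sub_sub]
    abel
  · rw [hu, hl, hs, shift₂, shift₁, shift₀, diff, Fin.sum_univ_three]
    abel

open Triple in
theorem Rich.exists_ladder_end (hR : Rich R c) (hS : S ≤ R) (ha : ¬ Dbl a) (hk : 3 ≤ k)
    {t : Triple G} (ht : t.Valid a k) {α β γ s l : G} (hs : s = t.shift₀ a β)
    (hl : l = t.shift₁ a α) (hg : GeneralPosition a ((t.q 1 + l) :: t.base a s) [l, s, 0])
    (hg' : ∀ w ∈ t.base a s, Good (t.q 2 + a - l - w)) (hsum : α + β + γ = t.diff - 3 • a)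
    (hc : S.card < c) :
    ∃ A B : Multiset G, A.card = 6 ∧ B.card = 3 ∧ S + (A.map vx + B.bind (bundle a)) ≤ R ∧
      t.total + {cl α} + {cl β} + {cl γ} + A.map vx + B.bind (bundle a) ∈ closedWalks G k := by
  have hu : l = t.shift₂ a s γ := by
    rw [eq_sub_of_add_eq' hsum, hs, hl, shift₂, shift₁, shift₀, diff, Fin.sum_univ_three]
    abel
  have hd : ¬ Dbl (t.q 1 + l - (t.q 2 + a - l)) := fun h => ht.not_dbl₂₁ (h.neg_shift l (by abel))
  have hL : (t.closingForms a s l l).Pairwise Form.Compat := by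
    obtain ⟨hV, hb⟩ := List.pairwise_cons.1 hg.vertices
    refine .cons (List.forall_mem_cons.2 ⟨hd, fun f hf => ?_⟩) (Form.pairwise_compat (.cons hg' hb))
    exact Form.compat_of_good (hV _ (List.mem_map_of_mem hf))
  obtain ⟨x, hx, -⟩ := hR.exists_generic_bundles hS ha _ (by simp) hL
    (by simp [Form.IsVertex]) hg.bundles (n := 0) (P := fun _ => True) ⟨[], by simp⟩
    hc
  refine ⟨t.closingVertices a s l l x, _, rfl, rfl, by rwa [← evals_closingForms], ?_⟩
  convert total_add_mem_closedWalks hk ht.isWalk x hs hl hu using 1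
  simp only [List.map_cons, List.map_nil, ← Multiset.cons_coe, Multiset.cons_bind,
    Multiset.coe_nil, Multiset.zero_bind, bundle, zero_add]
  abel

end Triples

section Ladder

variable {G : Type*} [AddCommGroup G]

/-- A condition for `β` to be one of the three pending colours of the ladder `L`, with last triple
`e`: it closes the third walk of the first triple of `L`, or the first walk of `e`. -/
def BetaFits (a : G) (e : Triple G) : List (Triple G × G) → G → Prop
  | [], β => e.Closable a β
  | (t, τ) :: _, β =>
    GeneralPosition a ((t.q 2 + a - t.shift₂ a (t.shift₀ a τ) β) :: t.base a (t.shift₀ a τ))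
      [t.shift₂ a (t.shift₀ a τ) β, t.shift₀ a τ, 0]

/-- A condition for `α` to be another pending colour, closing the second walk of the first triple
of the ladder. -/
def AlphaFits (a : G) (e : Triple G) : List (Triple G × G) → G → G → Prop
  | [], β, α =>
    GeneralPosition a ((e.q 1 + e.shift₁ a α) :: e.base a (e.shift₀ a β))
      [e.shift₁ a α, e.shift₀ a β, 0] ∧
    ∀ w ∈ e.base a (e.shift₀ a β), Good (e.q 2 + a - e.shift₁ a α - w)
  | (t, τ) :: _, β, α =>
    GeneralPosition a ((t.q 1 + t.shift₁ a α) ::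
      (t.q 2 + a - t.shift₂ a (t.shift₀ a τ) β) :: t.base a (t.shift₀ a τ))
      [t.shift₁ a α, t.shift₂ a (t.shift₀ a τ) β, t.shift₀ a τ, 0]

variable {a : G} {e : Triple G} {L : List (Triple G × G)} {k : ℕ}

theorem generic_betaFits (he : e.Valid a k) (hL : ∀ t ∈ L, t.1.Closable a t.2) :
    Generic 8 (BetaFits a e L) := by
  rcases L with _ | ⟨⟨t, τ⟩, L⟩
  · obtain ⟨E, hE, h⟩ := he.generic_closable
    exact ⟨E, by lia, h⟩
  · exact ((hL _ List.mem_cons_self).generic_cons_sub (t.q 2 + a)).add_left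
      (P := fun u => GeneralPosition a ((t.q 2 + a - u) :: t.base a _) [u, _, 0]) _

theorem generic_alphaFits {β : G} (hβ : BetaFits a e L β) : Generic 12 (AlphaFits a e L β) := by
  rcases L with _ | ⟨⟨t, τ⟩, L⟩
  · exact ((hβ.generic_cons_add (e.q 1)).and
      ((generic_good_sub (e.base a (e.shift₀ a β))).sub_left (e.q 2 + a))).sub_left
      (P := fun l => GeneralPosition a ((e.q 1 + l) :: e.base a _) [l, _, 0] ∧
        ∀ w ∈ e.base a (e.shift₀ a β), Good (e.q 2 + a - l - w)) _
  · obtain ⟨E, hE, h⟩ := (hβ.generic_cons_add (t.q 1)).sub_left (t.p 1 - t.q 1 - a)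
    exact ⟨E, hE.trans (by simp [Triple.base]), h⟩

/-- The sum that the pending colours of a ladder must have. -/
def ladderSum (a : G) (e : Triple G) (L : List (Triple G × G)) : G :=
  e.diff - 3 • a + (L.map fun t => t.1.diff - t.2 - 4 • a).sum

variable [Fintype G] [DecidableEq G] {R S : Multiset (G ⊕ G)} {c : ℕ}

theorem Rich.exists_ladder (hR : Rich R c) (hS : S ≤ R) (ha : ¬ Dbl a) (hk : 3 ≤ k)
    (he : e.Valid a k) (hL : ∀ t ∈ L, t.1.Valid a k ∧ t.1.Closable a t.2) {α β γ : G}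
    (hβ : BetaFits a e L β) (hα : AlphaFits a e L β α) (hγ : BetaFits a e L.tail γ)
    (hsum : α + β + γ = ladderSum a e L) (hc : S.card + 14 * L.length + 16000 < c) :
    ∃ A B : Multiset G, A.card = 6 * L.length + 6 ∧ B.card = 4 * L.length + 3 ∧
      S + (A.map vx + B.bind (bundle a)) ≤ R ∧
      e.total + (L.map fun t => t.1.total + {cl t.2}).sum + {cl α} + {cl β} + {cl γ} +
        A.map vx + B.bind (bundle a) ∈ closedWalks G k := by
  induction L generalizing α β γ S with
  | nil =>
    obtain ⟨A, B, hA, hB, hAB, hw⟩ := hR.exists_ladder_end hS ha hk he rfl rfl hα.1 hα.2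
      (by simpa [ladderSum] using hsum) (by lia)
    exact ⟨A, B, by simpa, by simpa, hAB, by simpa using hw⟩
  | cons t L ih =>
    obtain ⟨t, τ⟩ := t
    obtain ⟨⟨ht, -⟩, hL⟩ := List.forall_mem_cons.1 hL
    obtain ⟨A, B, α', γ', Y, hA, hB, hAB, hY, hw, hα', hγ', hsum'⟩ := hR.exists_ladder_step hS ha hk
      ht rfl rfl rfl hα (generic_alphaFits hγ)
      (generic_betaFits he fun t ht => (hL t (List.mem_of_mem_tail ht)).2) (by lia)
    have hcard : (A.map vx + B.bind (bundle a)).card = 14 := by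
      simp [bundle, Multiset.card_bind, hA, hB, Function.comp_def]
    obtain ⟨A', B', hA', hB', hAB', hw'⟩ := ih hAB hL hγ hα' hγ' (by
        rw [add_right_comm, hsum', ladderSum, ← add_sub_cancel_right γ (α + β), ← add_comm (α + β),
          hsum, ladderSum, List.map_cons, List.sum_cons]
        abel) (by rw [List.length_cons] at hc; rw [Multiset.card_add, hcard]; lia)
    refine ⟨A + A', B + B', by simp; lia, by simp; lia, ?_, ?_⟩
    · rw [Multiset.map_add, Multiset.add_bind, add_add_add_comm, ← add_assoc]
      exact hAB'
    · convert add_mem hw hw' using 1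
      rw [Multiset.map_add, Multiset.add_bind, hY, List.map_cons, List.sum_cons]
      abel

end Ladder

section LadderPlan

variable {G : Type*} [AddCommGroup G] [Fintype G] [DecidableEq G]
  {R S : Multiset (G ⊕ G)} {c k : ℕ} {a : G}

theorem Rich.exists_triple (hR : Rich R c) (hS : S ≤ R) (hk : 3 ≤ k)
    (hc : S.card + 2000 * k ≤ c) :
    ∃ t : Triple G, t.Valid a k ∧ t.total.card ≤ 9 * k ∧ S + t.total ≤ R := by
  obtain ⟨p₀, h₀, -⟩ := hR.exists_add_vx_le hS [] [] (by simp; lia)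
  obtain ⟨q₀, W₀, hW₀, h₀, hw₀, -⟩ := hR.exists_walk h₀ hk (avoid_nil p₀) (by simp; lia)
  obtain ⟨p₁, h₁, hp₁⟩ := hR.exists_add_vx_le h₀ [p₀ + a] [p₀ + a] (by simp; lia)
  obtain ⟨q₁, W₁, hW₁, h₁, hw₁, -⟩ := hR.exists_walk h₁ hk (avoid_nil p₁) (by simp; lia)
  obtain ⟨p₂, h₂, hp₂⟩ := hR.exists_add_vx_le h₁ [q₀ + a] [q₀ + a, q₁ - a] (by simp; lia)
  obtain ⟨q₂, W₂, hW₂, h₂, hw₂, hq₂⟩ := hR.exists_walk h₂ hk (E := []) (D := [q₁ - a])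
    ⟨by simp, fun z hz => hp₂.2 z (List.mem_cons_of_mem _ hz)⟩ (by simp; lia)
  refine ⟨⟨![p₀, p₁, p₂], ![q₀, q₁, q₂], ![W₀, W₁, W₂]⟩, ⟨?_, ?_, ?_, ?_⟩, ?_, ?_⟩
  · simpa [Fin.forall_fin_succ] using ⟨hw₀, hw₁, hw₂⟩
  · simpa [sub_sub, add_comm] using hp₁.good _ (List.mem_singleton_self _)
  · exact ⟨sub_ne_zero.2 (hp₂.1 _ (List.mem_singleton_self _)), hp₂.2 _ List.mem_cons_self⟩
  · simpa [sub_sub_eq_add_sub] using hq₂.2 _ (List.mem_singleton_self _)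
  · simp [Triple.total, Fin.sum_univ_three]; lia
  · convert h₂ using 1
    simp only [Triple.total, Fin.sum_univ_three]
    dsimp
    abel

theorem Rich.exists_ladder_colours (hR : Rich R c) (hS : S ≤ R) {t₀ t₁ e : Triple G}
    (h₀ : t₀.Valid a k) (h₁ : t₁.Valid a k) (he : e.Valid a k) (σ : G)
    (hc : S.card + 20000 ≤ c) :
    ∃ d₀ d₁ α β γ : G, t₀.Closable a d₀ ∧ t₁.Closable a d₁ ∧
      BetaFits a e [(t₀, d₀), (t₁, d₁)] β ∧ AlphaFits a e [(t₀, d₀), (t₁, d₁)] β α ∧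
      BetaFits a e [(t₁, d₁)] γ ∧ α + β + γ = σ - d₀ - d₁ ∧
      S + ({cl d₀} + {cl d₁} + {cl α} + {cl β} + {cl γ}) ≤ R := by
  obtain ⟨d₀, hd₀, hg₀⟩ := hR.exists_generic_colour hS h₀.generic_closable (by lia)
  obtain ⟨d₁, hd₁, hg₁⟩ := hR.exists_generic_colour hd₀ h₁.generic_closable (by simp; lia)
  have hL₁ : ∀ t ∈ [(t₁, d₁)], t.1.Closable a t.2 := by simpa using hg₁
  have hL : ∀ t ∈ [(t₀, d₀), (t₁, d₁)], t.1.Closable a t.2 := by simpa using ⟨hg₀, hg₁⟩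
  obtain ⟨β, hβR, hβ, hβσ⟩ := hR.exists_generic_colour hd₁
    ((generic_betaFits he hL).and (generic_good_sub [σ - d₀ - d₁])) (by simp; lia)
  have hcompat : [Form.cp 0, .cm (σ - d₀ - d₁ - β)].Pairwise Form.Compat := by
    simpa [Form.Compat] using (hβσ _ (List.mem_singleton_self _)).2
  obtain ⟨α, hαR, hα, hγ⟩ := hR.exists_generic_evals hβR _ _ (by simp) hcompat
    ((generic_alphaFits hβ).and ((generic_betaFits he hL₁).sub_left (σ - d₀ - d₁ - β)))
    (by simp; lia)
  refine ⟨d₀, d₁, α, β, _, hg₀, hg₁, hβ, hα, hγ, by abel, ?_⟩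
  convert hαR using 1
  simp only [Form.evals_cons, Form.evals_nil, Form.eval, zero_add]
  abel

end LadderPlan

section Rungs

theorem sum_range_singleton {α : Type*} (n : ℕ) (f : ℕ → α) :
    ∑ i ∈ Finset.range n, ({f i} : Multiset α) = (Multiset.range n).map f := by
  rw [← Multiset.sum_map_singleton ((Multiset.range n).map f), Multiset.map_map]
  rfl

variable {α β γ : Type*}

/-- The rungs of a ladder which absorbs the colours `τ`. -/
def rungs (t : ℕ → α) (τ : ℕ → β) (d₀ d₁ : β) (M : ℕ) : List (α × β) :=
  (t 0, d₀) :: (t 1, d₁) :: (List.range M).map fun i => (t (i + 2), τ i)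

variable {t : ℕ → α} {τ : ℕ → β} {d₀ d₁ : β} {M : ℕ}

theorem length_rungs : (rungs t τ d₀ d₁ M).length = M + 2 := by simp [rungs]

theorem forall_mem_rungs {p : α × β → Prop} (h₀ : p (t 0, d₀)) (h₁ : p (t 1, d₁))
    (h : ∀ i < M, p (t (i + 2), τ i)) : ∀ r ∈ rungs t τ d₀ d₁ M, p r := by
  simpa [rungs] using ⟨h₀, h₁, h⟩

theorem sum_map_rungs [AddCommMonoid γ] (f : α × β → γ) : ((rungs t τ d₀ d₁ M).map f).sum =
    f (t 0, d₀) + (f (t 1, d₁) + ∑ i ∈ Finset.range M, f (t (i + 2), τ i)) := by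
  rw [rungs, List.map_cons, List.map_cons, List.sum_cons, List.sum_cons, List.map_map]
  rfl

end Rungs

section LadderPlan

variable {G : Type*} [AddCommGroup G] [Fintype G] [DecidableEq G]
  {R S : Multiset (G ⊕ G)} {c k : ℕ} {a : G}

theorem Rich.exists_triples (hR : Rich R c) (hS : S ≤ R) (hk : 3 ≤ k) (n : ℕ)
    (hc : S.card + n * (9 * k) + 2000 * k ≤ c) :
    ∃ t : ℕ → Triple G, (∀ i < n, (t i).Valid a k) ∧
      (∑ i ∈ Finset.range n, (t i).total).card ≤ n * (9 * k) ∧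
      S + ∑ i ∈ Finset.range n, (t i).total ≤ R := by
  obtain ⟨T, hT, hcard, ht⟩ := exists_add_sum_le (s := Finset.range n) (b := 9 * k)
    (N := c - 2000 * k) (P := fun _ T => ∃ t : Triple G, t.Valid a k ∧ t.total = T) hS
    (by rw [Finset.card_range]; lia) fun i _ Y hY hYc => by
      obtain ⟨t, ht, htc, htR⟩ := hR.exists_triple hY hk (by lia)
      exact ⟨t.total, htR, htc, t, ht, rfl⟩
  have : Nonempty (Triple G) := ⟨0, 0, 0⟩
  choose! t ht htT using ht
  rw [← Finset.sum_congr rfl htT] at hT hcard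
  exact ⟨t, fun i hi => ht i (Finset.mem_range.2 hi), by simpa using hcard, hT⟩

theorem Rich.exists_ladder_of_rungs (hR : Rich R c) (hS : S ≤ R) (ha : ¬ Dbl a) (hk : 3 ≤ k)
    {M : ℕ} {t : ℕ → Triple G} (ht : ∀ i < M + 3, (t i).Valid a k) {d₀ d₁ α β γ : G}
    (h₀ : (t 0).Closable a d₀) (h₁ : (t 1).Closable a d₁)
    (hβ : BetaFits a (t (M + 2)) [(t 0, d₀), (t 1, d₁)] β)
    (hα : AlphaFits a (t (M + 2)) [(t 0, d₀), (t 1, d₁)] β α)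
    (hγ : BetaFits a (t (M + 2)) [(t 1, d₁)] γ) {T : Multiset G} (hT : T.card = M)
    (hTt : ∀ τ ∈ T, ∀ i ∈ Finset.range M, (t (i + 2)).Closable a τ)
    (hsum : α + β + γ = (t (M + 2)).diff - 3 • a +
      ∑ i ∈ Finset.range (M + 2), ((t i).diff - 4 • a) - T.sum - d₀ - d₁)
    (hc : S.card + 14 * M + 20000 ≤ c) :
    ∃ A B : Multiset G, A.card = 6 * M + 18 ∧ B.card = 4 * M + 11 ∧
      S + (A.map vx + B.bind (bundle a)) ≤ R ∧
      ∑ i ∈ Finset.range (M + 3), (t i).total + ({cl d₀} + {cl d₁} + {cl α} + {cl β} + {cl γ}) +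
        T.map cl + A.map vx + B.bind (bundle a) ∈ closedWalks G k := by
  obtain ⟨τ, hτ⟩ := exists_map_range_eq T
  rw [hT] at hτ
  have hrungs : ∀ r ∈ rungs t τ d₀ d₁ M, r.1.Valid a k ∧ r.1.Closable a r.2 :=
    forall_mem_rungs ⟨ht 0 (by lia), h₀⟩ ⟨ht 1 (by lia), h₁⟩ fun i hi => ⟨ht _ (by lia), hTt _
      (hτ ▸ Multiset.mem_map_of_mem τ (Multiset.mem_range.2 hi)) i (Finset.mem_range.2 hi)⟩
  have hTsum : T.sum = ∑ i ∈ Finset.range M, τ i := congrArg Multiset.sum hτ.symm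
  have hTcl : T.map cl = ∑ i ∈ Finset.range M, {cl (τ i)} := by
    rw [sum_range_singleton, ← hτ, Multiset.map_map, Function.comp_def]
  have hladder : α + β + γ = ladderSum a (t (M + 2)) (rungs t τ d₀ d₁ M) := by
    rw [hsum, ladderSum, sum_map_rungs, hTsum, Finset.sum_range_succ', Finset.sum_range_succ']
    simp only [Finset.sum_sub_distrib]
    abel
  obtain ⟨A, B, hA, hB, hAB, hw⟩ := hR.exists_ladder hS ha hk (ht (M + 2) (by lia)) hrungs hβ hα hγ
    hladder (by rw [length_rungs]; lia)
  refine ⟨A, B, by rw [hA, length_rungs]; lia, by rw [hB, length_rungs]; lia, hAB, ?_⟩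
  convert hw using 1
  rw [sum_map_rungs, Finset.sum_range_succ, Finset.sum_range_succ', Finset.sum_range_succ',
    Finset.sum_add_distrib, hTcl]
  dsimp only
  abel

theorem Rich.exists_ladder_plan (hR : Rich R c) (hS : S ≤ R) (ha : ¬ Dbl a) (hk : 3 ≤ k) (M : ℕ)
    (hc : S.card + (M + 3) * (9 * k) + 30000 * k ≤ c) :
    ∃ (P : Multiset (G ⊕ G)) (Q : G → Prop), Generic (6 * M) Q ∧
      P.card ≤ (M + 3) * (9 * k) + 5 ∧ S + P ≤ R ∧
      ∀ T : Multiset G, T.card = M → T.sum = M • a → (∀ τ ∈ T, Q τ) →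
      ∀ {F X : Multiset (G ⊕ G)} {c' : ℕ}, Rich F c' → X ≤ F → X.card + 14 * M + 20000 ≤ c' →
      ∃ A B : Multiset G, A.card = 6 * M + 18 ∧ B.card = 4 * M + 11 ∧
        X + (A.map vx + B.bind (bundle a)) ≤ F ∧
        P + T.map cl + A.map vx + B.bind (bundle a) ∈ closedWalks G k := by
  obtain ⟨t, ht, htc, htR⟩ := hR.exists_triples (a := a) hS hk (M + 3) (by lia)
  obtain ⟨d₀, d₁, α, β, γ, h₀, h₁, hβ, hα, hγ, hsum, hcol⟩ := hR.exists_ladder_colours htR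
    (ht 0 (by lia)) (ht 1 (by lia)) (ht (M + 2) (by lia)) ((t (M + 2)).diff - 3 • a +
      ∑ i ∈ Finset.range (M + 2), ((t i).diff - 4 • a) - M • a)
    (by rw [Multiset.card_add]; lia)
  have hgen : ∀ i ∈ Finset.range M, Generic 6 ((t (i + 2)).Closable a) := fun i hi =>
    (ht (i + 2) (by rw [Finset.mem_range] at hi; lia)).generic_closable
  refine ⟨_, fun x => ∀ i ∈ Finset.range M, (t (i + 2)).Closable a x,
    by simpa [mul_comm] using Generic.ball hgen, ?_, (add_assoc S _ _).symm.trans_le hcol, ?_⟩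
  · rw [Multiset.card_add]
    exact add_le_add htc (by simp)
  · intro T hT hTs hTQ F X c' hF hX hc'
    rw [← hTs] at hsum
    exact hF.exists_ladder_of_rungs hX ha hk ht h₀ h₁ hβ hα hγ hT hTQ hsum hc'

end LadderPlan

section Start

variable {G : Type*} [AddCommGroup G] {a : G}

theorem map_cl_add_map_cl_sub (a : G) (s : Multiset G) :
    s.map cl + s.map (fun y => cl (a - y)) = s.bind (bundle a) :=
  .trans (by rw [Multiset.bind_singleton, Multiset.bind_singleton])
    (Multiset.bind_add s (fun y => {cl y}) fun y => {cl (a - y)}).symm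

theorem sum_map {ι α β : Type*} (s : Finset ι) (f : ι → Multiset α) (g : α → β) :
    ∑ i ∈ s, (f i).map g = (∑ i ∈ s, f i).map g :=
  (map_sum (Multiset.mapAddMonoidHom g) f s).symm

theorem sum_bind {ι α β : Type*} (s : Finset ι) (f : ι → Multiset α) (g : α → Multiset β) :
    ∑ i ∈ s, (f i).bind g = (∑ i ∈ s, f i).bind g := by
  induction s using Finset.cons_induction with
  | empty => rfl
  | cons i s hi ih => rw [Finset.sum_cons, Finset.sum_cons, ih, Multiset.add_bind]

theorem card_bind_bundle (a : G) (s : Multiset G) : (s.bind (bundle a)).card = 2 * s.card := by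
  simp [Multiset.card_bind, bundle, Function.comp_def, mul_comm]

/-- The vertices and the bundles of colours which turn a walk from `v` to `q` into a cycle through
the vertex `v` and the colour `t`. -/
def startForms (a v t q : G) : List (Form G) :=
  [.vp 0, .vp (-t), .cm v, .cp (a - v), .cp (-t - q), .cm (a + t + q)]

theorem pairwise_startForms {v t q : G} (ha : ¬ Dbl a) (ht : t ≠ 0) (h : v - q ≠ a + t) :
    (startForms a v t q).Pairwise fun f g =>
      f.Compat g ∨ ∀ x, x + x ≠ v + t + q → f.eval x ≠ g.eval x := by
  have hcm : ∀ x, x + x ≠ v + t + q → v - x ≠ -t - q + x := fun x hx h => hx (by grind)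
  have hcp : ∀ x, x + x ≠ v + t + q → a - v + x ≠ a + t + q - x := fun x hx h => hx (by grind)
  have hva : ¬ Dbl (v - (a - v)) := fun h => ha (h.neg_shift v (by abel))
  have hqa : ¬ Dbl (-t - q - (a + t + q)) := fun h => ha (h.neg_shift (-t - q) (by abel))
  have hv : v ≠ a + t + q := fun hv => h (by grind)
  have hav : a - v ≠ -t - q := fun hav => h (by grind)
  simpa [startForms, Form.Compat, Form.eval] using ⟨Or.inl ht, ⟨Or.inl hva, Or.inr hcm, Or.inl hv⟩,
    ⟨Or.inl hav, Or.inr hcp⟩, Or.inl hqa⟩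

variable [Fintype G] [DecidableEq G] {R S : Multiset (G ⊕ G)} {c k : ℕ}

theorem card_le_card_nodup_evals_startForms {v t q : G} (ha : ¬ Dbl a) (ht : t ≠ 0)
    (h₁ : v - q ≠ t) (h₂ : v - q ≠ a + t) :
    Fintype.card G ≤ 4 * #{x : G | (Form.evals (startForms a v t q) x).Nodup} := by
  have hhalf : #{x : G | x + x = v + t + q} ≤ Fintype.card G / 2 := by
    by_cases h : ∃ y : G, y + y ≠ 0
    · exact card_filter_add_self_eq_le_half (Or.inr h.choose_spec)
    · push Not at h
      refine card_filter_add_self_eq_le_half (y := 0) (Or.inl fun h' => h₁ ?_)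
      calc v - q = v + t + q - (q + q) - t := by abel
        _ = t := by rw [h', h, sub_zero, zero_sub, neg_eq_of_add_eq_zero_left (h t)]
  set s : Finset G := {x | x + x ≠ v + t + q} with hs
  have hbad := Form.card_filter_not_nodup_evals_le (l := startForms a v t q) (s := s)
    (b := Fintype.card G / 400) ((pairwise_startForms ha ht h₂).imp fun {f g} h => ?_)
  · have hcard := Finset.card_filter_add_card_filter_not (s := (Finset.univ : Finset G))
      fun x => x + x = v + t + q
    have hcard' := Finset.card_filter_add_card_filter_not (s := s)
      fun x => (Form.evals (startForms a v t q) x).Nodup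
    have hle := Finset.card_le_card (Finset.filter_subset_filter
      (fun x => (Form.evals (startForms a v t q) x).Nodup) s.subset_univ)
    rw [Finset.card_univ] at hcard
    simp only [startForms, List.length_cons, List.length_nil] at hbad hle hcard' ⊢
    lia
  · obtain h | h := h
    · exact (Finset.card_le_card (Finset.filter_subset_filter _ s.subset_univ)).trans
        h.card_eval_eq_le
    · rw [Finset.filter_false_of_mem fun x hx => h x (by simpa [hs] using hx)]
      exact zero_le

theorem Rich.exists_start (hR : Rich R c) (hS : S ≤ R) (ha : ¬ Dbl a) (hk : 3 ≤ k) {v t : G}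
    (ht : t ≠ 0) (hta : a + t ≠ 0) (hc : S.card + 4 * k ≤ c) :
    ∃ A B : Multiset G, A.card = k - 1 ∧ B.card = k - 1 ∧
      S + (A.map vx + B.bind (bundle a)) ≤ R ∧
      {vx v} + {cl t} + A.map vx + B.map cl ∈ closedWalks G k := by
  have hbad : #{q : G | ¬ (v - q ≠ t ∧ v - q ≠ a + t)} ≤ 2 :=
    (Finset.card_le_card (t := {v - t, v - (a + t)}) fun q hq => by
      simp only [Finset.mem_filter_univ, Finset.mem_insert, Finset.mem_singleton] at hq ⊢
      grind).trans Finset.card_le_two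
  obtain ⟨q, A, B, hA, hB, hle, hW, hq₁, hq₂⟩ := hR.exists_walk_mates hS ha (p := v)
    (P := fun q => v - q ≠ t ∧ v - q ≠ a + t) (by simp [ht.symm, hta.symm]) (k - 3) (by lia)
  obtain ⟨x, hx, -⟩ := hR.exists_add_evals_le_of_card hle (P := fun _ => True) _ _ (by simp)
    (by simp [hA, hB]; lia) (card_le_card_nodup_evals_startForms ha ht hq₁ hq₂)
  refine ⟨A + {x} + {-t + x}, B + {v - x} + {-t - q + x}, by simp [hA]; lia, by simp [hB]; lia,
    ?_, ?_⟩
  · convert hx using 1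
    rw [← map_cl_add_map_cl_sub]
    simp only [Multiset.map_add, Multiset.map_singleton, Form.evals_cons, Form.evals_nil,
      Form.eval, zero_add, show a - (v - x) = a - v + x by abel,
      show a - (-t - q + x) = a + t + q - x by abel]
    abel
  · convert hW.close hk (y₁ := x) (y₂ := -t + x) (c₁ := v - x) (c₂ := t) (c₃ := -t - q + x) rfl
      (by abel) (by abel) using 1
    simp only [Multiset.map_add, Multiset.map_singleton]
    abel

theorem Rich.exists_starts (hR : Rich R c) (hS : S ≤ R) (ha : ¬ Dbl a) (hk : 3 ≤ k)
    {ι : Type*} (s : Finset ι) {v t : ι → G} (ht : ∀ i ∈ s, t i ≠ 0 ∧ a + t i ≠ 0)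
    (hc : S.card + #s * (3 * k) + 4 * k ≤ c) :
    ∃ A B : Multiset G, A.card = #s * (k - 1) ∧ B.card = #s * (k - 1) ∧
      S + (A.map vx + B.bind (bundle a)) ≤ R ∧
      ∑ i ∈ s, ({vx (v i)} + {cl (t i)}) + A.map vx + B.map cl ∈ closedWalks G k := by
  obtain ⟨T, hT, -, h⟩ := exists_add_sum_le (s := s) (b := 3 * k) (N := c - 4 * k)
    (P := fun i T => ∃ A B : Multiset G, A.map vx + B.bind (bundle a) = T ∧ A.card = k - 1 ∧
      B.card = k - 1 ∧ {vx (v i)} + {cl (t i)} + A.map vx + B.map cl ∈ closedWalks G k) hS (by lia)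
    fun i hi Y hY hYc => by
      obtain ⟨A, B, hA, hB, hAB, hw⟩ := hR.exists_start hY ha hk (v := v i) (ht i hi).1 (ht i hi).2
        (by lia)
      refine ⟨_, hAB, ?_, A, B, rfl, hA, hB, hw⟩
      rw [Multiset.card_add, Multiset.card_map, card_bind_bundle, hA, hB]
      lia
  choose! A B hAB hA hB hw using h
  refine ⟨∑ i ∈ s, A i, ∑ i ∈ s, B i, ?_, ?_, ?_, ?_⟩
  · rw [Multiset.card_sum, Finset.sum_const_nat hA]
  · rw [Multiset.card_sum, Finset.sum_const_nat hB]
  · rwa [← sum_map, ← sum_bind, ← Finset.sum_add_distrib, Finset.sum_congr rfl hAB]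
  · convert sum_mem hw using 1
    simp only [Finset.sum_add_distrib, sum_map]

end Start

section Absorber

variable {G : Type*} [AddCommGroup G] [Fintype G]

theorem card_filter_not_good_le : #{x : G | ¬ Good x} ≤ 800 := by
  refine (Finset.card_le_card fun x hx => ?_).trans (card_filter_not_avoid_le [0] [0])
  rw [Finset.mem_filter_univ] at hx ⊢
  exact fun h => hx (by simpa using h.good 0 (by simp))

theorem Generic.card_filter_not_le {n : ℕ} {P : G → Prop} (hP : Generic n P) :
    #{x | ¬ P x} ≤ 800 * n := by
  obtain ⟨E, hE, hP⟩ := hP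
  refine (Finset.card_le_card (t := {x | ¬ Avoid E E x}) fun x hx => ?_).trans
    ((card_filter_not_avoid_le E E).trans (by lia))
  rw [Finset.mem_filter_univ] at hx ⊢
  exact fun h => hx (hP x h.good)

variable [DecidableEq G] {R S : Multiset (G ⊕ G)} {c k : ℕ} {a : G}

theorem Rich.sub (hR : Rich R c) (D : Multiset (G ⊕ G)) : Rich (R - D) (c - D.card) where
  nodup := Multiset.nodup_of_le (Multiset.sub_le_self R D) hR.nodup
  good g hg := hR.good g (Multiset.mem_of_le (Multiset.sub_le_self R D) hg)
  exists_evals_le_sub l hl hn X hX := by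
    rw [← Multiset.sub_add_eq_sub_sub]
    exact hR.exists_evals_le_sub l hl hn (D + X) (by rw [Multiset.card_add]; lia)

theorem Rich.exists_generic_starts (hR : Rich R c) (ha : ¬ Dbl a) (hk : 3 ≤ k) {n : ℕ}
    {Q : G → Prop} (hQ : Generic n Q) {V C : Multiset G} (hVC : V.card = C.card)
    (hC : ∀ t ∈ C, t ≠ 0 ∧ a + t ≠ 0) (hc : 800 * n + C.card * (3 * k) + 4 * k ≤ c) :
    ∃ A B : Multiset G, A.card = C.card * (k - 1) ∧ B.card = C.card * (k - 1) ∧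
      A.map vx + B.bind (bundle a) ≤ R ∧ (∀ y ∈ B, Q (a - y)) ∧
      V.map vx + C.map cl + A.map vx + B.map cl ∈ closedWalks G k := by
  obtain ⟨v, hv⟩ := exists_map_range_eq V
  obtain ⟨t, ht⟩ := exists_map_range_eq C
  rw [hVC] at hv
  set D : Multiset (G ⊕ G) := (Finset.univ.filter fun x => ¬ Q x).val.map cl
  have hD : D.card ≤ 800 * n := (Multiset.card_map _ _).trans_le hQ.card_filter_not_le
  obtain ⟨A, B, hA, hB, hAB, hw⟩ := (hR.sub D).exists_starts (Multiset.zero_le _) ha hk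
    (Finset.range C.card) (v := v) (t := t) (fun i hi => hC _
      (ht ▸ Multiset.mem_map_of_mem t (Multiset.mem_range.2 (Finset.mem_range.1 hi))))
    (by rw [Multiset.card_zero, Finset.card_range]; lia)
  rw [Finset.card_range] at hA hB
  rw [zero_add] at hAB
  refine ⟨A, B, hA, hB, hAB.trans (Multiset.sub_le_self R D), fun y hy => ?_, ?_⟩
  · have hmem : cl (a - y) ∈ R - D := Multiset.mem_of_le hAB
      (Multiset.mem_add.2 (Or.inr (Multiset.mem_bind.2 ⟨y, hy, by simp [bundle]⟩)))
    by_contra hy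
    exact ((Multiset.mem_sub_of_nodup hR.nodup).1 hmem).2
      (Multiset.mem_map_of_mem cl (Finset.mem_filter_univ _ |>.2 hy))
  · have hVC : V.map vx + C.map cl = ∑ i ∈ Finset.range C.card, ({vx (v i)} + {cl (t i)}) := by
      rw [Finset.sum_add_distrib, sum_range_singleton _ fun i => vx (v i),
        sum_range_singleton _ fun i => cl (t i)]
      exact congrArg₂ _ (by rw [← hv, Multiset.map_map]; rfl)
        (by conv_lhs => rw [← ht, Multiset.map_map, Function.comp_def])
    rwa [hVC]

theorem Rich.exists_absorber (hR : Rich R c) (hS : S ≤ R) (ha : ¬ Dbl a) (hk : 3 ≤ k) (m M : ℕ)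
    (hM : M = m * (k - 1)) (hc : S.card + (M + 3) * (9 * k) + 30000 * k ≤ c) :
    ∃ P : Multiset (G ⊕ G), P.card ≤ (M + 3) * (9 * k) + 5 ∧ S + P ≤ R ∧
      ∀ V C : Multiset G, V.card = m → C.card = m → C.sum = 0 → (∀ t ∈ C, t ≠ 0 ∧ a + t ≠ 0) →
      ∀ {F : Multiset (G ⊕ G)} {c' : ℕ}, Rich F c' → 5000 * M + m * (3 * k) + 20000 * k ≤ c' →
      ∃ A B : Multiset G, A.card = 7 * M + 18 ∧ B.card = 5 * M + 11 ∧
        A.map vx + B.bind (bundle a) ≤ F ∧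
        P + V.map vx + C.map cl + A.map vx + B.bind (bundle a) ∈ closedWalks G k := by
  obtain ⟨P, Q, hQ, hPcard, hP, h⟩ := hR.exists_ladder_plan hS ha hk M hc
  refine ⟨P, hPcard, hP, fun V C hV hC hC₀ hCa F c' hF hc' => ?_⟩
  obtain ⟨A, B, hA, hB, hAB, hQB, hw⟩ := hF.exists_generic_starts ha hk hQ (hV.trans hC.symm) hCa
    (by rw [hC]; lia)
  rw [hC, ← hM] at hA hB
  have hsum : B.sum = 0 := by simpa [hC₀] using colSum_eq_zero hw
  obtain ⟨A', B', hA', hB', hAB', hw'⟩ := h (B.map fun y => a - y) (by simpa using hB)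
    (by rw [Multiset.sum_map_sub, Multiset.map_const', Multiset.sum_replicate, Multiset.map_id',
      hsum, sub_zero, hB]) (Multiset.forall_mem_map_iff.2 hQB) hF hAB
    (by rw [Multiset.card_add, Multiset.card_map, card_bind_bundle, hA, hB]; lia)
  refine ⟨A + A', B + B', by rw [Multiset.card_add]; lia, by rw [Multiset.card_add]; lia, ?_, ?_⟩
  · rwa [Multiset.map_add, Multiset.add_bind, add_add_add_comm]
  · convert add_mem hw hw' using 1
    rw [Multiset.map_add, Multiset.add_bind, ← map_cl_add_map_cl_sub a B, Multiset.map_map,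
      Function.comp_def]
    abel

end Absorber

section Flexible

variable {α β G : Type*} [AddCommGroup G] {b : β → Multiset α} {e : β → α}

theorem nodup_map_of_nodup_bind (he : ∀ y, e y ∈ b y) {B : Multiset β} (h : (B.bind b).Nodup) :
    (B.map b).Nodup := by
  refine Multiset.nodup_iff_ne_cons_cons.2 fun s t hst => ?_
  obtain ⟨y, -, rfl⟩ := Multiset.mem_map.1 (hst ▸ Multiset.mem_cons_self s _)
  rw [Multiset.bind, hst, Multiset.join_cons, Multiset.join_cons, ← add_assoc] at h
  exact Multiset.disjoint_left.1 (Multiset.nodup_add.1 (Multiset.nodup_add.1 h).1).2.2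
    (he y) (he y)

theorem exists_transversal {F : Multiset α} (hF : F.Nodup) (he : ∀ y, e y ∈ b y)
    (hb : ∀ {x y z}, z ∈ b x → z ∈ b y → b x = b y) :
    ∃ D : Multiset β, D.bind b ≤ F ∧ ∀ B : Multiset β, B.bind b ≤ F →
      ∃ A E, D = A + E ∧ A.card = B.card ∧ A.bind b = B.bind b := by
  classical
  obtain ⟨D, -, hinj, hD⟩ := Finset.exists_subset_injOn_image_eq_of_surjOn (f := b) Set.univ
    {s ∈ F.powerset.toFinset | s ∈ Set.range b} fun s hs => by
      simpa using (Finset.mem_filter.1 hs).2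
  have hmem {s : Multiset α} : s ∈ D.image b ↔ s ≤ F ∧ s ∈ Set.range b := by
    rw [hD, Finset.mem_filter, Multiset.mem_toFinset, Multiset.mem_powerset]
  have hDF : ∀ y ∈ D, b y ≤ F := fun y hy => (hmem.1 (Finset.mem_image_of_mem b hy)).1
  have hn : (D.val.bind b).Nodup := Multiset.nodup_bind.2
    ⟨fun y hy => Multiset.nodup_of_le (hDF y hy) hF, D.nodup.pairwise fun x hx y hy hxy =>
      Multiset.disjoint_left.2 fun hzx hzy => hxy (hinj hx hy (hb hzx hzy))⟩
  refine ⟨D.val, (Multiset.le_iff_subset hn).2 fun z hz => ?_, fun B hB => ?_⟩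
  · obtain ⟨y, hy, hzy⟩ := Multiset.mem_bind.1 hz
    exact Multiset.mem_of_le (hDF y hy) hzy
  have hBn : (B.map b).Nodup := nodup_map_of_nodup_bind he (Multiset.nodup_of_le hB hF)
  have hmap : (D.filter fun y => b y ∈ B.map b).val.map b = B.map b := by
    refine (Multiset.Nodup.ext (Multiset.Nodup.map_on (fun x hx y hy h =>
      hinj (Finset.mem_filter.1 hx).1 (Finset.mem_filter.1 hy).1 h) (Finset.nodup _)) hBn).2
      fun s => Multiset.mem_map.trans
        ⟨fun ⟨y, hy, hys⟩ => hys ▸ (Finset.mem_filter.1 hy).2, fun hs => ?_⟩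
    obtain ⟨y, hy, rfl⟩ := Multiset.mem_map.1 hs
    obtain ⟨x, hx, hxy⟩ := Finset.mem_image.1 (hmem.2 ⟨(Multiset.le_bind B hy).trans hB, y, rfl⟩)
    exact ⟨x, Finset.mem_filter.2 ⟨hx, hxy ▸ hs⟩, hxy⟩
  obtain ⟨E, hE⟩ := Multiset.le_iff_exists_add.1
    (Finset.val_le_iff.2 (D.filter_subset fun y => b y ∈ B.map b))
  refine ⟨_, E, hE, ?_, congrArg Multiset.sum hmap⟩
  simpa only [Multiset.card_map] using congrArg Multiset.card hmap

theorem bundle_eq_of_mem {a x y : G} {z : G ⊕ G} (hx : z ∈ bundle a x) (hy : z ∈ bundle a y) :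
    bundle a x = bundle a y := by
  have h : x = y ∨ a - x = y := by
    simp only [bundle, Multiset.mem_add, Multiset.mem_singleton] at hx hy
    grind
  obtain rfl | rfl := h
  · rfl
  · rw [bundle, bundle, sub_sub_cancel, add_comm]

theorem map_vx_add_bind_bundle_le {F : Multiset (G ⊕ G)} {a : G} {V B : Multiset G}
    (hV : V.map vx ≤ F) (hB : B.bind (bundle a) ≤ F) : V.map vx + B.bind (bundle a) ≤ F := by
  classical
  rw [Multiset.add_eq_union_iff_disjoint.2 ?_]
  · exact Multiset.union_le hV hB
  · simp [Multiset.disjoint_left, bundle]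

variable [Fintype G] [DecidableEq G] {R S F : Multiset (G ⊕ G)} {a : G} {c c' k r : ℕ}

theorem Rich.exists_flexible (hR : Rich R c) (hS : S ≤ R) (hF : F ≤ S) (hk : 3 ≤ k)
    (ha : ¬ Dbl a) (hr : F.card ≤ 2 ^ (r + 1)) (M N : ℕ)
    (hc : S.card + 2 * ((r + 1) * (F.card + 1) * (2 + 300 * k)) + 30000 * k ≤ c) :
    ∃ X T, X ≤ F ∧ S + T ≤ R ∧ ∀ A B : Multiset G, A.card = M → B.card = N →
      A.map vx + B.bind (bundle a) ≤ F →
      ∃ Y, X = A.map vx + B.bind (bundle a) + Y ∧ T + Y ∈ closedWalks G k := by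
  have hFn := Multiset.nodup_of_le (hF.trans hS) hR.nodup
  obtain ⟨V₀, hV₀, hV⟩ := exists_transversal (b := fun v : G => {vx v}) (e := vx) hFn
    (by simp) (by simp)
  obtain ⟨B₀, hB₀, hB⟩ := exists_transversal (b := bundle a) (e := cl) hFn
    (by simp [bundle]) bundle_eq_of_mem
  rw [Multiset.bind_singleton] at hV₀
  have hVc : V₀.card ≤ F.card := by simpa using Multiset.card_le_card hV₀
  have hBc : B₀.card ≤ F.card := by
    have := Multiset.card_le_card hB₀
    rw [card_bind_bundle] at this
    lia
  have hc₁ : (r + 1) * (V₀.card + 1) * (2 + 300 * k) ≤ (r + 1) * (F.card + 1) * (2 + 300 * k) := by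
    gcongr
  have hc₂ : (r + 1) * (B₀.card + 1) * (2 + 300 * k) ≤ (r + 1) * (F.card + 1) * (2 + 300 * k) := by
    gcongr
  obtain ⟨T₁, hT₁, hT₁c, hw₁⟩ := hR.exists_vertex_concentrator hS hk (hV₀.trans hF)
    (hVc.trans hr) M (by lia)
  obtain ⟨T₂, hT₂, -, hw₂⟩ := hR.exists_bundle_concentrator hT₁ hk ha
    ((hB₀.trans hF).trans (Multiset.le_add_right _ _)) (hBc.trans hr) N
    (by rw [Multiset.card_add]; lia)
  refine ⟨V₀.map vx + B₀.bind (bundle a), T₁ + T₂, map_vx_add_bind_bundle_le hV₀ hB₀,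
    by rwa [← add_assoc], fun A B hA hBN hle => ?_⟩
  obtain ⟨A', V', hVA, hAc, hAA⟩ := hV A (by
    rw [Multiset.bind_singleton]
    exact (Multiset.le_add_right _ _).trans hle)
  obtain ⟨C', B', hBC, hCc, hCB⟩ := hB B ((Multiset.le_add_left _ _).trans hle)
  simp only [Multiset.bind_singleton] at hAA
  refine ⟨V'.map vx + B'.bind (bundle a), ?_, ?_⟩
  · rw [hVA, hBC, Multiset.map_add, Multiset.add_bind, hAA, hCB, add_add_add_comm]
  · rw [add_add_add_comm]
    exact add_mem (hw₁ A' V' hVA (hAc.trans hA)) (hw₂ C' B' hBC (hCc.trans hBN))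

end Flexible

section AbsorbingSet

variable {G : Type*} [AddCommGroup G] [Fintype G] [DecidableEq G]
  {R F : Multiset (G ⊕ G)} {c c' k r : ℕ}

theorem Rich.exists_absorbing_multiset (hR : Rich R c) (hF : Rich F c') (hFR : F ≤ R) (hk : 3 ≤ k)
    (m : ℕ) (hr : F.card ≤ 2 ^ (r + 1))
    (hc : 2 * ((r + 1) * (F.card + 1) * (2 + 300 * k)) + F.card + (m * k + 3) * (9 * k) +
      50000 * k ≤ c)
    (hc' : 6000 * (m * k) + 20000 * k ≤ c') :
    ∃ W ≤ R, ∀ V C : Multiset G, V.card = m → C.card = m → C.sum = 0 → 0 ∉ C →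
      (∀ t ∈ C, cl t ∉ W) → W + V.map vx + C.map cl ∈ closedWalks G k := by
  have hmk : m * (k - 1) ≤ m * k := Nat.mul_le_mul_left m (k.sub_le 1)
  have hmk' : (m * (k - 1) + 3) * (9 * k) ≤ (m * k + 3) * (9 * k) := by gcongr
  obtain ⟨x, hx, -⟩ := hR.exists_add_cl_le hFR [] [] (by simp; lia)
  obtain ⟨a, rfl⟩ := neg_surjective x
  have ha : Good a := by simpa using (hR.good (-a) (Multiset.mem_of_le hx (by simp))).neg
  obtain ⟨S, hS, hSc, hSw⟩ := hR.exists_closing_colour hx hk ha (by simp; lia)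
  obtain ⟨P, hPc, hP, hPw⟩ := hR.exists_absorber hS ha.2 hk m _ rfl (by simp; lia)
  obtain ⟨X, T, hX, hT, hTw⟩ := hR.exists_flexible hP (by
      rw [add_assoc, add_assoc]
      exact Multiset.le_add_right F _) hk ha.2 hr (7 * (m * (k - 1)) + 18)
    (5 * (m * (k - 1)) + 11) (by simp; lia)
  refine ⟨X + {cl (-a)} + S + P + T, le_trans (by gcongr) hT, fun V C hV hC hsum h₀ hCW => ?_⟩
  have hCa : ∀ t ∈ C, t ≠ 0 ∧ a + t ≠ 0 := fun t ht =>
    ⟨fun h => h₀ (h ▸ ht), fun h => hCW t ht (by simp [eq_neg_of_add_eq_zero_right h])⟩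
  obtain ⟨A, B, hA, hB, hAB, hw⟩ := hPw V C hV hC hsum hCa hF (by lia)
  obtain ⟨Y, rfl, hY⟩ := hTw A B hA hB hAB
  convert add_mem (add_mem hw hY) hSw using 1
  abel

end AbsorbingSet

section Absorbers

variable {G : Type} [AddCommGroup G] [Fintype G] [DecidableEq G]

theorem isRainbowCycleFactor_of_mem_closedWalks {k : ℕ} (hk : 2 ≤ k) {W : Multiset (G ⊕ G)}
    (hW : W ∈ closedWalks G k) (hn : W.Nodup) {V C : Finset G} (hV : ∀ v, v ∈ V ↔ vx v ∈ W)
    (hC : ∀ c, c ∈ C ↔ cl c ∈ W) : IsRainbowCycleFactor k V C := by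
  obtain ⟨σ, hσ⟩ := exists_realises hk hW hn
  refine ⟨σ, Finset.ext fun v => (hσ.mem_support v).trans (hV v).symm, hσ.cycleType, ?_⟩
  rw [show (V : Set G) = {v | vx v ∈ W} from Set.ext hV,
    show (C : Set G) = {c | cl c ∈ W} from Set.ext hC]
  exact hσ.bijOn

/-- Any `m` vertices outside `V` and any `m` nonzero colours outside `C` with sum zero complete `V`
and `C` to a rainbow `C_k`-factor. -/
def IsAbsorber (k m : ℕ) (V C : Finset G) : Prop :=
  ∀ V' C' : Finset G, Disjoint V' V → Disjoint C' C → #V' = m → #C' = m →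
    ∑ t ∈ C', t = 0 → 0 ∉ C' → IsRainbowCycleFactor k (V ∪ V') (C ∪ C')

theorem Rich.exists_isAbsorber {R₁ R₂ : Finset G} (hR : Rich R c) (hF : Rich F c') (hFR : F ≤ R)
    (hRR : R ≤ (R₁.disjSum R₂).val) (hk : 3 ≤ k) {m : ℕ} (hr : F.card ≤ 2 ^ (r + 1))
    (hc : 2 * ((r + 1) * (F.card + 1) * (2 + 300 * k)) + F.card + (m * k + 3) * (9 * k) +
      50000 * k ≤ c)
    (hc' : 6000 * (m * k) + 20000 * k ≤ c') :
    ∃ V C : Finset G, V ⊆ R₁ ∧ C ⊆ R₂ ∧ IsAbsorber k m V C := by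
  obtain ⟨W, hWR, hW⟩ := hR.exists_absorbing_multiset hF hFR hk m hr hc hc'
  refine ⟨Finset.univ.filter fun v => vx v ∈ W, Finset.univ.filter fun t => cl t ∈ W,
    fun v hv => ?_, fun t ht => ?_, fun V' C' hV hC hVm hCm hsum h₀ => ?_⟩
  · simpa using Multiset.mem_of_le (hWR.trans hRR) (Finset.mem_filter.1 hv).2
  · simpa using Multiset.mem_of_le (hWR.trans hRR) (Finset.mem_filter.1 ht).2
  have hV' : ∀ v ∈ V', vx v ∉ W := by simpa [Finset.disjoint_left] using hV
  have hC' : ∀ t ∈ C', cl t ∉ W := by simpa [Finset.disjoint_left] using hC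
  refine isRainbowCycleFactor_of_mem_closedWalks (by lia)
    (hW V'.val C'.val hVm hCm (by simpa using hsum) h₀ hC') ?_ (by simp) (by simp)
  rw [add_assoc, Multiset.nodup_add, Multiset.nodup_add]
  refine ⟨Multiset.nodup_of_le hWR hR.nodup, ⟨V'.nodup.map Sum.inl_injective,
    C'.nodup.map Sum.inr_injective, by simp [Multiset.disjoint_left]⟩, ?_⟩
  rw [Multiset.disjoint_right]
  simpa [or_imp, forall_and] using ⟨hV', hC'⟩

end Absorbers

section RandomSets

variable {α : Type} [Fintype α] [DecidableEq α] {p : ℝ}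

/-- The probability that a `p`-random subset of `α` has the property `P`. -/
noncomputable def prob (p : ℝ) (P : Finset α → Prop) : ℝ := ∑ W with P W, setProb α p W

theorem setProb_nonneg (h₀ : 0 ≤ p) (h₁ : p ≤ 1) (W : Finset α) : 0 ≤ setProb α p W :=
  mul_nonneg (pow_nonneg h₀ _) (pow_nonneg (sub_nonneg.2 h₁) _)

theorem sum_setProb (p : ℝ) : ∑ W : Finset α, setProb α p W = 1 := by
  simp [setProb, Fintype.sum_pow_mul_eq_add_pow]

theorem prob_add_prob_not (p : ℝ) (P : Finset α → Prop) :
    prob p P + prob p (fun W => ¬ P W) = 1 := by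
  rw [prob, prob, Finset.sum_filter_add_sum_filter_not, sum_setProb]

theorem prob_mono (h₀ : 0 ≤ p) (h₁ : p ≤ 1) {P Q : Finset α → Prop} (h : ∀ W, P W → Q W) :
    prob p P ≤ prob p Q :=
  Finset.sum_le_sum_of_subset_of_nonneg (Finset.monotone_filter_right _ fun W _ => h W)
    fun W _ _ => setProb_nonneg h₀ h₁ W

theorem prob_or_le (h₀ : 0 ≤ p) (h₁ : p ≤ 1) (P Q : Finset α → Prop) :
    prob p (fun W => P W ∨ Q W) ≤ prob p P + prob p Q := by
  simp only [prob, Finset.sum_filter, ← Finset.sum_add_distrib]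
  refine Finset.sum_le_sum fun W _ => ?_
  have := setProb_nonneg h₀ h₁ W
  split_ifs <;> simp_all

theorem prob_exists_le {ι : Type*} (h₀ : 0 ≤ p) (h₁ : p ≤ 1) (I : Finset ι)
    (P : ι → Finset α → Prop) :
    prob p (fun W => ∃ i ∈ I, P i W) ≤ ∑ i ∈ I, prob p (P i) := by
  induction I using Finset.cons_induction with
  | empty => simp [prob]
  | cons i I hi ih =>
    simp only [Finset.mem_cons, exists_eq_or_imp, Finset.sum_cons]
    exact (prob_or_le h₀ h₁ _ _).trans (by gcongr)

theorem sum_superset_pow_mul {R : Type*} [CommSemiring R] (a b : R) (F : Finset α) :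
    ∑ W with F ⊆ W, a ^ (#W - #F) * b ^ (Fintype.card α - #W) =
      (a + b) ^ (Fintype.card α - #F) := by
  rw [← Finset.card_compl F, add_comm, ← Finset.sum_pow_mul_eq_add_pow]
  refine Finset.sum_nbij' compl compl (by simp) (by simp [Finset.subset_compl_comm]) (by simp)
    (by simp) fun W hW => ?_
  have hFW := Finset.card_le_card (Finset.mem_filter.1 hW).2
  have hW := W.card_le_univ
  rw [mul_comm, Finset.card_compl, Finset.card_compl]
  congr 2
  lia

theorem sum_setProb_superset (p : ℝ) (F : Finset α) :
    ∑ W with F ⊆ W, setProb α p W = p ^ #F := by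
  have h := congrArg (p ^ #F * ·) (sum_superset_pow_mul p (1 - p) F)
  simp only [Finset.mul_sum, add_sub_cancel, one_pow, mul_one, ← mul_assoc, ← pow_add] at h
  rw [← h]
  refine Finset.sum_congr rfl fun W hW => ?_
  rw [setProb, Nat.add_sub_of_le (Finset.card_le_card (Finset.mem_filter.1 hW).2)]

theorem sum_superset_setProb_mul (p t : ℝ) (F : Finset α) :
    ∑ W with F ⊆ W, setProb α p W * (t ^ #F * (1 - t) ^ (#W - #F)) = setProb α (p * t) F := by
  rw [setProb, show 1 - p * t = p * (1 - t) + (1 - p) by ring, ← sum_superset_pow_mul,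
    Finset.mul_sum]
  refine Finset.sum_congr rfl fun W hW => ?_
  rw [setProb, ← Nat.add_sub_of_le (Finset.card_le_card (Finset.mem_filter.1 hW).2), pow_add,
    Nat.add_sub_cancel_left, mul_pow, mul_pow]
  ring

theorem prob_mul_le (h₀ : 0 ≤ p) (h₁ : p ≤ 1) {P : Finset α → Prop} {c : ℝ} {X : Finset α → ℝ}
    (hX : ∀ W, 0 ≤ X W) (hP : ∀ W, P W → c ≤ X W) :
    prob p P * c ≤ ∑ W, setProb α p W * X W := by
  rw [prob, Finset.sum_mul]
  refine (Finset.sum_le_sum fun W hW => ?_).trans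
    (Finset.sum_le_sum_of_subset_of_nonneg (Finset.filter_subset _ _) fun W _ _ => ?_)
  · exact mul_le_mul_of_nonneg_left (hP W (Finset.mem_filter.1 hW).2) (setProb_nonneg h₀ h₁ W)
  · exact mul_nonneg (setProb_nonneg h₀ h₁ W) (hX W)

/-- Retaining each element of a `p`-random set `R` with probability `t` produces a `p * t`-random
subset of `R`. -/
theorem prob_forall_subset_le (h₀ : 0 ≤ p) (h₁ : p ≤ 1) {t : ℝ} (ht₀ : 0 ≤ t) (ht₁ : t ≤ 1)
    (P : Finset α → Prop) : prob p (fun R => ∀ F ⊆ R, P F) ≤ prob (p * t) P := by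
  have hsum (R : Finset α) : ∑ F ∈ R.powerset, t ^ #F * (1 - t) ^ (#R - #F) = 1 := by
    rw [Finset.sum_pow_mul_eq_add_pow, add_sub_cancel, one_pow]
  have h : prob (p * t) P = ∑ R, setProb α p R * ∑ F ∈ R.powerset with P F,
      t ^ #F * (1 - t) ^ (#R - #F) := by
    simp only [prob, ← sum_superset_setProb_mul, Finset.mul_sum]
    exact Finset.sum_comm' (by simp [and_comm])
  rw [h, ← mul_one (prob p _)]
  refine prob_mul_le h₀ h₁ (fun R => Finset.sum_nonneg fun F _ => ?_) fun R hR => ?_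
  · have := sub_nonneg.2 ht₁
    positivity
  · rw [Finset.filter_true_of_mem (by simpa using hR), hsum]

theorem sum_setProb_mul_card (p : ℝ) :
    ∑ W : Finset α, setProb α p W * #W = Fintype.card α * p := by
  have h (W : Finset α) : setProb α p W * #W = ∑ e, if {e} ⊆ W then setProb α p W else 0 := by
    simp [mul_comm]
  simp_rw [h]
  rw [Finset.sum_comm]
  simp_rw [← Finset.sum_filter, sum_setProb_superset]
  simp

theorem prob_lt_card_le (h₀ : 0 ≤ p) (h₁ : p ≤ 1) {f : ℝ} (hf : 0 < f) :
    prob p (fun W : Finset α => f < #W) ≤ Fintype.card α * p / f := by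
  rw [le_div_iff₀ hf, ← sum_setProb_mul_card]
  exact prob_mul_le h₀ h₁ (fun W => Nat.cast_nonneg _) fun W => le_of_lt

variable {ι : Type*} {T : Finset ι} {B : ι → Finset α}

theorem sum_setProb_mul_pow (p θ : ℝ) (hB : (T : Set ι).PairwiseDisjoint B) :
    ∑ W, setProb α p W * (1 - θ) ^ #{j ∈ T | B j ⊆ W} = ∏ j ∈ T, (1 - θ * p ^ #(B j)) := by
  classical
  have hpow (W : Finset α) : (1 - θ) ^ #{j ∈ T | B j ⊆ W} =
      ∑ J ∈ T.powerset with J.biUnion B ⊆ W, (-θ) ^ #J := by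
    have h := Finset.sum_pow_mul_eq_add_pow (-θ) 1 {j ∈ T | B j ⊆ W}
    simp only [one_pow, mul_one] at h
    rw [sub_eq_neg_add, ← h]
    refine Finset.sum_congr (Finset.ext fun J => ?_) fun _ _ => rfl
    simp only [Finset.mem_powerset, Finset.mem_filter, Finset.biUnion_subset]
    grind
  have hprod : ∀ J ∈ T.powerset, ∏ j ∈ J, -(θ * p ^ #(B j)) =
      ∑ W with J.biUnion B ⊆ W, setProb α p W * (-θ) ^ #J := by
    intro J hJ
    rw [← Finset.sum_mul, sum_setProb_superset, Finset.card_biUnion fun i hi j hj h =>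
      hB (Finset.mem_powerset.1 hJ hi) (Finset.mem_powerset.1 hJ hj) h]
    simp only [← neg_mul, Finset.prod_mul_distrib, Finset.prod_const, Finset.prod_pow_eq_pow_sum,
      mul_comm]
  simp only [hpow, Finset.mul_sum, sub_eq_add_neg _ (_ * _), Finset.prod_one_add]
  rw [Finset.sum_congr rfl hprod]
  exact Finset.sum_comm' (by simp [and_comm])

theorem prob_card_filter_subset_le (h₀ : 0 ≤ p) (h₁ : p ≤ 1)
    (hB : (T : Set ι).PairwiseDisjoint B) {d : ℕ} (hd : ∀ j ∈ T, #(B j) ≤ d) (n : ℕ) :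
    prob p (fun W => #{j ∈ T | B j ⊆ W} ≤ n) ≤ 2 ^ n * Real.exp (-(#T * (p ^ d / 2))) := by
  have hprod : ∏ j ∈ T, (1 - 1 / 2 * p ^ #(B j)) ≤ Real.exp (-(#T * (p ^ d / 2))) := by
    rw [← mul_neg, Real.exp_nat_mul, ← Finset.prod_const]
    refine Finset.prod_le_prod (fun j _ => ?_) fun j hj => ?_
    · linarith [pow_le_one₀ (n := #(B j)) h₀ h₁]
    · linarith [pow_le_pow_of_le_one h₀ h₁ (hd j hj), Real.add_one_le_exp (-(p ^ d / 2))]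
  rw [← sum_setProb_mul_pow p (1 / 2) hB, sub_half] at hprod
  have hmarkov := (prob_mul_le h₀ h₁ (P := fun W => #{j ∈ T | B j ⊆ W} ≤ n) (fun W => by positivity)
    fun W hW => pow_le_pow_of_le_one (one_half_pos.le) one_half_lt_one.le hW).trans hprod
  rwa [one_div, inv_pow, ← div_eq_mul_inv, div_le_iff₀' (by positivity)] at hmarkov

theorem setProb_disjSum {G : Type} [Fintype G] [DecidableEq G] (p : ℝ) (A B : Finset G) :
    setProb (G ⊕ G) p (A.disjSum B) = setProb G p A * setProb G p B := by
  rw [setProb, setProb, setProb, Finset.card_disjSum, Fintype.card_sum,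
    ← tsub_add_tsub_comm A.card_le_univ B.card_le_univ]
  ring

theorem sum_sum_setProb {G : Type} [Fintype G] [DecidableEq G] (p : ℝ)
    (P : Finset G → Finset G → Prop) [∀ A B, Decidable (P A B)] :
    ∑ A : Finset G, ∑ B : Finset G, (if P A B then setProb G p A * setProb G p B else 0) =
      prob p fun W : Finset (G ⊕ G) => P W.toLeft W.toRight := by
  rw [prob, Finset.sum_filter, ← Finset.sumEquiv.symm.toEquiv.sum_comp, Fintype.sum_prod_type]
  refine Finset.sum_congr rfl fun A _ => Finset.sum_congr rfl fun B _ => ?_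
  simp [setProb_disjSum]

end RandomSets

section DisjointSubfamilies

variable {ι α : Type*} {B : ι → Finset α}

theorem exists_pairwiseDisjoint_subset [DecidableEq α] (Z : Finset ι) {d : ℕ}
    (hd : ∀ i ∈ Z, #{j ∈ Z | ¬ Disjoint (B j) (B i)} ≤ d) :
    ∃ T ⊆ Z, (T : Set ι).PairwiseDisjoint B ∧ #Z ≤ #T * (d + 1) := by
  classical
  obtain ⟨T, hT, hmax⟩ := Finset.exists_max_image
    (Z.powerset.filter fun T : Finset ι => (T : Set ι).PairwiseDisjoint B) Finset.card ⟨∅, by simp⟩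
  obtain ⟨hTZ, hTd⟩ := by simpa only [Finset.mem_filter, Finset.mem_powerset] using hT
  refine ⟨T, hTZ, hTd, (Finset.card_le_card fun j hj => ?_).trans
    (Finset.card_biUnion_le_card_mul T (fun i => insert i {j ∈ Z | ¬ Disjoint (B j) (B i)}) _
      fun i hi => (Finset.card_insert_le _ _).trans (Nat.succ_le_succ (hd i (hTZ hi))))⟩
  by_contra hjT
  simp only [Finset.mem_biUnion, Finset.mem_insert, Finset.mem_filter, not_exists, not_and, not_or,
    not_not] at hjT
  have hj' : j ∉ T := fun h => (hjT j h).1 rfl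
  have hlt := hmax (insert j T) (Finset.mem_filter.2 ⟨Finset.mem_powerset.2
    (Finset.insert_subset hj hTZ), by
      rw [Finset.coe_insert]
      exact hTd.insert fun i hi _ => (hjT i hi).2 hj⟩)
  rw [Finset.card_insert_of_notMem hj'] at hlt
  lia

theorem exists_disjoint_of_card_lt {T : Finset ι} {X : Finset α}
    (hT : (T : Set ι).PairwiseDisjoint B) (hX : #X < #T) : ∃ j ∈ T, Disjoint (B j) X := by
  by_contra! h
  simp only [Finset.not_disjoint_iff] at h
  refine hX.not_ge (Finset.card_le_card_of_forall_subsingleton (fun j e => e ∈ B j)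
    (fun j hj => (h j hj).imp fun e he => he.symm) fun e _ i hi j hj => ?_)
  exact hT.elim_finset hi.1 hj.1 e hi.2 hj.2

end DisjointSubfamilies

namespace Form

theorem surjective_elim {G : Type*} : Function.Surjective
    (Sum.elim (Sum.elim vp vm) (Sum.elim cp cm) : (G ⊕ G) ⊕ (G ⊕ G) → Form G)
  | vp s => ⟨.inl (.inl s), rfl⟩
  | vm s => ⟨.inl (.inr s), rfl⟩
  | cp s => ⟨.inr (.inl s), rfl⟩
  | cm s => ⟨.inr (.inr s), rfl⟩

noncomputable instance {G : Type*} [Finite G] : Fintype (Form G) :=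
  have := Finite.of_surjective _ (surjective_elim (G := G))
  Fintype.ofFinite _

theorem card_sigma_fin_le {G : Type*} [Fintype G] [Nonempty G] (m : ℕ) :
    Fintype.card (Σ i : Fin (m + 1), Fin i → Form G) ≤ (m + 1) * (4 * Fintype.card G) ^ m := by
  have hcard : Fintype.card (Form G) ≤ 4 * Fintype.card G :=
    (Fintype.card_le_of_surjective _ surjective_elim).trans_eq
      (by simp only [Fintype.card_sum]; ring)
  have hpow : ∀ i : Fin (m + 1), Fintype.card (Fin i → Form G) ≤ (4 * Fintype.card G) ^ m := by
    intro i
    rw [Fintype.card_fun, Fintype.card_fin]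
    have := Fintype.card_pos (α := G)
    exact (Nat.pow_le_pow_left hcard _).trans (Nat.pow_le_pow_right (by lia) (by lia))
  rw [Fintype.card_sigma]
  exact (Finset.sum_le_card_nsmul _ _ _ fun i _ => hpow i).trans_eq (by simp)

variable {G : Type} [AddCommGroup G] [Fintype G] [DecidableEq G]

theorem card_filter_not_disjoint_evals_le (l : List (Form G)) (y : G) :
    #{x : G | ¬ Disjoint (evals l x).toFinset (evals l y).toFinset} ≤ l.length ^ 2 := by
  have hsub : Finset.univ.filter (fun x : G =>
      ¬ Disjoint (evals l x).toFinset (evals l y).toFinset) ⊆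
      Finset.univ.biUnion fun i : Fin l.length × Fin l.length =>
        {x : G | l[i.1].eval x = l[i.2].eval y} := by
    intro x hx
    obtain ⟨e, he, he'⟩ := Finset.not_disjoint_iff.1 ((Finset.mem_filter_univ x).1 hx)
    obtain ⟨f, hf, rfl⟩ := List.mem_map.1 (Multiset.mem_toFinset.1 he)
    obtain ⟨g, hg, hgf⟩ := List.mem_map.1 (Multiset.mem_toFinset.1 he')
    obtain ⟨i, hi, rfl⟩ := List.getElem_of_mem hf
    obtain ⟨j, hj, rfl⟩ := List.getElem_of_mem hg
    exact Finset.mem_biUnion.2 ⟨(⟨i, hi⟩, ⟨j, hj⟩), Finset.mem_univ _, by simpa using hgf.symm⟩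
  refine (Finset.card_le_card hsub).trans
    ((Finset.card_biUnion_le_card_mul _ _ 1 fun i _ => ?_).trans (by simp [sq]))
  refine Finset.card_le_one.2 fun x hx z hz => l[i.1].eval_injective ?_
  rw [Finset.mem_filter_univ] at hx hz
  exact hx.trans hz.symm

theorem exists_pairwiseDisjoint_evals (l : List (Form G)) :
    ∃ T : Finset G, (∀ x ∈ T, (evals l x).Nodup) ∧
      (T : Set G).PairwiseDisjoint (fun x => (evals l x).toFinset) ∧
      #{x : G | (evals l x).Nodup} ≤ #T * (l.length ^ 2 + 1) := by
  have hd : ∀ y ∈ Finset.univ.filter (fun x : G => (evals l x).Nodup),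
      #{x ∈ Finset.univ.filter (fun x : G => (evals l x).Nodup) |
        ¬ Disjoint (evals l x).toFinset (evals l y).toFinset} ≤ l.length ^ 2 := fun y _ =>
    (Finset.card_le_card (Finset.filter_subset_filter _ (Finset.filter_subset _ _))).trans
      (card_filter_not_disjoint_evals_le l y)
  obtain ⟨T, hTZ, hT, hc⟩ := exists_pairwiseDisjoint_subset _ hd
  exact ⟨T, fun x hx => (Finset.mem_filter_univ x).1 (hTZ hx), hT, hc⟩

end Form

section RandomRich

variable {G : Type} [AddCommGroup G] [Fintype G] [DecidableEq G]
  {W : Finset (G ⊕ G)} {c c₁ c₂ : ℕ} {p f : ℝ}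

variable (G) in
/-- The set of all vertices and all good colours. -/
noncomputable def usable : Finset (G ⊕ G) := Finset.univ.disjSum {g | Good g}

theorem card_compl_usable_le : #(usable G)ᶜ ≤ 800 := by
  have h : (usable G)ᶜ = ({g | ¬ Good g} : Finset G).map ⟨Sum.inr, Sum.inr_injective⟩ := by
    ext (v | g) <;> simp [usable]
  rw [h, Finset.card_map]
  exact card_filter_not_good_le

theorem rich_inter_usable (h : ∀ l : List (Form G), l.length ≤ 14 →
    Fintype.card G ≤ 4 * #{x : G | (Form.evals l x).Nodup} →
    ∃ T : Finset G, (∀ x ∈ T, (Form.evals l x).Nodup) ∧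
      (T : Set G).PairwiseDisjoint (fun x => (Form.evals l x).toFinset) ∧
      c + 800 < #{x ∈ T | (Form.evals l x).toFinset ⊆ W}) :
    Rich (W ∩ usable G).val c where
  nodup := Finset.nodup _
  good g hg := by simpa [usable] using (Finset.mem_inter.1 hg).2
  exists_evals_le_sub l hl hn X hX := by
    obtain ⟨T, hT, hTd, hc⟩ := h l hl hn
    have hX' : #(X.toFinset ∪ (usable G)ᶜ) < #{x ∈ T | (Form.evals l x).toFinset ⊆ W} := by
      have := Finset.card_union_le X.toFinset (usable G)ᶜ
      have := X.toFinset_card_le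
      have := card_compl_usable_le (G := G)
      lia
    obtain ⟨x, hx, hxX⟩ := exists_disjoint_of_card_lt
      (hTd.subset (Finset.coe_subset.2 (Finset.filter_subset _ T))) hX'
    obtain ⟨hxT, hxW⟩ := Finset.mem_filter.1 hx
    refine ⟨x, (Multiset.le_iff_subset (hT x hxT)).2 fun e he => ?_⟩
    have heX := Finset.disjoint_left.1 hxX (Multiset.mem_toFinset.2 he)
    rw [Multiset.mem_sub_of_nodup (Finset.nodup _)]
    simp only [Finset.mem_union, Multiset.mem_toFinset, Finset.mem_compl, not_or, not_not] at heX
    exact ⟨Finset.mem_inter.2 ⟨hxW (Multiset.mem_toFinset.2 he), heX.2⟩, heX.1⟩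

theorem prob_card_filter_evals_subset_le (h₀ : 0 ≤ p) (h₁ : p ≤ 1) {l : List (Form G)}
    (hl : l.length ≤ 14) (hn : Fintype.card G ≤ 4 * #{x : G | (Form.evals l x).Nodup}) :
    ∃ T : Finset G, (∀ x ∈ T, (Form.evals l x).Nodup) ∧
      (T : Set G).PairwiseDisjoint (fun x => (Form.evals l x).toFinset) ∧
      ∀ c : ℕ, prob p (fun W => #{x ∈ T | (Form.evals l x).toFinset ⊆ W} ≤ c) ≤
        2 ^ c * Real.exp (-(Fintype.card G / 788 * (p ^ 14 / 2))) := by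
  obtain ⟨T, hT, hTd, hc⟩ := Form.exists_pairwiseDisjoint_evals l
  have hcard : Fintype.card G ≤ #T * 788 := by
    have : l.length ^ 2 ≤ 14 ^ 2 := Nat.pow_le_pow_left hl 2
    nlinarith
  have hcard' : (Fintype.card G : ℝ) / 788 ≤ #T := (div_le_iff₀ (by norm_num)).2 (mod_cast hcard)
  refine ⟨T, hT, hTd, fun c => (prob_card_filter_subset_le h₀ h₁ hTd (d := 14)
    (fun x _ => (Multiset.toFinset_card_le _).trans (by simpa using hl)) c).trans ?_⟩
  gcongr

theorem prob_not_rich_le (h₀ : 0 ≤ p) (h₁ : p ≤ 1) (c : ℕ) :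
    prob p (fun W => ¬ Rich (W ∩ usable G).val c) ≤ 15 * (4 * Fintype.card G) ^ 14 *
      (2 ^ (c + 800) * Real.exp (-(Fintype.card G / 788 * (p ^ 14 / 2)))) := by
  have hT (l : List (Form G)) (h : l.length ≤ 14 ∧
      Fintype.card G ≤ 4 * #{x : G | (Form.evals l x).Nodup}) :=
    prob_card_filter_evals_subset_le h₀ h₁ h.1 h.2
  choose T hT hTd hTp using hT
  let E (i : Σ i : Fin (14 + 1), Fin i → Form G) (W : Finset (G ⊕ G)) : Prop :=
    ∃ h, #{x ∈ T (List.ofFn i.2) h | (Form.evals (List.ofFn i.2) x).toFinset ⊆ W} ≤ c + 800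
  have hE : ∀ W : Finset (G ⊕ G), ¬ Rich (W ∩ usable G).val c → ∃ i ∈ Finset.univ, E i W := by
    intro W hW
    contrapose! hW
    refine rich_inter_usable fun l hl hn => ⟨T l ⟨hl, hn⟩, hT l _, hTd l _, ?_⟩
    by_contra! hlc
    refine hW ⟨⟨l.length, by lia⟩, l.get⟩ (Finset.mem_univ _) ?_
    simp only [E, List.ofFn_get]
    exact ⟨⟨hl, hn⟩, hlc⟩
  have hEp : ∀ i ∈ Finset.univ, prob p (E i) ≤
      2 ^ (c + 800) * Real.exp (-(Fintype.card G / 788 * (p ^ 14 / 2))) := by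
    intro i _
    by_cases h : (List.ofFn i.2).length ≤ 14 ∧
        Fintype.card G ≤ 4 * #{x : G | (Form.evals (List.ofFn i.2) x).Nodup}
    · exact (prob_mono h₀ h₁ fun W hW => hW.2).trans (hTp _ h _)
    · simp only [prob, E, h, IsEmpty.exists_iff, Finset.filter_false, Finset.sum_empty]
      positivity
  refine (prob_mono h₀ h₁ hE).trans ((prob_exists_le h₀ h₁ _ _).trans
    ((Finset.sum_le_card_nsmul _ _ _ hEp).trans ?_))
  rw [nsmul_eq_mul, Finset.card_univ]
  gcongr
  exact_mod_cast Form.card_sigma_fin_le (G := G) 14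

/-- The usable part of `W` is `c₁`-rich, and that of some subset of size at most `f` is
`c₂`-rich. -/
def Adequate (W : Finset (G ⊕ G)) (c₁ c₂ : ℕ) (f : ℝ) : Prop :=
  Rich (W ∩ usable G).val c₁ ∧ ∃ F ⊆ W, #F ≤ f ∧ Rich (F ∩ usable G).val c₂

theorem prob_not_adequate_le (h₀ : 0 ≤ p) (h₁ : p ≤ 1) {t : ℝ} (ht₀ : 0 ≤ t) (ht₁ : t ≤ 1)
    (hf : 0 < f) (c₁ c₂ : ℕ) :
    prob p (fun W : Finset (G ⊕ G) => ¬ Adequate W c₁ c₂ f) ≤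
      15 * (4 * Fintype.card G) ^ 14 *
        (2 ^ (c₁ + 800) * Real.exp (-(Fintype.card G / 788 * (p ^ 14 / 2)))) +
      (2 * Fintype.card G * (p * t) / f + 15 * (4 * Fintype.card G) ^ 14 *
        (2 ^ (c₂ + 800) * Real.exp (-(Fintype.card G / 788 * ((p * t) ^ 14 / 2))))) := by
  have hnot : ∀ W : Finset (G ⊕ G), ¬ Adequate W c₁ c₂ f → ¬ Rich (W ∩ usable G).val c₁ ∨
      ∀ F ⊆ W, f < #F ∨ ¬ Rich (F ∩ usable G).val c₂ := by
    intro W hW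
    simpa only [Adequate, not_and_or, not_exists, not_le, ← imp_iff_not_or] using hW
  refine (prob_mono h₀ h₁ hnot).trans ((prob_or_le h₀ h₁ _ _).trans
    (add_le_add (prob_not_rich_le h₀ h₁ c₁) ?_))
  have hpt₀ := mul_nonneg h₀ ht₀
  have hpt₁ := mul_le_one₀ h₁ ht₀ ht₁
  refine (prob_forall_subset_le h₀ h₁ ht₀ ht₁ _).trans ((prob_or_le hpt₀ hpt₁ _ _).trans
    (add_le_add ((prob_lt_card_le hpt₀ hpt₁ hf).trans_eq ?_) (prob_not_rich_le hpt₀ hpt₁ c₂)))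
  rw [Fintype.card_sum]
  push_cast
  ring

theorem Adequate.exists_isAbsorber (hW : Adequate W c₁ c₂ f) (U : Finset G) {k m r : ℕ}
    (hk : 3 ≤ k) (hr : Fintype.card G ≤ 2 ^ r)
    (h₁ : 2 * ((r + 1) * (⌊f⌋₊ + 1) * (2 + 300 * k)) + ⌊f⌋₊ + (m * k + 3) * (9 * k) + 50000 * k +
      2 * #U ≤ c₁)
    (h₂ : 6000 * (m * k) + 20000 * k + 2 * #U ≤ c₂) :
    ∃ V C : Finset G, V ⊆ W.toLeft \ U ∧ C ⊆ W.toRight \ U ∧ IsAbsorber k m V C := by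
  obtain ⟨hWR, F, hFW, hFf, hFR⟩ := hW
  have hD : (U.disjSum U).val.card = 2 * #U := by
    rw [Finset.card_val, Finset.card_disjSum, two_mul]
  have hFc : ((F ∩ usable G).val - (U.disjSum U).val).card ≤ ⌊f⌋₊ :=
    (Multiset.card_le_card tsub_le_self).trans
      ((Finset.card_le_card Finset.inter_subset_left).trans (Nat.le_floor hFf))
  have hFr : ((F ∩ usable G).val - (U.disjSum U).val).card ≤ 2 ^ (r + 1) := by
    have := (F ∩ usable G).card_le_univ
    rw [Fintype.card_sum] at this
    rw [← Finset.sdiff_val, Finset.card_val, pow_succ]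
    linarith [Finset.card_le_card (Finset.sdiff_subset (s := F ∩ usable G) (t := U.disjSum U))]
  have hWU : (W ∩ usable G).val - (U.disjSum U).val ≤
      ((W.toLeft \ U).disjSum (W.toRight \ U)).val := by
    rw [← Finset.sdiff_val, Finset.val_le_iff]
    intro e he
    cases e <;> simp_all
  refine (hWR.sub _).exists_isAbsorber (hFR.sub (U.disjSum U).val)
    (tsub_le_tsub_right (Finset.val_le_iff.2 (Finset.inter_subset_inter_right hFW)) _) hWU hk hFr
    ?_ (by lia)
  have : (r + 1) * (((F ∩ usable G).val - (U.disjSum U).val).card + 1) * (2 + 300 * k) ≤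
      (r + 1) * (⌊f⌋₊ + 1) * (2 + 300 * k) := by gcongr
  lia

end RandomRich

section Parameters

open Real Filter

/-- The asymptotic regime of the theorem: `n` is the order of the group, `ℓ` is its logarithm,
`s = p / (k * ℓ)`, and `δ` is the probability of failure. -/
structure Regime (n p k ℓ s δ : ℝ) : Prop where
  n_pos : 0 < n
  p_le_one : p ≤ 1
  one_le_k : 1 ≤ k
  s_pos : 0 < s
  δ_pos : 0 < δ
  s_mul : s * (k * ℓ) = p
  large_ℓ : 10 ^ 10 ≤ ℓ
  large_δ_mul : 10 ^ 10 ≤ δ * ℓ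
  mul_le : k * ℓ ≤ n ^ (4 / 5 : ℝ)
  rpow_le : n ^ (4 / 5 : ℝ) ≤ n ^ (9 / 10 : ℝ) / 10 ^ 10
  rpow_le_pow_mul : n ^ (9 / 10 : ℝ) ≤ s ^ 210 * n
  tail_le : 15 * (4 * n) ^ 14 * exp (-(n ^ (9 / 10 : ℝ) / 4000)) ≤ δ / 3

namespace Regime

variable {n p k ℓ s δ m : ℝ}

theorem one_le_ℓ (h : Regime n p k ℓ s δ) : 1 ≤ ℓ := le_trans (by norm_num) h.large_ℓ

theorem s_mul_ℓ_le (h : Regime n p k ℓ s δ) : s * ℓ ≤ p := by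
  have := h.s_pos
  have := h.one_le_ℓ
  calc s * ℓ ≤ s * (k * ℓ) := by gcongr; exact le_mul_of_one_le_left (by positivity) h.one_le_k
    _ = p := h.s_mul

theorem s_mul_k_le (h : Regime n p k ℓ s δ) : s * k ≤ 1 / 10 ^ 10 := by
  have hk : 0 < s * k := mul_pos h.s_pos (zero_lt_one.trans_le h.one_le_k)
  rw [le_div_iff₀ (by norm_num)]
  calc s * k * 10 ^ 10 ≤ s * k * ℓ := by gcongr; exact h.large_ℓ
    _ ≤ 1 := by rw [mul_assoc, h.s_mul]; exact h.p_le_one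

theorem s_le_p (h : Regime n p k ℓ s δ) : s ≤ p :=
  (le_mul_of_one_le_right h.s_pos.le h.one_le_ℓ).trans h.s_mul_ℓ_le

theorem s_le_one (h : Regime n p k ℓ s δ) : s ≤ 1 := h.s_le_p.trans h.p_le_one

theorem p_pos (h : Regime n p k ℓ s δ) : 0 < p := h.s_pos.trans_le h.s_le_p

theorem pow_mul_le (h : Regime n p k ℓ s δ) : s ^ 210 * n ≤ (p * s ^ 14) ^ 14 * n := by
  have := h.n_pos
  have := h.s_pos
  have := h.s_le_p
  calc s ^ 210 * n = (s * s ^ 14) ^ 14 * n := by ring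
    _ ≤ _ := by gcongr

theorem mul_pow_le (h : Regime n p k ℓ s δ) : (p * s ^ 14) ^ 14 * n ≤ p ^ 14 * n := by
  have := h.n_pos
  have := h.p_pos
  have := h.s_pos
  gcongr
  exact mul_le_of_le_one_right h.p_pos.le (pow_le_one₀ h.s_pos.le h.s_le_one)

theorem rpow_le_pow (h : Regime n p k ℓ s δ) :
    n ^ (4 / 5 : ℝ) ≤ s ^ 210 * n / 10 ^ 10 := by
  refine h.rpow_le.trans ?_
  gcongr
  exact h.rpow_le_pow_mul

theorem m_mul_k_le (h : Regime n p k ℓ s δ) (hm : m ≤ s ^ 300 * n) :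
    m * k ≤ s ^ 210 * n / 10 ^ 10 := by
  have := h.n_pos
  have := h.s_pos
  have := h.one_le_k
  calc m * k ≤ s ^ 300 * n * k := by gcongr
    _ = s * k * s ^ 89 * (s ^ 210 * n) := by ring
    _ ≤ 1 / 10 ^ 10 * 1 * (s ^ 210 * n) := by
      gcongr
      exacts [h.s_mul_k_le, pow_le_one₀ h.s_pos.le h.s_le_one]
    _ = _ := by ring

theorem m_mul_k_mul_k_le (h : Regime n p k ℓ s δ) (hm : m ≤ s ^ 300 * n) :
    m * k * k ≤ p ^ 14 * n / 10 ^ 10 := by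
  have := h.n_pos
  have := h.p_pos
  have := h.s_pos
  have := h.one_le_k
  calc m * k * k ≤ s ^ 210 * n / 10 ^ 10 * k := by gcongr; exact h.m_mul_k_le hm
    _ = s * k * s ^ 195 * (s ^ 14 * n / 10 ^ 10) := by ring
    _ ≤ 1 * 1 * (p ^ 14 * n / 10 ^ 10) := by
      gcongr
      exacts [h.s_mul_k_le.trans (by norm_num), pow_le_one₀ h.s_pos.le h.s_le_one, h.s_le_p]
    _ = _ := by ring

theorem mul_size_le (h : Regime n p k ℓ s δ) :
    k * ℓ * (6 * n * (p * s ^ 14) / δ) ≤ 6 * (p ^ 14 * n / 10 ^ 10) := by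
  have := h.n_pos
  have := h.p_pos
  have := h.s_pos
  have := h.δ_pos
  have := h.one_le_ℓ
  have hpow : s ^ 13 * ℓ ≤ p ^ 13 := by
    calc s ^ 13 * ℓ ≤ s ^ 13 * ℓ ^ 13 := by gcongr; exact le_self_pow₀ h.one_le_ℓ (by norm_num)
      _ = (s * ℓ) ^ 13 := by ring
      _ ≤ _ := by gcongr; exact h.s_mul_ℓ_le
  calc k * ℓ * (6 * n * (p * s ^ 14) / δ)
      = 6 * (p * (s * (k * ℓ)) * (s ^ 13 * ℓ) * n / (δ * ℓ)) := by field_simp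
    _ ≤ 6 * (1 * p * p ^ 13 * n / 10 ^ 10) := by
      rw [h.s_mul]
      gcongr
      exacts [h.p_le_one, h.large_δ_mul]
    _ = _ := by ring

theorem reserve_le (h : Regime n p k ℓ s δ) (hm : m ≤ s ^ 300 * n) {u : ℝ}
    (hu : u ≤ n ^ (4 / 5 : ℝ)) :
    6000 * (m * k) + 20000 * k + 2 * u ≤ (p * s ^ 14) ^ 14 * n / 8000 := by
  have hk : k ≤ k * ℓ := le_mul_of_one_le_right (zero_le_one.trans h.one_le_k) h.one_le_ℓ
  linarith [h.one_le_k, h.m_mul_k_le hm, h.mul_le, h.rpow_le_pow, h.pow_mul_le]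

theorem supply_le (h : Regime n p k ℓ s δ) (hm : m ≤ s ^ 300 * n) {u r : ℝ}
    (hu : u ≤ n ^ (4 / 5 : ℝ)) (hr : r + 1 ≤ 3 * ℓ) {f : ℝ} (hf₀ : 0 ≤ f)
    (hf : f ≤ 6 * n * (p * s ^ 14) / δ) :
    2 * ((r + 1) * (f + 1) * (2 + 300 * k)) + f + (m * k + 3) * (9 * k) + 50000 * k + 2 * u ≤
      p ^ 14 * n / 8000 := by
  have hk₀ : 0 < k := zero_lt_one.trans_le h.one_le_k
  have hℓ₀ : 0 < ℓ := zero_lt_one.trans_le h.one_le_ℓ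
  have hk : k ≤ k * ℓ := le_mul_of_one_le_right hk₀.le h.one_le_ℓ
  have hkℓ : 1 ≤ k * ℓ := h.one_le_k.trans hk
  have hkℓf : k * ℓ * f ≤ 6 * (p ^ 14 * n / 10 ^ 10) := le_trans (by gcongr) h.mul_size_le
  have hf' : f ≤ k * ℓ * f := le_mul_of_one_le_left hf₀ hkℓ
  have hrf : (r + 1) * (f + 1) * (2 + 300 * k) ≤ 3 * ℓ * (f + 1) * (302 * k) := by
    gcongr
    linarith [h.one_le_k]
  linarith [h.m_mul_k_mul_k_le hm, h.mul_le, h.rpow_le_pow, h.pow_mul_le, h.mul_pow_le]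

theorem failure_le (h : Regime n p k ℓ s δ) {P : ℝ} (hP : s ^ 210 * n ≤ P * n) {c : ℕ}
    (hc : c ≤ P * n / 8000) :
    15 * (4 * n) ^ 14 * (2 ^ (c + 800) * exp (-(n / 788 * (P / 2)))) ≤ δ / 3 := by
  have hn := h.n_pos
  have hlarge : 800 ≤ P * n / 8000 := by
    have : ℓ ≤ k * ℓ := le_mul_of_one_le_left (zero_le_one.trans h.one_le_ℓ) h.one_le_k
    linarith [h.large_ℓ, h.mul_le, h.rpow_le_pow]
  refine le_trans ?_ h.tail_le
  gcongr
  calc 2 ^ (c + 800) * exp (-(n / 788 * (P / 2)))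
      ≤ exp 1 ^ (c + 800) * exp (-(n / 788 * (P / 2))) := by
        gcongr
        linarith [add_one_le_exp 1]
    _ = exp ((c + 800 : ℕ) - n / 788 * (P / 2)) := by
        rw [← exp_nat_mul, ← exp_add, mul_one, sub_eq_add_neg]
    _ ≤ _ := by
        gcongr
        push_cast
        linarith [h.rpow_le_pow_mul]

end Regime

theorem natLog_add_two_le {n : ℕ} (h : 10 ^ 10 ≤ log n) :
    (Nat.log 2 n + 1 : ℝ) + 1 ≤ 3 * log n := by
  have hlog : log 2 * Nat.log 2 n ≤ log n := by
    have hn : n ≠ 0 := by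
      rintro rfl
      norm_num at h
    rw [mul_comm, ← log_pow]
    exact log_le_log (by positivity) (mod_cast Nat.pow_log_le_self 2 hn)
  nlinarith [log_two_gt_d9, (Nat.log 2 n).cast_nonneg (α := ℝ)]

theorem eventually_log_pow_le {ε : ℝ} (hε : 0 < ε) :
    ∀ᶠ x : ℝ in atTop, log x ^ 11 ≤ x ^ ε := by
  filter_upwards [(isLittleO_log_rpow_rpow_atTop 11 hε).bound one_pos, eventually_ge_atTop 1]
    with x hx hx₁
  rw [norm_of_nonneg (rpow_nonneg (log_nonneg hx₁) _), norm_of_nonneg (by positivity),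
    one_mul] at hx
  exact_mod_cast hx

theorem eventually_rpow_le : ∀ᶠ x : ℝ in atTop,
    x ^ (4 / 5 : ℝ) ≤ x ^ (9 / 10 : ℝ) / 10 ^ 10 := by
  filter_upwards [(tendsto_rpow_atTop (show (0 : ℝ) < 1 / 10 by norm_num)).eventually_ge_atTop
    (10 ^ 10), eventually_gt_atTop 0] with x hx hx₀
  rw [show (9 / 10 : ℝ) = 4 / 5 + 1 / 10 by norm_num, rpow_add hx₀, le_div_iff₀ (by norm_num)]
  gcongr

theorem eventually_pow_mul_exp_le {δ : ℝ} (hδ : 0 < δ) : ∀ᶠ x : ℝ in atTop,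
    15 * (4 * x) ^ 14 * exp (-(x ^ (9 / 10 : ℝ) / 4000)) ≤ δ := by
  have h := (isLittleO_pow_exp_pos_mul_atTop (k := 16) (show (0 : ℝ) < 1 / 4000 by norm_num)).bound
    (show 0 < δ / (15 * 4 ^ 14) by positivity)
  filter_upwards [(tendsto_rpow_atTop (show (0 : ℝ) < 9 / 10 by norm_num)).eventually h,
    eventually_ge_atTop 1] with x hx hx₁
  rw [norm_of_nonneg (by positivity), norm_of_nonneg (by positivity), ← rpow_mul_natCast
    (by positivity)] at hx
  have hpow : x ^ 14 ≤ x ^ (9 / 10 * (16 : ℕ) : ℝ) := by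
    rw [← rpow_natCast]
    exact rpow_le_rpow_of_exponent_le hx₁ (by norm_num)
  calc 15 * (4 * x) ^ 14 * exp (-(x ^ (9 / 10 : ℝ) / 4000))
      = x ^ 14 * (15 * 4 ^ 14) * exp (-(x ^ (9 / 10 : ℝ) / 4000)) := by ring
    _ ≤ δ / (15 * 4 ^ 14) * exp (1 / 4000 * x ^ (9 / 10 : ℝ)) * (15 * 4 ^ 14) *
        exp (-(x ^ (9 / 10 : ℝ) / 4000)) := by gcongr; exact hpow.trans hx
    _ = δ * (exp (1 / 4000 * x ^ (9 / 10 : ℝ)) * exp (-(x ^ (9 / 10 : ℝ) / 4000))) := by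
      field_simp
    _ = δ := by rw [← exp_add]; ring_nf; simp

theorem rpow_le_div {n p k ℓ ε : ℝ} (hn : 1 ≤ n) (hkℓ₀ : 0 < k * ℓ) (hkℓ : k * ℓ ≤ n ^ ε)
    (hp : n ^ (-ε) ≤ p) : n ^ (-(2 * ε)) ≤ p / (k * ℓ) := by
  rw [le_div_iff₀ hkℓ₀]
  calc n ^ (-(2 * ε)) * (k * ℓ) ≤ n ^ (-(2 * ε)) * n ^ ε := by gcongr
    _ = n ^ (-ε) := by rw [← rpow_add (by positivity)]; ring_nf
    _ ≤ p := hp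

theorem rpow_le_pow_mul_of_rpow_le {n s ε : ℝ} (hn : 1 ≤ n) (hε : 420 * ε ≤ 1 / 10)
    (hs : n ^ (-(2 * ε)) ≤ s) : n ^ (9 / 10 : ℝ) ≤ s ^ 210 * n := by
  have hn₀ : 0 < n := zero_lt_one.trans_le hn
  calc n ^ (9 / 10 : ℝ) ≤ n ^ (-(2 * ε) * (210 : ℕ) + 1 : ℝ) :=
        rpow_le_rpow_of_exponent_le hn (by push_cast; linarith)
    _ = (n ^ (-(2 * ε))) ^ 210 * n := by rw [rpow_add hn₀, rpow_one, rpow_mul_natCast hn₀.le]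
    _ ≤ _ := by gcongr

theorem eventually_regime {ε δ : ℝ} (hε : 0 < ε) (hε' : 420 * ε ≤ 1 / 10) (hδ : 0 < δ) :
    ∀ᶠ n : ℝ in atTop, ∀ k p : ℝ, 1 ≤ k → k ≤ log n ^ 10 → n ^ (-ε) ≤ p → p ≤ 1 →
      Regime n p k (log n) (p / (k * log n)) δ := by
  filter_upwards [eventually_ge_atTop 1, eventually_log_pow_le hε, eventually_rpow_le,
    tendsto_log_atTop.eventually_ge_atTop (10 ^ 10),
    (tendsto_log_atTop.const_mul_atTop hδ).eventually_ge_atTop (10 ^ 10),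
    eventually_pow_mul_exp_le (show 0 < δ / 3 by positivity)]
    with n hn hlog hpow hℓ hδℓ hexp k p hk hkℓ hp hp₁
  have hkℓ₀ : 0 < k * log n := mul_pos (by linarith) (by linarith)
  have hkℓε : k * log n ≤ n ^ ε := by
    calc k * log n ≤ log n ^ 10 * log n := by gcongr
      _ = log n ^ 11 := by ring
      _ ≤ n ^ ε := hlog
  have hs := rpow_le_div hn hkℓ₀ hkℓε hp
  exact
    { n_pos := by positivity
      p_le_one := hp₁
      one_le_k := hk
      s_pos := (by positivity : 0 < n ^ (-(2 * ε))).trans_le hs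
      δ_pos := hδ
      s_mul := div_mul_cancel₀ p hkℓ₀.ne'
      large_ℓ := hℓ
      large_δ_mul := hδℓ
      mul_le := hkℓε.trans (rpow_le_rpow_of_exponent_le hn (by linarith))
      rpow_le := hpow
      rpow_le_pow_mul := rpow_le_pow_mul_of_rpow_le hn hε' hs
      tail_le := hexp }

end Parameters

section AbsorbingSets

variable {G : Type} [AddCommGroup G] [Fintype G] [DecidableEq G] {k m : ℕ} {p s δ : ℝ}

theorem Regime.prob_not_adequate_le {ℓ κ : ℝ} (h : Regime (Fintype.card G) p κ ℓ s δ) :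
    prob p (fun W : Finset (G ⊕ G) => ¬ Adequate W ⌊p ^ 14 * Fintype.card G / 8000⌋₊
      ⌊(p * s ^ 14) ^ 14 * Fintype.card G / 8000⌋₊
      (6 * Fintype.card G * (p * s ^ 14) / δ)) ≤ δ := by
  have := h.n_pos
  have := h.δ_pos
  have := h.p_pos
  have := h.s_pos
  have hsupply := h.failure_le (h.pow_mul_le.trans h.mul_pow_le) (Nat.floor_le (by positivity))
  have hreserve := h.failure_le h.pow_mul_le (Nat.floor_le (by positivity))
  have hsize : 2 * Fintype.card G * (p * s ^ 14) / (6 * Fintype.card G * (p * s ^ 14) / δ) =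
      δ / 3 := by
    field_simp
    norm_num
  refine (ZeroSumAbsorption.prob_not_adequate_le h.p_pos.le h.p_le_one (t := s ^ 14)
    (by positivity) (pow_le_one₀ h.s_pos.le h.s_le_one) (by positivity) _ _).trans
    ((add_le_add hsupply (add_le_add hsize.le hreserve)).trans_eq ?_)
  ring

theorem Regime.exists_isAbsorber
    (h : Regime (Fintype.card G) p k (Real.log (Fintype.card G)) s δ) (hk : 3 ≤ k)
    (hm : m ≤ s ^ 300 * Fintype.card G) {W : Finset (G ⊕ G)}
    (hW : Adequate W ⌊p ^ 14 * Fintype.card G / 8000⌋₊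
      ⌊(p * s ^ 14) ^ 14 * Fintype.card G / 8000⌋₊ (6 * Fintype.card G * (p * s ^ 14) / δ))
    {U : Finset G} (hU : #U ≤ (Fintype.card G : ℝ) ^ (4 / 5 : ℝ)) :
    ∃ V C : Finset G, V ⊆ W.toLeft \ U ∧ C ⊆ W.toRight \ U ∧ IsAbsorber k m V C := by
  have hf : 0 ≤ 6 * Fintype.card G * (p * s ^ 14) / δ := by
    have := h.δ_pos
    have := h.p_pos
    have := h.s_pos
    positivity
  have hr : Fintype.card G ≤ 2 ^ (Nat.log 2 (Fintype.card G) + 1) :=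
    (Nat.lt_pow_succ_log_self one_lt_two _).le
  refine hW.exists_isAbsorber U hk hr (Nat.le_floor ?_) (Nat.le_floor ?_)
  · have := h.supply_le hm hU (natLog_add_two_le h.large_ℓ) (Nat.cast_nonneg _) (Nat.floor_le hf)
    exact_mod_cast this
  · exact_mod_cast h.reserve_le hm hU

theorem Regime.one_sub_le_prob_exists_isAbsorber
    (h : Regime (Fintype.card G) p k (Real.log (Fintype.card G)) s δ) (hk : 3 ≤ k)
    (hm : m ≤ s ^ 300 * Fintype.card G) :
    1 - δ ≤ prob p fun W : Finset (G ⊕ G) =>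
      ∀ U : Finset G, #U ≤ (Fintype.card G : ℝ) ^ (4 / 5 : ℝ) →
        ∃ V C : Finset G, V ⊆ W.toLeft \ U ∧ C ⊆ W.toRight \ U ∧ IsAbsorber k m V C := by
  have hadequate := prob_add_prob_not p fun W : Finset (G ⊕ G) =>
    Adequate W ⌊p ^ 14 * Fintype.card G / 8000⌋₊ ⌊(p * s ^ 14) ^ 14 * Fintype.card G / 8000⌋₊
      (6 * Fintype.card G * (p * s ^ 14) / δ)
  refine (sub_le_iff_le_add.2 ?_).trans (prob_mono h.p_pos.le h.p_le_one fun W hW U hU =>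
    h.exists_isAbsorber hk hm hW hU)
  linarith [h.prob_not_adequate_le]

end AbsorbingSets

end ZeroSumAbsorption

theorem zero_sum_absorption_general :
    ∃ ε K : ℝ, 0 < ε ∧ 1 ≤ K ∧ ε * K ≤ 1 / 10 ^ 10 ∧
    ∀ δ : ℝ, 0 < δ → ∃ N : ℕ,
      ∀ (G : Type) [AddCommGroup G] [Fintype G] [DecidableEq G], ∀ (k m : ℕ) (p : ℝ),
      N ≤ Fintype.card G →
      3 ≤ k → (k : ℝ) ≤ (Real.log (Fintype.card G)) ^ 10 →
      (Fintype.card G : ℝ) ^ (-ε) ≤ p → p ≤ 1 →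
      (m : ℝ) ≤ (p / (k * Real.log (Fintype.card G))) ^ K * Fintype.card G →
      1 - δ ≤ ∑ R₁ : Finset G, ∑ R₂ : Finset G,
        (if (∀ U : Finset G,
              ((U.card : ℝ) ≤ (Fintype.card G : ℝ) ^ ((4 : ℝ) / 5)) →
              ∃ V C : Finset G, V ⊆ R₁ \ U ∧ C ⊆ R₂ \ U ∧
                ∀ V' C' : Finset G, Disjoint V' V → Disjoint C' C →
                  V'.card = m → C'.card = m →
                  (∑ c ∈ C', c) = 0 → (0 : G) ∉ C' →
                  IsRainbowCycleFactor k (V ∪ V') (C ∪ C'))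
        then setProb G p R₁ * setProb G p R₂ else 0) := by
  refine ⟨1 / 10 ^ 10 / 300, 300, by norm_num, by norm_num, by norm_num, fun δ hδ => ?_⟩
  obtain ⟨N, hN⟩ := Filter.eventually_atTop.1 (tendsto_natCast_atTop_atTop.eventually
    (ZeroSumAbsorption.eventually_regime (ε := 1 / 10 ^ 10 / 300) (by norm_num) (by norm_num) hδ))
  refine ⟨N, fun G _ _ _ k m p hG hk hkℓ hp hp₁ hm => ?_⟩
  rw [ZeroSumAbsorption.sum_sum_setProb]
  have hk₁ : (1 : ℝ) ≤ k := mod_cast (by lia : 1 ≤ k)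
  exact (hN _ hG k p hk₁ hkℓ hp hp₁).one_sub_le_prob_exists_isAbsorber hk (mod_cast hm)

/-- Zero-sum absorption lemma. -/
theorem zero_sum_absorption :
    ∃ ε K : ℝ, 0 < ε ∧ 1 ≤ K ∧ ε * K ≤ 1 / 10 ^ 10 ∧
    ∀ δ : ℝ, 0 < δ → ∃ N : ℕ,
      ∀ (G : Type) [AddCommGroup G] [Fintype G] [DecidableEq G], ∀ (k m : ℕ) (p : ℝ),
      N ≤ Fintype.card G →
      3 ≤ k → (k : ℝ) ≤ (Real.log (Fintype.card G)) ^ 10 →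
      (Fintype.card G : ℝ) ^ (-ε) ≤ p → p ≤ 1 →
      0 < m → k ∣ m →
      (m : ℝ) ≤ (p / (k * Real.log (Fintype.card G))) ^ K * Fintype.card G →
      1 - δ ≤ ∑ R₁ : Finset G, ∑ R₂ : Finset G,
        (if (∀ U : Finset G,
              ((U.card : ℝ) ≤ (Fintype.card G : ℝ) ^ ((4 : ℝ) / 5)) →
              ∃ V C : Finset G, V ⊆ R₁ \ U ∧ C ⊆ R₂ \ U ∧
                ∀ V' C' : Finset G, Disjoint V' V → Disjoint C' C →
                  V'.card = m → C'.card = m →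
                  (∑ c ∈ C', c) = 0 → (0 : G) ∉ C' →
                  IsRainbowCycleFactor k (V ∪ V') (C ∪ C'))
        then setProb G p R₁ * setProb G p R₂ else 0) := by
  obtain ⟨ε, K, hε, hK, hεK, h⟩ := zero_sum_absorption_general
  exact ⟨ε, K, hε, hK, hεK, fun δ hδ => (h δ hδ).imp
    fun _ hN G _ _ _ k m p hG hk hkℓ hp hp₁ _ _ => hN G k m p hG hk hkℓ hp hp₁⟩
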